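/- Let K and L be convex bodies in ℝ³, both centrally symmetric about the origin O, with L contained in the interior of K and L strictly convex. Suppose that for every point z on the boundary of K the graze Σ(L,z) is contained in a plane Δ_z, and that K is almost free with respect to L. Then for every x ∈ bd K, the graze Σ(L,x) is an ellipse, i.e., the image of a Euclidean circle under an injective affine map from ℝ² into ℝ³. -/

import Mathlib

open Metric Set

noncomputable section

/-- The ambient space ℝ³. -/
abbrev E3 := EuclideanSpace ℝ (Fin 3)

/-- The cone generated by `L` with apex `x`:
`C(L,x) = {x + λ (y - x) : y ∈ L, λ ≥ 0}`. -/
def coneGen (L : Set E3) (x : E3) : Set E3 :=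
  {p | ∃ y ∈ L, ∃ l : ℝ, 0 ≤ l ∧ p = x + l • (y - x)}

/-- The support cone `S(L,x)` of `L` from `x`, the boundary of `C(L,x)`. -/
def suppCone (L : Set E3) (x : E3) : Set E3 := frontier (coneGen L x)

/-- The graze `Σ(L,x) = S(L,x) ∩ bd L`. -/
def graze (L : Set E3) (x : E3) : Set E3 := suppCone L x ∩ frontier L

/-- An affine subspace of `ℝ³` is a plane if its direction is 2-dimensional. -/
def IsPlane (P : AffineSubspace ℝ E3) : Prop :=
  Module.finrank ℝ P.direction = 2

/-- The line through two points. -/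
def lineThrough (a b : E3) : Set E3 := ↑(affineSpan ℝ ({a, b} : Set E3))

/-- `K` is almost free with respect to `L` (given the planes `Δ z` containing the
grazes `Σ(L,z)` for `z ∈ bd K`): for every `z ∈ bd K` and every
`w ∈ Π_z ∩ bd K`, where `Π_z` is the plane through the origin parallel to `Δ z`,
the line through `z` and `w` does not meet `L`. -/
def AlmostFree (K L : Set E3) (Δ : E3 → AffineSubspace ℝ E3) : Prop :=
  ∀ z ∈ frontier K, ∀ w ∈ (↑(Δ z).direction : Set E3) ∩ frontier K,
    Disjoint (lineThrough z w) L

/-!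
Let `x ∈ bd K` be the contact point of a ball inside `K`, and write the plane of the graze from
`y ∈ bd K` as `⟪m y, p - x⟫ = 1`. If the line through two boundary points `y` and `z` misses `L`,
then the two supporting planes of `L` through this line touch `L` at points common to both grazes,
and `m y - m z` is orthogonal to the lines joining `x` to these points; almost freeness makes
`m y ≠ m z`. Now blow up at `x`: if `y` and `z` approach `x` in different tangent directions, then
the rescaled limit of `m y - m z` is orthogonal to the two lines from `x` to the contact points of
the supporting planes through `x` that contain the difference of these directions. For directions
in a planar grid these conditions force the limits to be linear in the direction, because second
differences lie in the intersection of two different lines. Refining the grid gives an injective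
linear map `Φ` from normal directions `u` to `ℝ³` such that `Φ u` is orthogonal to the line from `x`
to the point at which `L` is touched by the supporting plane with direction `u`.

In terms of the planar shadow of `L` from `x`, with `r u` its boundary point with normal `u`, the
existence of `Φ` says that `A (r u) + c` is parallel to `u` for an invertible linear map `A`. Hence
`r u = o - l u • C u` with `C` linear. The support inequality `⟪u, r u⟫ ≤ ⟪u, r v⟫` makes `l`
differentiable and `C` symmetric, and `l u ^ 2 * ⟪u, C u⟫` constant, so that the shadow is an
ellipse. The graze from `x` is a plane section of the cone over it, hence an ellipse as well.
Contact points of inner balls are dense in `bd K`, and limits of these grazes are ellipses again.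
-/

open Filter Topology InnerProductSpace

section Support

variable {E : Type*} [NormedAddCommGroup E] [InnerProductSpace ℝ E] {s L : Set E}
  {x a b p q κ β : E}

lemma inner_pos_of_mem_interior (ha : a ≠ 0) (hs : ∀ q ∈ s, 0 ≤ ⟪a, q - x⟫_ℝ)
    (hp : p ∈ interior s) : 0 < ⟪a, p - x⟫_ℝ := by
  have hmaps : MapsTo (fun q => ⟪a, q - x⟫_ℝ) s (Ici 0) := hs
  have hopen : IsOpenMap fun q => ⟪a, q - x⟫_ℝ := by
    have hne : innerSL ℝ a ≠ 0 := fun h => ha (innerSL_inj.1 (h.trans (map_zero (innerSL ℝ)).symm))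
    exact (ContinuousLinearMap.isOpenMap_of_ne_zero _ hne).comp (Homeomorph.subRight x).isOpenMap
  have himage := (hopen.mapsTo_interior hmaps) hp
  rwa [interior_Ici] at himage

lemma exists_inner_sub_nonneg_of_notMem_interior [CompleteSpace E] (hs : Convex ℝ s)
    (hne : (interior s).Nonempty) (hp : p ∉ interior s) :
    ∃ a : E, a ≠ 0 ∧ ∀ q ∈ s, 0 ≤ ⟪a, q - p⟫_ℝ := by
  obtain ⟨f, hf0, hf⟩ := geometric_hahn_banach_of_nonempty_interior_point hs hp hne
  refine ⟨(InnerProductSpace.toDual ℝ E).symm (-f), by simpa using hf0, fun q hq => ?_⟩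
  simpa using hf q hq

/-- The plane through the apex `x` with normal `a` supports `L` at `p`: it passes through `p ∈ L`
and leaves `L` on its nonnegative side. -/
structure SupportsAt (L : Set E) (x a p : E) : Prop where
  mem : p ∈ L
  inner_eq_zero : ⟪a, p - x⟫_ℝ = 0
  inner_nonneg : ∀ q ∈ L, 0 ≤ ⟪a, q - x⟫_ℝ

/-- The points of `L` lying on a supporting plane of `L` that passes through `x`. For a convex body
this is the graze `Σ(L,x)`, in a form that does not mention the cone. -/
def contactSet (L : Set E) (x : E) : Set E := {p | ∃ a ≠ 0, SupportsAt L x a p}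

/-- The vector `κ` is positive on `L - x`, so that the plane through `x` with normal `κ` misses `L`;
such a `κ` is used to parametrize the supporting planes through `x`. -/
def StrictlySeparates (L : Set E) (x κ : E) : Prop := ∀ q ∈ L, 0 < ⟪κ, q - x⟫_ℝ

lemma exists_strictlySeparates_of_subset_interior [CompleteSpace E] {K : Set E}
    (hK : Convex ℝ K) (hne : (interior K).Nonempty) (hLK : L ⊆ interior K) (hx : x ∉ interior K) :
    ∃ κ, StrictlySeparates L x κ :=
  let ⟨κ, hκ, h⟩ := exists_inner_sub_nonneg_of_notMem_interior hK hne hx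
  ⟨κ, fun _ hq => inner_pos_of_mem_interior hκ h (hLK hq)⟩

lemma StrictlySeparates.ne_zero (hκ : StrictlySeparates L x κ) (hL : L.Nonempty) : κ ≠ 0 := by
  rintro rfl
  obtain ⟨q, hq⟩ := hL
  simpa using hκ q hq

lemma SupportsAt.mem_contactSet (h : SupportsAt L x a p) (ha : a ≠ 0) : p ∈ contactSet L x :=
  ⟨a, ha, h⟩

lemma contactSet_subset : contactSet L x ⊆ L := fun _ ⟨_, _, h⟩ => h.mem

lemma SupportsAt.notMem_interior (h : SupportsAt L x a p) (ha : a ≠ 0) : p ∉ interior L :=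
  fun hp => (inner_pos_of_mem_interior ha h.inner_nonneg hp).ne' h.inner_eq_zero

lemma notMem_interior_of_mem_contactSet (hp : p ∈ contactSet L x) : p ∉ interior L :=
  let ⟨_, ha, h⟩ := hp
  h.notMem_interior ha

lemma SupportsAt.smul {c : ℝ} (h : SupportsAt L x a p) (hc : 0 ≤ c) :
    SupportsAt L x (c • a) p where
  mem := h.mem
  inner_eq_zero := by rw [real_inner_smul_left, h.inner_eq_zero, mul_zero]
  inner_nonneg q hq := by
    rw [real_inner_smul_left]
    exact mul_nonneg hc (h.inner_nonneg q hq)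

lemma SupportsAt.exists_norm_eq_one (h : SupportsAt L x a p) (ha : a ≠ 0) :
    ∃ a' : E, ‖a'‖ = 1 ∧ SupportsAt L x a' p :=
  ⟨‖a‖⁻¹ • a, by simpa using norm_smul_inv_norm (𝕜 := ℝ) ha, h.smul (by positivity)⟩

lemma SupportsAt.eq (h : SupportsAt L x a p) (h' : SupportsAt L x a q) (hL : StrictConvex ℝ L)
    (ha : a ≠ 0) : p = q := by
  by_contra hpq
  have hmid := hL h.mem h'.mem hpq (a := 1 / 2) (b := 1 / 2) (by norm_num) (by norm_num)
    (by norm_num)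
  have hpos := inner_pos_of_mem_interior ha h.inner_nonneg hmid
  have hsplit : (1 / 2 : ℝ) • p + (1 / 2 : ℝ) • q - x
      = (1 / 2 : ℝ) • (p - x) + (1 / 2 : ℝ) • (q - x) := by module
  rw [hsplit, inner_add_right, inner_smul_right, inner_smul_right, h.inner_eq_zero,
    h'.inner_eq_zero] at hpos
  norm_num at hpos

lemma SupportsAt.of_tendsto {ι : Type*} {l : Filter ι} [l.NeBot] {xs as ps : ι → E}
    (hL : IsClosed L) (hx : Tendsto xs l (𝓝 x)) (ha : Tendsto as l (𝓝 a))
    (hp : Tendsto ps l (𝓝 p)) (h : ∀ᶠ i in l, SupportsAt L (xs i) (as i) (ps i)) :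
    SupportsAt L x a p where
  mem := hL.mem_of_tendsto hp (h.mono fun _ hi => hi.mem)
  inner_eq_zero := by
    have hzero : (fun i => ⟪as i, ps i - xs i⟫_ℝ) =ᶠ[l] fun _ => 0 :=
      h.mono fun _ hi => hi.inner_eq_zero
    exact tendsto_nhds_unique (ha.inner (hp.sub hx)) (tendsto_const_nhds.congr' hzero.symm)
  inner_nonneg q hq :=
    ge_of_tendsto (ha.inner (tendsto_const_nhds.sub hx)) (h.mono fun _ hi => hi.inner_nonneg q hq)

lemma linearIndependent_sub_of_strictConvex (hL : StrictConvex ℝ L) {p q r : E}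
    (hp : p ∈ L \ interior L) (hq : q ∈ L \ interior L) (hr : r ∈ L \ interior L) (hpq : p ≠ q)
    (hpr : p ≠ r) (hqr : q ≠ r) : LinearIndependent ℝ ![q - p, r - p] := by
  have key : ∀ {u v w : E}, u ∈ L → w ∈ L → v ∉ interior L → u ≠ v → v ≠ w → u ≠ w →
      ¬ Wbtw ℝ u v w := fun hu hw hv huv hvw huw h =>
    hv (hL.openSegment_subset hu hw huw
      (mem_openSegment_of_ne_left_right huv hvw.symm h.mem_segment))
  have hcol : ¬ Collinear ℝ {p, q, r} := fun h => by
    rcases h.wbtw_or_wbtw_or_wbtw with h | h | h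
    · exact key hp.1 hr.1 hq.2 hpq hqr hpr h
    · exact key hq.1 hp.1 hr.2 hqr hpr.symm hpq.symm h
    · exact key hr.1 hq.1 hp.2 hpr.symm hpq hqr.symm h
  rw [LinearIndependent.pair_iff' (sub_ne_zero.2 hpq.symm)]
  intro t ht
  refine hcol (collinear_iff_of_mem (p₀ := p) (by simp) |>.2 ⟨q - p, ?_⟩)
  simp only [mem_insert_iff, mem_singleton_iff, forall_eq_or_imp, forall_eq, vadd_eq_add]
  exact ⟨⟨0, by simp⟩, ⟨1, by simp⟩, t, by rw [ht]; simp⟩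

end Support

section Graze

variable {L : Set E3} {x p : E3}

open scoped Pointwise in
lemma convex_coneGen (hL : Convex ℝ L) (x : E3) : Convex ℝ (coneGen L x) := by
  rintro _ ⟨y, hy, l, hl, rfl⟩ _ ⟨z, hz, m, hm, rfl⟩ s t hs ht hst
  have hsum : (s * l) • y + (t * m) • z ∈ (s * l + t * m) • L := by
    rw [hL.add_smul (by positivity) (by positivity)]
    exact Set.add_mem_add (smul_mem_smul_set hy) (smul_mem_smul_set hz)
  obtain ⟨w, hw, hw'⟩ := hsum
  refine ⟨w, hw, s * l + t * m, by positivity, ?_⟩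
  calc s • (x + l • (y - x)) + t • (x + m • (z - x))
      = (s + t) • x + ((s * l) • y + (t * m) • z) - (s * l + t * m) • x := by module
    _ = x + (s * l + t * m) • (w - x) := by rw [hst, ← hw']; module

lemma subset_coneGen : L ⊆ coneGen L x := fun y hy => ⟨y, hy, 1, zero_le_one, by simp⟩

/-- A half-space containing the cone must contain its apex and all its rays, so its bounding plane
passes through the apex. -/
lemma supportsAt_of_coneGen {a : E3} (hp : p ∈ L) (h : ∀ q ∈ coneGen L x, 0 ≤ ⟪a, q - p⟫_ℝ) :
    SupportsAt L x a p := by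
  have hx : 0 ≤ ⟪a, x - p⟫_ℝ := h x ⟨p, hp, 0, le_rfl, by simp⟩
  have hnonneg : ∀ q ∈ L, 0 ≤ ⟪a, q - x⟫_ℝ := by
    intro q hq
    by_contra! hneg
    have hray := h _ ⟨q, hq, (⟪a, x - p⟫_ℝ + 1) / -⟪a, q - x⟫_ℝ,
      div_nonneg (by linarith) (by linarith), rfl⟩
    rw [add_sub_right_comm, inner_add_right, inner_smul_right, div_neg, neg_mul,
      div_mul_cancel₀ _ hneg.ne] at hray
    linarith
  refine ⟨hp, le_antisymm ?_ (hnonneg p hp), hnonneg⟩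
  rw [← neg_sub x p, inner_neg_right]
  linarith

theorem graze_eq_contactSet (hLcomp : IsCompact L) (hLconv : Convex ℝ L)
    (hLint : (interior L).Nonempty) (x : E3) : graze L x = contactSet L x := by
  ext p
  constructor
  · rintro ⟨⟨-, hpcone⟩, hpL⟩
    obtain ⟨a, ha, hcone⟩ := exists_inner_sub_nonneg_of_notMem_interior (convex_coneGen hLconv x)
      (hLint.mono (interior_mono subset_coneGen)) hpcone
    exact ⟨a, ha, supportsAt_of_coneGen (hLcomp.isClosed.frontier_subset hpL) hcone⟩
  · rintro ⟨a, ha, hsupp⟩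
    have hcone : SupportsAt (coneGen L x) x a p := by
      refine ⟨subset_coneGen hsupp.mem, hsupp.inner_eq_zero, ?_⟩
      rintro _ ⟨y, hy, l, hl, rfl⟩
      rw [add_sub_cancel_left, inner_smul_right]
      exact mul_nonneg hl (hsupp.inner_nonneg y hy)
    exact ⟨⟨subset_closure hcone.mem, hcone.notMem_interior ha⟩,
      ⟨subset_closure hsupp.mem, hsupp.notMem_interior ha⟩⟩

end Graze

/-- The standing hypotheses on the inner body: a strictly convex compact set with nonempty
interior. -/
structure IsStrictBody {E : Type*} [NormedAddCommGroup E] [InnerProductSpace ℝ E] (L : Set E) :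
    Prop where
  isCompact : IsCompact L
  strictConvex : StrictConvex ℝ L
  nonempty_interior : (interior L).Nonempty

section ContactPoint

variable {E : Type*} [NormedAddCommGroup E] [InnerProductSpace ℝ E] {L : Set E}
  {x a p q κ β v n : E} {m m' : ℝ}

lemma IsStrictBody.nonempty (hL : IsStrictBody L) : L.Nonempty :=
  hL.nonempty_interior.mono interior_subset

lemma SupportsAt.eq_div (hκ : StrictlySeparates L x κ) (h : SupportsAt L x (β - m • κ) p) :
    m = ⟪β, p - x⟫_ℝ / ⟪κ, p - x⟫_ℝ := by
  have h0 := h.inner_eq_zero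
  rw [inner_sub_left, real_inner_smul_left, sub_eq_zero] at h0
  rw [h0, mul_div_cancel_right₀ _ (hκ p h.mem).ne']

lemma SupportsAt.smul_coeff_eq (hκ : StrictlySeparates L x κ)
    (h : SupportsAt L x (β - m • κ) p) (h' : SupportsAt L x (β - m' • κ) q) : m = m' := by
  wlog hlt : m < m' generalizing m m' p q
  · rcases (not_lt.1 hlt).eq_or_lt with heq | hgt
    · exact heq.symm
    · exact (this h' h hgt).symm
  have hnonneg := h'.inner_nonneg p h.mem
  have hzero := h.inner_eq_zero
  rw [inner_sub_left, real_inner_smul_left] at hnonneg hzero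
  nlinarith [hκ p h.mem]

lemma IsStrictBody.exists_supportsAt_sub_smul (hL : IsStrictBody L) (hκ : StrictlySeparates L x κ)
    (β : E) : ∃ p, ∃ m : ℝ, SupportsAt L x (β - m • κ) p := by
  obtain ⟨p, hp, hmin⟩ := hL.isCompact.exists_isMinOn hL.nonempty
    (f := fun q => ⟪β, q - x⟫_ℝ / ⟪κ, q - x⟫_ℝ)
    (ContinuousOn.div (by fun_prop) (by fun_prop) fun q hq => (hκ q hq).ne')
  refine ⟨p, ⟪β, p - x⟫_ℝ / ⟪κ, p - x⟫_ℝ, hp, ?_, fun q hq => ?_⟩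
  · rw [inner_sub_left, real_inner_smul_left, div_mul_cancel₀ _ (hκ p hp).ne', sub_self]
  · have hle : ⟪β, p - x⟫_ℝ / ⟪κ, p - x⟫_ℝ ≤ ⟪β, q - x⟫_ℝ / ⟪κ, q - x⟫_ℝ := hmin hq
    rw [inner_sub_left, real_inner_smul_left, sub_nonneg]
    exact (le_div_iff₀ (hκ q hq)).1 hle

open Classical in
/-- The point at which `L` is supported by the plane through `x` whose normal lies in `β + ℝ κ`. It
exists when `κ` is positive on `L - x`, and is unique when moreover `β ∉ ℝ κ`; the value is `0` if
there is no such point. -/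
def contactPoint (L : Set E) (x κ β : E) : E :=
  if h : ∃ p, ∃ m : ℝ, SupportsAt L x (β - m • κ) p then h.choose else 0

lemma sub_smul_ne_zero (hβ : β ∉ ℝ ∙ κ) (m : ℝ) : β - m • κ ≠ 0 :=
  sub_ne_zero.2 fun h => hβ (Submodule.mem_span_singleton.2 ⟨m, h.symm⟩)

lemma IsStrictBody.supportsAt_contactPoint (hL : IsStrictBody L) (hκ : StrictlySeparates L x κ)
    (β : E) : ∃ m : ℝ, SupportsAt L x (β - m • κ) (contactPoint L x κ β) := by
  have h := hL.exists_supportsAt_sub_smul hκ β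
  rw [contactPoint, dif_pos h]
  exact h.choose_spec

lemma SupportsAt.eq_contactPoint (h : SupportsAt L x (β - m • κ) p) (hL : IsStrictBody L)
    (hκ : StrictlySeparates L x κ) (hβ : β ∉ ℝ ∙ κ) : p = contactPoint L x κ β := by
  obtain ⟨m', h'⟩ := hL.supportsAt_contactPoint hκ β
  rw [← h.smul_coeff_eq hκ h'] at h'
  exact h.eq h' hL.strictConvex (sub_smul_ne_zero hβ m)

lemma IsStrictBody.contactPoint_mem (hL : IsStrictBody L) (hκ : StrictlySeparates L x κ)
    (hβ : β ∉ ℝ ∙ κ) : contactPoint L x κ β ∈ contactSet L x :=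
  let ⟨m, h⟩ := hL.supportsAt_contactPoint hκ β
  ⟨_, sub_smul_ne_zero hβ m, h⟩

lemma IsStrictBody.contactPoint_smul (hL : IsStrictBody L) (hκ : StrictlySeparates L x κ)
    (hβ : β ∉ ℝ ∙ κ) {s : ℝ} (hs : 0 < s) :
    contactPoint L x κ (s • β) = contactPoint L x κ β := by
  obtain ⟨m, h⟩ := hL.supportsAt_contactPoint hκ (s • β)
  refine SupportsAt.eq_contactPoint (m := s⁻¹ * m) ?_ hL hκ hβ
  have hnormal : β - (s⁻¹ * m) • κ = s⁻¹ • (s • β - m • κ) := by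
    rw [smul_sub, smul_smul, smul_smul, inv_mul_cancel₀ hs.ne', one_smul]
  rw [hnormal]
  exact h.smul (inv_nonneg.2 hs.le)

lemma IsStrictBody.contactPoint_ne_contactPoint_neg (hL : IsStrictBody L)
    (hκ : StrictlySeparates L x κ) (hβ : β ∉ ℝ ∙ κ) :
    contactPoint L x κ β ≠ contactPoint L x κ (-β) := by
  intro heq
  obtain ⟨m, h⟩ := hL.supportsAt_contactPoint hκ β
  obtain ⟨m', h'⟩ := hL.supportsAt_contactPoint hκ (-β)
  rw [← heq] at h'
  have hm' : m' = -m := by rw [h'.eq_div hκ, h.eq_div hκ, inner_neg_left, neg_div]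
  obtain ⟨c, hc⟩ := hL.nonempty_interior
  have hpos := inner_pos_of_mem_interior (sub_smul_ne_zero hβ m) h.inner_nonneg hc
  have hneg := h'.inner_nonneg c (interior_subset hc)
  rw [hm', show -β - -m • κ = -(β - m • κ) by module, inner_neg_left] at hneg
  linarith

lemma StrictlySeparates.eventually_of_tendsto (hL : IsCompact L) (hκ : StrictlySeparates L x κ)
    {ι : Type*} {l : Filter ι} {xs κs : ι → E} (hx : Tendsto xs l (𝓝 x))
    (hκs : Tendsto κs l (𝓝 κ)) : ∀ᶠ i in l, StrictlySeparates L (xs i) (κs i) := by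
  refine (hx.prodMk_nhds hκs).eventually (p := fun z => StrictlySeparates L z.1 z.2)
    (hL.eventually_forall_of_forall_eventually fun q hq => ?_)
  have hcont : Continuous fun z : (E × E) × E => ⟪z.1.2, z.2 - z.1.1⟫_ℝ := by fun_prop
  exact hcont.continuousAt.eventually (lt_mem_nhds (hκ q hq))

lemma IsStrictBody.tendsto_contactPoint (hL : IsStrictBody L) (hκ : StrictlySeparates L x κ)
    (hβ : β ∉ ℝ ∙ κ) {ι : Type*} {l : Filter ι} {xs κs βs : ι → E} (hx : Tendsto xs l (𝓝 x))
    (hκs : Tendsto κs l (𝓝 κ)) (hβs : Tendsto βs l (𝓝 β)) :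
    Tendsto (fun i => contactPoint L (xs i) (κs i) (βs i)) l (𝓝 (contactPoint L x κ β)) := by
  set ps := fun i => contactPoint L (xs i) (κs i) (βs i)
  have hsupp : ∀ᶠ i in l, SupportsAt L (xs i)
      (βs i - (⟪βs i, ps i - xs i⟫_ℝ / ⟪κs i, ps i - xs i⟫_ℝ) • κs i) (ps i) :=
    (hκ.eventually_of_tendsto hL.isCompact hx hκs).mono fun i hi => by
      obtain ⟨m, h⟩ := hL.supportsAt_contactPoint hi (βs i)
      rwa [← h.eq_div hi]
  refine tendsto_iff_ultrafilter _ _ _ |>.2 fun g hg => ?_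
  obtain ⟨p, hp, hlim : Tendsto ps g (𝓝 p)⟩ := hL.isCompact.ultrafilter_le_nhds (g.map ps)
    (le_principal_iff.2 ((hsupp.filter_mono hg).mono fun i hi => hi.mem))
  have hx' := hx.mono_left hg
  have hβ' := hβs.mono_left hg
  have hκ' := hκs.mono_left hg
  have hchord := hlim.sub hx'
  have hratio := (hβ'.inner hchord).div (hκ'.inner hchord) (hκ p hp).ne'
  have hsupp_lim := SupportsAt.of_tendsto hL.isCompact.isClosed hx'
    (hβ'.sub (hratio.smul hκ')) hlim (hsupp.filter_mono hg)
  rwa [hsupp_lim.eq_contactPoint hL hκ hβ] at hlim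

lemma IsStrictBody.eq_zero_of_inner_contactSet_eq_zero (hL : IsStrictBody L)
    (hκ : StrictlySeparates L x κ) (hne : (contactSet L x).Nonempty)
    (h : ∀ p ∈ contactSet L x, ⟪v, p - x⟫_ℝ = 0) : v = 0 := by
  have hsupp : ∀ w : E, (∀ p ∈ contactSet L x, ⟪w, p - x⟫_ℝ = 0) → ∀ q ∈ L, 0 ≤ ⟪w, q - x⟫_ℝ := by
    intro w hw
    obtain ⟨p, m, hp⟩ := hL.exists_supportsAt_sub_smul hκ w
    suffices hm : m = 0 by simpa [hm] using hp.inner_nonneg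
    by_cases hw0 : w - m • κ = 0
    · obtain ⟨q, hq⟩ := hne
      have hwq := hw q hq
      rw [sub_eq_zero.1 hw0, real_inner_smul_left] at hwq
      exact (mul_eq_zero.1 hwq).resolve_right (hκ q (contactSet_subset hq)).ne'
    · rw [hp.eq_div hκ, hw p (hp.mem_contactSet hw0), zero_div]
  by_contra hv
  obtain ⟨c, hc⟩ := hL.nonempty_interior
  have hpos := inner_pos_of_mem_interior hv (hsupp v h) hc
  have hneg := hsupp (-v) (fun p hp => by rw [inner_neg_left, h p hp, neg_zero]) c
    (interior_subset hc)
  rw [inner_neg_left] at hneg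
  linarith

lemma IsStrictBody.strictlySeparates_of_inner_eq_one (hL : IsStrictBody L)
    (hκ : StrictlySeparates L x κ) (hne : (contactSet L x).Nonempty)
    (hn : ∀ p ∈ contactSet L x, ⟪n, p - x⟫_ℝ = 1) : StrictlySeparates L x n := by
  obtain ⟨p, m, hp⟩ := hL.exists_supportsAt_sub_smul hκ n
  have hm : 0 < m := by
    by_cases h0 : n - m • κ = 0
    · obtain ⟨q, hq⟩ := hne
      have hnq := hn q hq
      rw [sub_eq_zero.1 h0, real_inner_smul_left] at hnq
      exact pos_of_mul_pos_left (hnq ▸ one_pos) (hκ q (contactSet_subset hq)).le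
    · rw [hp.eq_div hκ, hn p (hp.mem_contactSet h0)]
      exact one_div_pos.2 (hκ p hp.mem)
  intro q hq
  have hnonneg := hp.inner_nonneg q hq
  rw [inner_sub_left, real_inner_smul_left] at hnonneg
  linarith [mul_pos hm (hκ q hq)]

/-- A functional separating the projected point from `L`, corrected by a multiple of `n`, vanishes
at `q` while its supporting plane through `x` touches `L` where the functional is large. -/
lemma IsStrictBody.add_inv_inner_smul_mem [CompleteSpace E] (hL : IsStrictBody L)
    (hn : ∀ p ∈ contactSet L x, ⟪n, p - x⟫_ℝ = 1) (hpos : StrictlySeparates L x n)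
    (hne : (contactSet L x).Nonempty) (hq : q ∈ L) : x + (⟪n, q - x⟫_ℝ)⁻¹ • (q - x) ∈ L := by
  by_contra hnotMem
  obtain ⟨f, u, hlt, hle⟩ := geometric_hahn_banach_point_closed hL.strictConvex.convex
    hL.isCompact.isClosed hnotMem
  obtain ⟨b, rfl⟩ := (InnerProductSpace.toDual ℝ E).surjective f
  simp only [InnerProductSpace.toDual_apply_apply] at hlt hle
  set c := ⟪b, (⟪n, q - x⟫_ℝ)⁻¹ • (q - x)⟫_ℝ with hc
  have hsep : ∀ y ∈ L, c < ⟪b, y - x⟫_ℝ := fun y hy => by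
    rw [inner_add_right] at hlt
    rw [inner_sub_right]
    linarith [hle y hy]
  have hbq : ⟪b, q - x⟫_ℝ = c * ⟪n, q - x⟫_ℝ := by
    rw [hc, inner_smul_right]
    field_simp [(hpos q hq).ne']
  obtain ⟨p, m, hp⟩ := hL.exists_supportsAt_sub_smul hpos (b - c • n)
  have hm : m ≤ 0 := by
    have hnonneg := hp.inner_nonneg q hq
    simp only [inner_sub_left, real_inner_smul_left, hbq] at hnonneg
    exact nonpos_of_mul_nonpos_left (by linarith) (hpos q hq)
  obtain ⟨p', hp', hbp'⟩ : ∃ p' ∈ contactSet L x, ⟪b, p' - x⟫_ℝ = c + m := by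
    by_cases h0 : b - c • n - m • n = 0
    · obtain ⟨p', hp'⟩ := hne
      refine ⟨p', hp', ?_⟩
      have hb : b = (c + m) • n := by rw [add_smul, ← sub_eq_zero, ← h0]; abel
      rw [hb, real_inner_smul_left, hn p' hp', mul_one]
    · have hmem := hp.mem_contactSet h0
      refine ⟨p, hmem, ?_⟩
      have hzero := hp.inner_eq_zero
      simp only [inner_sub_left, real_inner_smul_left, hn p hmem] at hzero
      linarith
  linarith [hsep p' (contactSet_subset hp')]

lemma linearIndependent_contactSet_triple (hL : StrictConvex ℝ L)
    (hn : ∀ p ∈ contactSet L x, ⟪n, p - x⟫_ℝ = 1) {p : Fin 3 → E}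
    (hp : ∀ i, p i ∈ contactSet L x) (hinj : Function.Injective p) :
    LinearIndependent ℝ fun i => p i - x := by
  have hdiff : LinearIndependent ℝ ![p 1 - p 0, p 2 - p 0] :=
    have hbd i : p i ∈ L \ interior L :=
      ⟨contactSet_subset (hp i), notMem_interior_of_mem_contactSet (hp i)⟩
    linearIndependent_sub_of_strictConvex hL (hbd 0) (hbd 1) (hbd 2) (hinj.ne (by decide))
      (hinj.ne (by decide)) (hinj.ne (by decide))
  rw [Fintype.linearIndependent_iff]
  intro c hc
  rw [Fin.sum_univ_three] at hc
  have hsum : c 0 + c 1 + c 2 = 0 := by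
    simpa [inner_add_right, inner_smul_right, hn _ (hp _)] using congrArg (fun y => ⟪n, y⟫_ℝ) hc
  have hrel : c 1 • (p 1 - p 0) + c 2 • (p 2 - p 0) = 0 := by
    rw [← hc, show c 0 = -c 1 - c 2 by linarith]
    module
  obtain ⟨h1, h2⟩ := LinearIndependent.pair_iff.1 hdiff _ _ hrel
  intro i
  fin_cases i
  exacts [by simpa [h1, h2] using hsum, h1, h2]

end ContactPoint

section Dimension

variable {E : Type*} [NormedAddCommGroup E] [InnerProductSpace ℝ E] [FiniteDimensional ℝ E]
  {k : ℕ}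

lemma exists_ne_zero_inner_eq_zero (u : Fin k → E) (hk : k < Module.finrank ℝ E) :
    ∃ v : E, v ≠ 0 ∧ ∀ i, ⟪u i, v⟫_ℝ = 0 := by
  have hker : LinearMap.ker (LinearMap.pi fun i => innerₛₗ ℝ (u i)) ≠ ⊥ :=
    LinearMap.ker_ne_bot_of_finrank_lt (by simpa using hk)
  obtain ⟨v, hv, hv0⟩ := Submodule.exists_mem_ne_zero_of_ne_bot hker
  exact ⟨v, hv0, fun i => congrFun (LinearMap.mem_ker.1 hv) i⟩

lemma exists_eq_smul_of_inner_eq_zero {u : Fin k → E} (hu : LinearIndependent ℝ u)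
    (hk : Module.finrank ℝ E = k + 1) {v w : E} (hv0 : v ≠ 0) (hv : ∀ i, ⟪v, u i⟫_ℝ = 0)
    (hw : ∀ i, ⟪w, u i⟫_ℝ = 0) : ∃ c : ℝ, w = c • v := by
  set S := Submodule.span ℝ (range u)
  have hrank : Module.finrank ℝ Sᗮ = 1 := by
    have hS : Module.finrank ℝ S = k := by simpa using finrank_span_eq_card hu
    have := Submodule.finrank_add_finrank_orthogonal S
    omega
  have hmem : ∀ y : E, (∀ i, ⟪y, u i⟫_ℝ = 0) → y ∈ Sᗮ := fun y hy =>
    Submodule.mem_orthogonal' S y |>.2 fun s hs => by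
      have hle : S ≤ LinearMap.ker (innerₛₗ ℝ y) := Submodule.span_le.2 <| by
        rintro _ ⟨i, rfl⟩
        exact hy i
      exact hle hs
  obtain ⟨c, hc⟩ := (finrank_eq_one_iff_of_nonzero' (⟨v, hmem v hv⟩ : Sᗮ)
    (fun h => hv0 (congrArg Subtype.val h))).1 hrank ⟨w, hmem w hw⟩
  exact ⟨c, (congrArg Subtype.val hc).symm⟩

lemma exists_inner_eq_of_linearIndependent {ι : Type*} {u : ι → E} (hu : LinearIndependent ℝ u)
    (c : ι → ℝ) : ∃ v : E, ∀ i, ⟪u i, v⟫_ℝ = c i := by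
  obtain ⟨f, hf⟩ := ((Module.Basis.span hu).constr ℝ c).exists_extend
  refine ⟨(InnerProductSpace.toDual ℝ E).symm f.toContinuousLinearMap, fun i => ?_⟩
  rw [real_inner_comm, InnerProductSpace.toDual_symm_apply]
  have hi := LinearMap.congr_fun hf (Module.Basis.span hu i)
  rw [Module.Basis.constr_basis] at hi
  simpa [Module.Basis.span_apply] using hi

end Dimension

lemma notMem_span_singleton_of_inner_eq_zero {E : Type*} [NormedAddCommGroup E]
    [InnerProductSpace ℝ E] {κ β : E} (hβ : β ≠ 0) (h : ⟪κ, β⟫_ℝ = 0) : β ∉ ℝ ∙ κ := by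
  rintro hmem
  obtain ⟨c, rfl⟩ := Submodule.mem_span_singleton.1 hmem
  have hself : ⟪c • κ, c • κ⟫_ℝ = 0 := by rw [real_inner_smul_left, h, mul_zero]
  exact hβ (inner_self_eq_zero.1 hself)

section ContactSet

variable {E : Type*} [NormedAddCommGroup E] [InnerProductSpace ℝ E] {L : Set E} {x p κ : E}

lemma IsStrictBody.contactSet_eq_image (hL : IsStrictBody L) (hκ : StrictlySeparates L x κ) :
    contactSet L x = (fun β : (ℝ ∙ κ)ᗮ => contactPoint L x κ β) '' {0}ᶜ := by
  have hspan : ∀ β : (ℝ ∙ κ)ᗮ, β ≠ 0 → (β : E) ∉ ℝ ∙ κ := fun β hβ =>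
    notMem_span_singleton_of_inner_eq_zero (by simpa using hβ)
      (Submodule.mem_orthogonal_singleton_iff_inner_right.1 β.2)
  apply Subset.antisymm
  · rintro p ⟨a, ha, hp⟩
    set β := (ℝ ∙ κ)ᗮ.orthogonalProjectionOnto a
    obtain ⟨m, hm⟩ : ∃ m : ℝ, a = β - m • κ := by
      have hmem : a - β ∈ ((ℝ ∙ κ)ᗮ)ᗮ := Submodule.sub_starProjection_mem_orthogonal a
      rw [Submodule.orthogonal_orthogonal] at hmem
      obtain ⟨m, hm⟩ := Submodule.mem_span_singleton.1 hmem
      exact ⟨-m, by rw [neg_smul, hm]; abel⟩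
    have hβ : β ≠ 0 := by
      intro h0
      have hzero := hp.inner_eq_zero
      rw [hm, h0, Submodule.coe_zero, zero_sub, ← neg_smul, real_inner_smul_left] at hzero
      have hm0 : -m = 0 := (mul_eq_zero.1 hzero).resolve_right (hκ p hp.mem).ne'
      exact ha (by rw [hm, h0, Submodule.coe_zero, zero_sub, ← neg_smul, hm0, zero_smul])
    rw [hm] at hp
    exact ⟨β, hβ, (hp.eq_contactPoint hL hκ (hspan β hβ)).symm⟩
  · rintro _ ⟨β, hβ, rfl⟩
    exact hL.contactPoint_mem hκ (hspan β hβ)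

lemma IsStrictBody.exists_eq_contactPoint (hL : IsStrictBody L) (hκ : StrictlySeparates L x κ)
    (hp : p ∈ contactSet L x) :
    ∃ β : E, β ≠ 0 ∧ ⟪κ, β⟫_ℝ = 0 ∧ p = contactPoint L x κ β := by
  rw [hL.contactSet_eq_image hκ] at hp
  obtain ⟨β, hβ, rfl⟩ := hp
  exact ⟨β, by simpa using hβ, Submodule.mem_orthogonal_singleton_iff_inner_right.1 β.2, rfl⟩

variable [FiniteDimensional ℝ E]

lemma IsStrictBody.contactSet_nontrivial (hL : IsStrictBody L) (hκ : StrictlySeparates L x κ)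
    (hE : 1 < Module.finrank ℝ E) : (contactSet L x).Nontrivial := by
  obtain ⟨β, hβ0, hβ⟩ := exists_ne_zero_inner_eq_zero ![κ] hE
  have hβ : ⟪κ, β⟫_ℝ = 0 := hβ 0
  have hβκ := notMem_span_singleton_of_inner_eq_zero hβ0 hβ
  exact ⟨_, hL.contactPoint_mem hκ hβκ, _, hL.contactPoint_mem hκ (by simpa using hβκ),
    hL.contactPoint_ne_contactPoint_neg hκ hβκ⟩

lemma IsStrictBody.isConnected_contactSet (hL : IsStrictBody L) (hκ : StrictlySeparates L x κ)
    (hE : 2 < Module.finrank ℝ E) : IsConnected (contactSet L x) := by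
  rw [hL.contactSet_eq_image hκ]
  have hrank : 1 < Module.rank ℝ (ℝ ∙ κ)ᗮ := by
    have := Submodule.finrank_add_finrank_orthogonal (ℝ ∙ κ)
    have : Module.finrank ℝ (ℝ ∙ κ) ≤ 1 := by simpa using finrank_span_le_card (R := ℝ) {κ}
    rw [← Module.finrank_eq_rank]
    exact_mod_cast show 1 < Module.finrank ℝ (ℝ ∙ κ)ᗮ by omega
  refine (isConnected_compl_singleton_of_one_lt_rank hrank 0).image _ fun β hβ => ?_
  refine ContinuousAt.continuousWithinAt (hL.tendsto_contactPoint hκ ?_ tendsto_const_nhds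
    tendsto_const_nhds continuous_subtype_val.continuousAt)
  exact notMem_span_singleton_of_inner_eq_zero (by simpa using hβ)
    (Submodule.mem_orthogonal_singleton_iff_inner_right.1 β.2)

end ContactSet

section Frontier

variable {E : Type*} [NormedAddCommGroup E] [NormedSpace ℝ E] {K : Set E}

lemma inter_frontier_nonempty_of_isPreconnected {X : Type*} [TopologicalSpace X] {s t : Set X}
    (hs : IsPreconnected s) (hin : (s ∩ interior t).Nonempty)
    (hout : (s \ interior t).Nonempty) : (s ∩ frontier t).Nonempty := by
  by_contra! hempty
  have hcover : ∀ w ∈ s, w ∉ interior t → w ∈ (closure t)ᶜ := fun w hw hint hcl =>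
    eq_empty_iff_forall_notMem.1 hempty w ⟨hw, hcl, hint⟩
  obtain ⟨w, -, hwint, hwcl⟩ := hs (interior t) (closure t)ᶜ isOpen_interior
    isClosed_closure.isOpen_compl
    (fun w hw => or_iff_not_imp_left.2 fun h => hcover w hw h) hin
    (hout.imp fun w hw => ⟨hw.1, hcover w hw.1 hw.2⟩)
  exact hwcl (interior_subset_closure hwint)

lemma exists_mem_segment_mem_frontier {p q : E} (hp : p ∈ interior K) (hq : q ∉ interior K) :
    ∃ w ∈ segment ℝ p q, w ∈ frontier K :=
  inter_frontier_nonempty_of_isPreconnected (convex_segment p q).isPreconnected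
    ⟨p, left_mem_segment ℝ p q, hp⟩ ⟨q, right_mem_segment ℝ p q, hq⟩

lemma exists_add_smul_mem_frontier (hK : Bornology.IsBounded K) {p v : E} (hp : p ∈ interior K)
    (hv : v ≠ 0) : ∃ t : ℝ, p + t • v ∈ frontier K := by
  obtain ⟨R, hR⟩ := hK.subset_closedBall p
  have hout : p + ((|R| + 1) / ‖v‖) • v ∉ interior K := fun hmem => by
    have hle := hR (interior_subset hmem)
    rw [mem_closedBall, dist_eq_norm, add_sub_cancel_left, norm_smul, norm_div, norm_norm,
      div_mul_cancel₀ _ (norm_ne_zero_iff.2 hv), Real.norm_of_nonneg (by positivity)] at hle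
    linarith [le_abs_self R]
  obtain ⟨w, hw, hwK⟩ := exists_mem_segment_mem_frontier hp hout
  rw [segment_eq_image'] at hw
  obtain ⟨s, -, rfl⟩ := hw
  exact ⟨s * ((|R| + 1) / ‖v‖), by simpa [smul_smul] using hwK⟩

/-- Radial projection from `p`, whose scale factor is the reciprocal of the gauge of `K - p`. -/
lemma exists_tendsto_one_add_smul_mem_frontier (hK : Convex ℝ K) {p w : E} (hp : p ∈ interior K)
    (hw : w ∈ frontier K) : ∃ r : E → ℝ, Tendsto r (𝓝 w) (𝓝 1) ∧
      ∀ᶠ u in 𝓝 w, p + r u • (u - p) ∈ frontier K := by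
  set e := Homeomorph.addLeft p
  have hC : Convex ℝ (e ⁻¹' K) := hK.translate_preimage_right p
  have h0 : e ⁻¹' K ∈ 𝓝 0 := e.continuous.continuousAt.preimage_mem_nhds <| by
    simpa [e] using mem_interior_iff_mem_nhds.1 hp
  have hfr : ∀ v, gauge (e ⁻¹' K) v = 1 ↔ p + v ∈ frontier K := fun v => by
    rw [gauge_eq_one_iff_mem_frontier hC h0, ← e.preimage_frontier]
    rfl
  have hcont : ContinuousAt (fun u => gauge (e ⁻¹' K) (u - p)) w :=
    ((continuous_gauge hC h0).comp (continuous_sub_right p)).continuousAt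
  have hw1 : gauge (e ⁻¹' K) (w - p) = 1 := (hfr _).2 (by rwa [add_sub_cancel])
  refine ⟨fun u => (gauge (e ⁻¹' K) (u - p))⁻¹, ?_, ?_⟩
  · simpa [hw1] using hcont.tendsto.inv₀ (by rw [hw1]; exact one_ne_zero)
  · have hpos : ∀ᶠ u in 𝓝 w, 0 < gauge (e ⁻¹' K) (u - p) :=
      hcont.eventually (lt_mem_nhds (by simp [hw1]))
    filter_upwards [hpos] with u hu
    rw [← hfr, gauge_smul_of_nonneg (inv_nonneg.2 hu.le), smul_eq_mul, inv_mul_cancel₀ hu.ne']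

lemma mem_closure_inter_frontier (hK : Convex ℝ K) {p w : E} {U : Set E} (hp : p ∈ interior K)
    (hw : w ∈ frontier K) (hU : ∀ u ∈ U, ∀ r : ℝ, 0 < r → p + r • (u - p) ∈ U)
    (hwU : w ∈ closure U) : w ∈ closure (U ∩ frontier K) := by
  obtain ⟨r, hr, hfr⟩ := exists_tendsto_one_add_smul_mem_frontier hK hp hw
  have hlim : Tendsto (fun u => p + r u • (u - p)) (𝓝[U] w) (𝓝 w) := by
    have hcont := (hr.smul ((continuous_sub_right p).tendsto w)).const_add p
    rw [one_smul, add_sub_cancel] at hcont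
    exact hcont.mono_left nhdsWithin_le_nhds
  have := mem_closure_iff_nhdsWithin_neBot.1 hwU
  refine mem_closure_of_tendsto hlim ?_
  filter_upwards [self_mem_nhdsWithin, nhdsWithin_le_nhds hfr,
    nhdsWithin_le_nhds (hr.eventually (lt_mem_nhds one_pos))] with u hu hufr hur
  exact ⟨hU u hu _ hur, hufr⟩

end Frontier

section SamePlane

variable {E : Type*} [NormedAddCommGroup E] [InnerProductSpace ℝ E] {L : Set E}
  {x y z a b M n κ p : E} {e : ℝ}

/-- If the grazes of `x` and `y` lie in one plane, then both are the section of `bd L` by it: a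
supporting plane through `x` can be tilted about this plane until it passes through `y`. -/
lemma SupportsAt.change_apex [CompleteSpace E] (h : SupportsAt L x a p) (hL : IsStrictBody L)
    (hne : (contactSet L y).Nonempty) (hn : ∀ q ∈ contactSet L y, ⟪n, q - y⟫_ℝ = 1)
    (hpos : StrictlySeparates L y n) (hp : ⟪n, p - y⟫_ℝ = 1) :
    SupportsAt L y (a + ⟪a, y - x⟫_ℝ • n) p where
  mem := h.mem
  inner_eq_zero := by
    rw [inner_add_left, real_inner_smul_left, hp, mul_one, ← inner_add_right, sub_add_sub_cancel,
      h.inner_eq_zero]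
  inner_nonneg q hq := by
    have hproj := h.inner_nonneg _ (hL.add_inv_inner_smul_mem hn hpos hne hq)
    have hscale : ⟪a + ⟪a, y - x⟫_ℝ • n, q - y⟫_ℝ
        = ⟪n, q - y⟫_ℝ * ⟪a, y + (⟪n, q - y⟫_ℝ)⁻¹ • (q - y) - x⟫_ℝ := by
      rw [add_sub_right_comm, inner_add_right, inner_smul_right, inner_add_left,
        real_inner_smul_left]
      field_simp [(hpos q hq).ne']
      ring
    rw [hscale]
    exact mul_nonneg (hpos q hq).le hproj

/-- A positive combination of the two normals vanishes at `z`. -/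
lemma SupportsAt.mem_contactSet_of_inner_mul_neg (hx : SupportsAt L x a p) (hy : SupportsAt L y b p)
    (ha : a ≠ 0) (hL : IsStrictBody L) (hz : ⟪a, z - x⟫_ℝ * ⟪b, z - y⟫_ℝ < 0) :
    p ∈ contactSet L z := by
  set X := ⟪a, z - x⟫_ℝ
  set Y := ⟪b, z - y⟫_ℝ
  have hX : 0 < |X| := abs_pos.2 (left_ne_zero_of_mul hz.ne)
  have hY : 0 < |Y| := abs_pos.2 (right_ne_zero_of_mul hz.ne)
  have hbalance : |Y| * X + |X| * Y = 0 := by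
    rcases mul_neg_iff.1 hz with ⟨hX, hY⟩ | ⟨hX, hY⟩
    · rw [abs_of_pos hX, abs_of_neg hY]; ring
    · rw [abs_of_neg hX, abs_of_pos hY]; ring
  have hcomb : ∀ q, ⟪|Y| • a + |X| • b, q - z⟫_ℝ = |Y| * ⟪a, q - x⟫_ℝ + |X| * ⟪b, q - y⟫_ℝ := by
    intro q
    have haz : ⟪a, q - z⟫_ℝ = ⟪a, q - x⟫_ℝ - X := by
      rw [← inner_sub_right, sub_sub_sub_cancel_right]
    have hbz : ⟪b, q - z⟫_ℝ = ⟪b, q - y⟫_ℝ - Y := by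
      rw [← inner_sub_right, sub_sub_sub_cancel_right]
    rw [inner_add_left, real_inner_smul_left, real_inner_smul_left, haz, hbz]
    linear_combination -hbalance
  refine ⟨|Y| • a + |X| • b, fun h0 => ?_, hx.mem, ?_, fun q hq => ?_⟩
  · obtain ⟨c, hc⟩ := hL.nonempty_interior
    have hc0 := hcomb c
    rw [h0, inner_zero_left] at hc0
    linarith [mul_pos hY (inner_pos_of_mem_interior ha hx.inner_nonneg hc),
      mul_nonneg hX.le (hy.inner_nonneg c (interior_subset hc))]
  · rw [hcomb, hx.inner_eq_zero, hy.inner_eq_zero, mul_zero, mul_zero, add_zero]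
  · rw [hcomb]
    exact add_nonneg (mul_nonneg hY.le (hx.inner_nonneg q hq))
      (mul_nonneg hX.le (hy.inner_nonneg q hq))

lemma inner_eq_on_contactSet_of_mem_closure (hL : IsStrictBody L) (hκ : StrictlySeparates L x κ)
    (hx : x ∈ closure {z | ∀ p ∈ contactSet L z, ⟪M, p⟫_ℝ = e}) :
    ∀ p ∈ contactSet L x, ⟪M, p⟫_ℝ = e := by
  intro p hp
  obtain ⟨β, hβ0, hβ, rfl⟩ := hL.exists_eq_contactPoint hκ hp
  have hβκ := notMem_span_singleton_of_inner_eq_zero hβ0 hβ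
  have hlim : Tendsto (fun z => ⟪M, contactPoint L z κ β⟫_ℝ)
      (𝓝[{z | ∀ p ∈ contactSet L z, ⟪M, p⟫_ℝ = e}] x) (𝓝 ⟪M, contactPoint L x κ β⟫_ℝ) :=
    tendsto_const_nhds.inner
      (hL.tendsto_contactPoint hκ hβκ nhdsWithin_le_nhds tendsto_const_nhds tendsto_const_nhds)
  have := mem_closure_iff_nhdsWithin_neBot.1 hx
  refine tendsto_nhds_unique hlim (tendsto_const_nhds.congr' ?_)
  filter_upwards [self_mem_nhdsWithin,
    hκ.eventually_of_tendsto hL.isCompact nhdsWithin_le_nhds tendsto_const_nhds]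
    with z hz hκz
  exact (hz _ (hL.contactPoint_mem hκz hβκ)).symm

lemma exists_ultrafilter_tendsto_normal [FiniteDimensional ℝ E] (hL : IsClosed L)
    (hp : AccPt p (𝓟 (contactSet L x))) :
    ∃ (U : Ultrafilter E) (as : E → E) (a : E), a ≠ 0 ∧ SupportsAt L x a p ∧
      Tendsto as U (𝓝 a) ∧ (U : Filter E) ≤ 𝓝[≠] p ∧
      ∀ᶠ q in (U : Filter E), as q ≠ 0 ∧ SupportsAt L x (as q) q := by
  have hnormal : ∀ q ∈ contactSet L x, ∃ a : E, ‖a‖ = 1 ∧ SupportsAt L x a q :=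
    fun q ⟨_, ha, h⟩ => h.exists_norm_eq_one ha
  choose! as has using hnormal
  have : (𝓝[≠] p ⊓ 𝓟 (contactSet L x)).NeBot := hp
  set U := Ultrafilter.of (𝓝[≠] p ⊓ 𝓟 (contactSet L x))
  have hU : (U : Filter E) ≤ 𝓝[≠] p ⊓ 𝓟 (contactSet L x) := Ultrafilter.of_le _
  have hmem : ∀ᶠ q in (U : Filter E), q ∈ contactSet L x :=
    (hU.trans inf_le_right) (mem_principal_self _)
  obtain ⟨a, ha, hlim⟩ := (isCompact_sphere (0 : E) 1).ultrafilter_le_nhds (U.map as)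
    (le_principal_iff.2 (hmem.mono fun q hq => by simpa using (has q hq).1))
  refine ⟨U, as, a, ne_zero_of_mem_unit_sphere ⟨a, ha⟩, ?_, hlim, hU.trans inf_le_left,
    hmem.mono fun q hq => ⟨norm_ne_zero_iff.1 (by simp [(has q hq).1]), (has q hq).2⟩⟩
  exact SupportsAt.of_tendsto hL tendsto_const_nhds hlim
    (hU.trans (inf_le_left.trans nhdsWithin_le_nhds)) (hmem.mono fun q hq => (has q hq).2)

lemma inner_eq_on_contactSet_of_three (hL : IsStrictBody L) (hE : Module.finrank ℝ E = 3)
    (hn : ∀ p ∈ contactSet L x, ⟪n, p - x⟫_ℝ = 1) {p : Fin 3 → E}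
    (hp : ∀ i, p i ∈ contactSet L x) (hinj : Function.Injective p) (hM : ∀ i, ⟪M, p i⟫_ℝ = e) :
    ∀ q ∈ contactSet L x, ⟪M, q⟫_ℝ = e := by
  have hspan : Submodule.span ℝ (range fun i => p i - x) = ⊤ :=
    (linearIndependent_contactSet_triple hL.strictConvex hn hp hinj).span_eq_top_of_card_eq_finrank
      (by rw [hE, Fintype.card_fin])
  have hzero : M - (e - ⟪M, x⟫_ℝ) • n = 0 := by
    have hle : Submodule.span ℝ (range fun i => p i - x)
        ≤ LinearMap.ker (innerₛₗ ℝ (M - (e - ⟪M, x⟫_ℝ) • n)) := Submodule.span_le.2 <| by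
      rintro _ ⟨i, rfl⟩
      simp [hn _ (hp i), inner_sub_right M, hM i]
    rw [hspan] at hle
    exact inner_self_eq_zero.1 (hle (Submodule.mem_top (x := M - (e - ⟪M, x⟫_ℝ) • n)))
  intro q hq
  have hMq : ⟪M, q - x⟫_ℝ = e - ⟪M, x⟫_ℝ := by
    rw [sub_eq_zero.1 hzero, real_inner_smul_left, ← sub_eq_zero.1 hzero, hn q hq, mul_one]
  rw [inner_sub_right] at hMq
  linarith

end SamePlane

section SharedPlane

variable {E : Type*} [NormedAddCommGroup E] [InnerProductSpace ℝ E] {L : Set E}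
  {x a p M v β κ : E}

/-- The plane of a graze does not pass through the apex, so its equation can be normalized. -/
lemma IsStrictBody.exists_smul_inner_eq_one (hL : IsStrictBody L) (hκ : StrictlySeparates L x κ)
    (hne : (contactSet L x).Nonempty) (hM : M ≠ 0) {e : ℝ}
    (h : ∀ p ∈ contactSet L x, ⟪M, p⟫_ℝ = e) :
    ∃ c : ℝ, ∀ p ∈ contactSet L x, ⟪c • M, p - x⟫_ℝ = 1 := by
  have hoff : e - ⟪M, x⟫_ℝ ≠ 0 := fun h0 =>
    hM (hL.eq_zero_of_inner_contactSet_eq_zero hκ hne fun p hp => by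
      rw [inner_sub_right, h p hp, h0])
  exact ⟨(e - ⟪M, x⟫_ℝ)⁻¹, fun p hp => by
    rw [real_inner_smul_left, inner_sub_right, h p hp, inv_mul_cancel₀ hoff]⟩

lemma SupportsAt.notMem_span_singleton (h : SupportsAt L x a p) (hκ : StrictlySeparates L x κ)
    (ha : a ≠ 0) : a ∉ ℝ ∙ κ := by
  intro hmem
  obtain ⟨c, rfl⟩ := Submodule.mem_span_singleton.1 hmem
  have hc := h.inner_eq_zero
  rw [real_inner_smul_left] at hc
  exact mul_ne_zero (left_ne_zero_of_smul ha) (hκ p h.mem).ne' hc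

lemma IsStrictBody.contactPoint_smul_eq_or (hL : IsStrictBody L) (hκ : StrictlySeparates L x κ)
    (hβ : β ∉ ℝ ∙ κ) {s : ℝ} (hs : s ≠ 0) : contactPoint L x κ (s • β) = contactPoint L x κ β ∨
      contactPoint L x κ (s • β) = contactPoint L x κ (-β) := by
  rcases hs.lt_or_gt with hneg | hpos
  · rw [← neg_smul_neg]
    exact .inr (hL.contactPoint_smul hκ (by rwa [neg_mem_iff]) (neg_pos.2 hneg))
  · exact .inl (hL.contactPoint_smul hκ hβ hpos)

lemma IsStrictBody.infinite_contactSet [FiniteDimensional ℝ E] (hL : IsStrictBody L)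
    (hκ : StrictlySeparates L x κ) (hE : 2 < Module.finrank ℝ E) : (contactSet L x).Infinite :=
  (hL.isConnected_contactSet hκ hE).isPreconnected.infinite_of_nontrivial
    (hL.contactSet_nontrivial hκ (by omega))

lemma IsStrictBody.accPt_contactSet [FiniteDimensional ℝ E] (hL : IsStrictBody L)
    (hκ : StrictlySeparates L x κ) (hE : 2 < Module.finrank ℝ E) (hp : p ∈ contactSet L x) :
    AccPt p (𝓟 (contactSet L x)) :=
  (hL.isConnected_contactSet hκ hE).isPreconnected.preperfect_of_nontrivial
    (hL.contactSet_nontrivial hκ (by omega)) p hp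

/-- Only two contact points have a supporting normal orthogonal to `v`. -/
lemma IsStrictBody.exists_mem_contactSet_forall_inner_ne_zero [FiniteDimensional ℝ E]
    (hL : IsStrictBody L) (hE : Module.finrank ℝ E = 3) (hκ : StrictlySeparates L x κ)
    (hv : v ≠ 0) (hκv : ⟪κ, v⟫_ℝ = 0) :
    ∃ p ∈ contactSet L x, ∀ a ≠ 0, SupportsAt L x a p → ⟪a, v⟫_ℝ ≠ 0 := by
  obtain ⟨t, ht0, ht⟩ := exists_ne_zero_inner_eq_zero ![κ, v] (by omega)
  have htκ := notMem_span_singleton_of_inner_eq_zero ht0 (ht 0)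
  obtain ⟨p, hp, hpt⟩ := (hL.infinite_contactSet hκ (by omega)).exists_notMem_finite
    (Set.toFinite {contactPoint L x κ t, contactPoint L x κ (-t)})
  refine ⟨p, hp, fun a ha hap hav => hpt ?_⟩
  have hκ0 := hκ.ne_zero hL.nonempty
  have hind : LinearIndependent ℝ ![κ, v] := by
    rw [LinearIndependent.pair_iff' hκ0]
    rintro c rfl
    rw [inner_smul_right, mul_eq_zero, or_iff_left (inner_self_ne_zero.2 hκ0)] at hκv
    exact hv (by rw [hκv, zero_smul])
  set m := ⟪a, κ⟫_ℝ / ⟪κ, κ⟫_ℝ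
  obtain ⟨c, hc⟩ := exists_eq_smul_of_inner_eq_zero hind hE (w := a - m • κ) ht0
    (fun i => by rw [real_inner_comm]; exact ht i) (by
      rw [Fin.forall_fin_two]
      constructor
      · change ⟪a - m • κ, κ⟫_ℝ = 0
        rw [inner_sub_left, real_inner_smul_left, div_mul_cancel₀ _ (inner_self_ne_zero.2 hκ0),
          sub_self]
      · change ⟪a - m • κ, v⟫_ℝ = 0
        rw [inner_sub_left, real_inner_smul_left, hav, hκv, mul_zero, sub_zero])
  have haκ := hap.notMem_span_singleton hκ ha
  have hc0 : c ≠ 0 := by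
    rintro rfl
    exact sub_smul_ne_zero haκ m (hc.trans (zero_smul ℝ t))
  have hpc : SupportsAt L x (c • t - (-m) • κ) p := by
    rwa [← hc, neg_smul, sub_neg_eq_add, sub_add_cancel]
  have hct : c • t ∉ ℝ ∙ κ := fun hmem => htκ (((ℝ ∙ κ).smul_mem_iff hc0).1 hmem)
  rw [hpc.eq_contactPoint hL hκ hct]
  exact hL.contactPoint_smul_eq_or hκ htκ hc0

end SharedPlane

section AlmostFree

/-- A convex body `K` containing a strictly convex body `L`, almost free with respect to it, where
the plane of the graze from `z ∈ bd K` is given by its normal `n z`, scaled so that its equation is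
`⟪n z, p - z⟫ = 1`. -/
structure AlmostFreePair (K L : Set E3) (n : E3 → E3) : Prop where
  isCompact : IsCompact K
  convex : Convex ℝ K
  isStrictBody : IsStrictBody L
  zero_mem : 0 ∈ interior L
  subset_interior : L ⊆ interior K
  inner_eq_one : ∀ z ∈ frontier K, ∀ p ∈ contactSet L z, ⟪n z, p - z⟫_ℝ = 1
  notMem_of_inner_eq_zero : ∀ z ∈ frontier K, ∀ w ∈ frontier K, ⟪n z, w⟫_ℝ = 0 →
    ∀ t : ℝ, z + t • (w - z) ∉ L

namespace AlmostFreePair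

variable {K L : Set E3} {n : E3 → E3} {w x y p m M κ : E3} (S : AlmostFreePair K L n)
include S

lemma exists_strictlySeparates (hx : x ∈ frontier K) : ∃ κ : E3, StrictlySeparates L x κ :=
  exists_strictlySeparates_of_subset_interior S.convex
    ⟨0, S.subset_interior (interior_subset S.zero_mem)⟩ S.subset_interior hx.2

lemma contactSet_nonempty (hx : x ∈ frontier K) : (contactSet L x).Nonempty := by
  obtain ⟨ν, hν⟩ := S.exists_strictlySeparates hx
  exact (S.isStrictBody.contactSet_nontrivial hν (by simp)).nonempty

lemma strictlySeparates (hx : x ∈ frontier K) (hm : ∀ p ∈ contactSet L x, ⟪m, p - x⟫_ℝ = 1) :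
    StrictlySeparates L x m := by
  obtain ⟨ν, hν⟩ := S.exists_strictlySeparates hx
  exact S.isStrictBody.strictlySeparates_of_inner_eq_one hν (S.contactSet_nonempty hx) hm

lemma exists_smul_inner_eq_one (hx : x ∈ frontier K) (hM : M ≠ 0) {e : ℝ}
    (h : ∀ p ∈ contactSet L x, ⟪M, p⟫_ℝ = e) :
    ∃ c : ℝ, ∀ p ∈ contactSet L x, ⟪c • M, p - x⟫_ℝ = 1 := by
  obtain ⟨ν, hν⟩ := S.exists_strictlySeparates hx
  exact S.isStrictBody.exists_smul_inner_eq_one hν (S.contactSet_nonempty hx) hM h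

lemma inner_ne_zero_of_inner_eq (hx : x ∈ frontier K) (hM : M ≠ 0) {e : ℝ}
    (h : ∀ p ∈ contactSet L x, ⟪M, p⟫_ℝ = e) : ⟪M, x⟫_ℝ ≠ 0 := by
  intro h0
  obtain ⟨c, hc⟩ := S.exists_smul_inner_eq_one hx hM h
  have hpos := S.strictlySeparates hx hc 0 (interior_subset S.zero_mem)
  rw [zero_sub, inner_neg_right, real_inner_smul_left, h0, mul_zero, neg_zero] at hpos
  exact hpos.false

/-- The line from `x` to `p` meets the plane `Π_x` through `0` inside `K`. -/
lemma add_smul_sub_mem_interior (hx : x ∈ frontier K) (hp : p ∈ contactSet L x) :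
    x + ⟪n x, 0 - x⟫_ℝ • (p - x) ∈ interior K := by
  set τ := ⟪n x, 0 - x⟫_ℝ with hτ
  have h0L : (0 : E3) ∈ L := interior_subset S.zero_mem
  have hτpos : 0 < τ := S.strictlySeparates hx (S.inner_eq_one x hx) 0 h0L
  by_contra hout
  obtain ⟨w, ⟨b, σ, hb, hσ, hbσ, rfl⟩, hw⟩ :=
    exists_mem_segment_mem_frontier (S.subset_interior h0L) hout
  rw [smul_zero, zero_add] at hw
  have hden : 0 < b + σ * τ := by
    rcases hσ.eq_or_lt with rfl | hσ
    · linarith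
    · linarith [mul_pos hσ hτpos]
  refine S.notMem_of_inner_eq_zero x hx _ hw ?_ (b + σ * τ)⁻¹ ?_
  · rw [inner_smul_right, inner_add_right, inner_smul_right, S.inner_eq_one x hx p hp, mul_one, hτ,
      zero_sub, inner_neg_right, add_neg_cancel, mul_zero]
  · have hmem := S.isStrictBody.strictConvex.convex h0L (contactSet_subset hp)
      (a := (b + σ * τ)⁻¹ * b) (b := (b + σ * τ)⁻¹ * (σ * τ))
      (by positivity) (mul_nonneg (inv_nonneg.2 hden.le) (mul_nonneg hσ hτpos.le))
      (by rw [← mul_add, inv_mul_cancel₀ hden.ne'])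
    convert hmem using 1
    obtain rfl : b = 1 - σ := by linarith
    match_scalars
    · field_simp
      ring
    · ring

end AlmostFreePair

end AlmostFree

section InjectivityOfPlanes

namespace AlmostFreePair

variable {K L : Set E3} {n : E3 → E3} {x y p m : E3} (S : AlmostFreePair K L n)
include S

/-- Points `z` of `bd K` lying between the two supporting planes at `p` are touched at `p` and, by
continuity, at nearby points of the graze of `x`; three of these determine the plane. -/
lemma exists_supportsAt_forall_inner_eq_one (hx : x ∈ frontier K) (hy : y ∈ frontier K)
    (hmy : ∀ q ∈ contactSet L y, ⟪m, q - y⟫_ℝ = 1) (hmx : ∀ q ∈ contactSet L x, ⟪m, q - y⟫_ℝ = 1)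
    (hp : p ∈ contactSet L x) :
    ∃ a ≠ 0, SupportsAt L x a p ∧ ∀ z ∈ frontier K,
      ⟪a, z - x⟫_ℝ * ⟪a + ⟪a, y - x⟫_ℝ • m, z - y⟫_ℝ < 0 →
        ∀ q ∈ contactSet L z, ⟪m, q - y⟫_ℝ = 1 := by
  have hL := S.isStrictBody
  obtain ⟨ν, hν⟩ := S.exists_strictlySeparates hx
  obtain ⟨U, as, a, ha, hap, hlim, hUp, hU⟩ :=
    exists_ultrafilter_tendsto_normal hL.isCompact.isClosed (hL.accPt_contactSet hν (by simp) hp)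
  refine ⟨a, ha, hap, fun z hz hneg => ?_⟩
  have touches {a' q : E3} (ha' : a' ≠ 0) (haq : SupportsAt L x a' q)
      (h : ⟪a', z - x⟫_ℝ * ⟪a' + ⟪a', y - x⟫_ℝ • m, z - y⟫_ℝ < 0) : q ∈ contactSet L z :=
    haq.mem_contactSet_of_inner_mul_neg (haq.change_apex hL (S.contactSet_nonempty hy) hmy
      (S.strictlySeparates hy hmy) (hmx q (haq.mem_contactSet ha'))) ha' hL h
  have hcont : Tendsto (fun q => ⟪as q, z - x⟫_ℝ * ⟪as q + ⟪as q, y - x⟫_ℝ • m, z - y⟫_ℝ) U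
      (𝓝 (⟪a, z - x⟫_ℝ * ⟪a + ⟪a, y - x⟫_ℝ • m, z - y⟫_ℝ)) :=
    (hlim.inner tendsto_const_nhds).mul ((hlim.add
      ((hlim.inner tendsto_const_nhds).smul_const m)).inner tendsto_const_nhds)
  have hnear : ∀ᶠ q in (U : Filter E3), q ≠ p ∧ q ∈ contactSet L x ∧ q ∈ contactSet L z := by
    filter_upwards [hUp self_mem_nhdsWithin, hU, hcont.eventually (gt_mem_nhds hneg)]
      with q hq ⟨h0, haq⟩ h
    exact ⟨hq, haq.mem_contactSet h0, touches h0 haq h⟩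
  obtain ⟨p₁, h₁p, h₁x, h₁z⟩ := hnear.exists
  obtain ⟨p₂, ⟨h₂p, h₂x, h₂z⟩, h₂₁⟩ :=
    (hnear.and (hUp (nhdsWithin_le_nhds (isOpen_ne.mem_nhds h₁p.symm)))).exists
  have heq : ∀ q ∈ contactSet L z, ⟪m, q⟫_ℝ = 1 + ⟪m, y⟫_ℝ := by
    refine inner_eq_on_contactSet_of_three hL (by simp) (S.inner_eq_one z hz) (p := ![p, p₁, p₂])
      ?_ ?_ ?_
    · simp [Fin.forall_fin_succ, touches ha hap hneg, h₁z, h₂z]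
    · intro i j hij
      fin_cases i <;> fin_cases j <;> simp_all
    · have hmx' : ∀ q ∈ contactSet L x, ⟪m, q⟫_ℝ = 1 + ⟪m, y⟫_ℝ := fun q hq => by
        rw [← hmx q hq, inner_sub_right, sub_add_cancel]
      simp [Fin.forall_fin_succ, hmx' _ hp, hmx' _ h₁x, hmx' _ h₂x]
  intro q hq
  rw [inner_sub_right, heq q hq, add_sub_cancel_right]

end AlmostFreePair

/-- Crossing the line where `a` vanishes changes the sign of `⟪a, z - x⟫` but not that of the other
factor. -/
lemma mem_closure_inner_mul_neg {E : Type*} [NormedAddCommGroup E] [InnerProductSpace ℝ E]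
    [FiniteDimensional ℝ E] {a b x y w : E} (hab : LinearIndependent ℝ ![a, b])
    (hw : ⟪a, w - x⟫_ℝ = 0) : w ∈ closure {z | ⟪a, z - x⟫_ℝ * ⟪b, z - y⟫_ℝ < 0} := by
  obtain ⟨σ, hσ, hσw⟩ : ∃ σ : ℝ, σ ≠ 0 ∧ 0 ≤ σ * ⟪b, w - y⟫_ℝ := by
    rcases le_total 0 ⟪b, w - y⟫_ℝ with h | h
    · exact ⟨1, one_ne_zero, by rwa [one_mul]⟩
    · exact ⟨-1, by norm_num, by linarith⟩
  obtain ⟨v, hv⟩ := exists_inner_eq_of_linearIndependent hab ![-σ, σ]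
  have hav : ⟪a, v⟫_ℝ = -σ := hv 0
  have hbv : ⟪b, v⟫_ℝ = σ := hv 1
  have hpath : Tendsto (fun t : ℝ => w + t • v) (𝓝[>] 0) (𝓝 w) := by
    have hcont : Continuous fun t : ℝ => w + t • v := by fun_prop
    simpa using (hcont.tendsto 0).mono_left nhdsWithin_le_nhds
  refine mem_closure_of_tendsto hpath ?_
  filter_upwards [self_mem_nhdsWithin] with t (ht : 0 < t)
  rw [add_sub_right_comm, add_sub_right_comm, inner_add_right, inner_add_right b, hw,
    inner_smul_right, inner_smul_right, hav, hbv]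
  nlinarith [mul_pos ht (mul_pos ht (sq_pos_of_ne_zero hσ)), mul_nonneg ht.le hσw]

namespace AlmostFreePair

variable {K L : Set E3} {n : E3 → E3} {x y p a b κ : E3} (S : AlmostFreePair K L n)
include S

lemma exists_mem_frontier_inter_closure (hx : x ∈ frontier K) (hp : p ∈ contactSet L x)
    (hab : LinearIndependent ℝ ![a, b]) (hap : ⟪a, p - x⟫_ℝ = 0) (hbp : ⟪b, p - y⟫_ℝ = 0) :
    ∃ w ∈ frontier K, ⟪n x, w⟫_ℝ = 0 ∧
      w ∈ closure ({z | ⟪a, z - x⟫_ℝ * ⟪b, z - y⟫_ℝ < 0} ∩ frontier K) := by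
  obtain ⟨f, hf0, hf⟩ := exists_ne_zero_inner_eq_zero ![n x, a] (by simp)
  have hfn : ⟪n x, f⟫_ℝ = 0 := hf 0
  have hfa : ⟪a, f⟫_ℝ = 0 := hf 1
  obtain ⟨t, ht⟩ := exists_add_smul_mem_frontier S.isCompact.isBounded
    (S.add_smul_sub_mem_interior hx hp) hf0
  refine ⟨_, ht, ?_, mem_closure_inter_frontier S.convex
    (S.subset_interior (contactSet_subset hp)) ht (fun u hu r hr => ?_)
    (mem_closure_inner_mul_neg hab ?_)⟩
  · rw [inner_add_right, inner_add_right, inner_smul_right, inner_smul_right, hfn,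
      S.inner_eq_one x hx p hp, zero_sub, inner_neg_right]
    ring
  · have hline {c o : E3} (hc : ⟪c, p - o⟫_ℝ = 0) :
        ⟪c, p + r • (u - p) - o⟫_ℝ = r * ⟪c, u - o⟫_ℝ := by
      rw [add_sub_right_comm, inner_add_right, hc, zero_add, inner_smul_right,
        ← sub_sub_sub_cancel_right u p o, inner_sub_right, hc, sub_zero]
    change ⟪a, _⟫_ℝ * ⟪b, _⟫_ℝ < 0
    rw [hline hap, hline hbp, mul_mul_mul_comm]
    exact mul_neg_of_pos_of_neg (mul_pos hr hr) hu
  · rw [add_assoc, add_sub_cancel_left, inner_add_right, inner_smul_right, inner_smul_right,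
      hap, hfa, mul_zero, mul_zero, add_zero]

lemma exists_smul_inner_eq_one_of_inner_eq_one (hx : x ∈ frontier K) (hy : y ∈ frontier K)
    (hplane : ∀ p ∈ contactSet L y, ⟪n x, p - x⟫_ℝ = 1) :
    ∃ c : ℝ, (∀ q ∈ contactSet L x, ⟪c • n x, q - y⟫_ℝ = 1) ∧
      ∀ q ∈ contactSet L y, ⟪c • n x, q - y⟫_ℝ = 1 := by
  obtain ⟨q', hq'⟩ := S.contactSet_nonempty hy
  obtain ⟨c, hc⟩ := S.exists_smul_inner_eq_one hy (M := n x) (e := 1 + ⟪n x, x⟫_ℝ)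
    (fun h0 => by simpa [h0] using hplane q' hq')
    fun q hq => by rw [← hplane q hq, inner_sub_right, sub_add_cancel]
  refine ⟨c, fun q hq => ?_, hc⟩
  rw [← hc q' hq', ← sub_eq_zero, ← inner_sub_right, sub_sub_sub_cancel_right,
    ← sub_sub_sub_cancel_right q q' x, real_inner_smul_left, inner_sub_right,
    S.inner_eq_one x hx q hq, hplane q' hq', sub_self, mul_zero]

/-- Otherwise the grazes of points of `bd K` accumulating at a point of `Π_x ∩ bd K` all lie in the
plane of the graze of `x`, although that plane is parallel to `Π_x`. -/
theorem eq_of_forall_inner_eq_one (hx : x ∈ frontier K) (hy : y ∈ frontier K)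
    (hκ : StrictlySeparates L x κ) (hκy : ⟪κ, y - x⟫_ℝ = 0)
    (hplane : ∀ p ∈ contactSet L y, ⟪n x, p - x⟫_ℝ = 1) : y = x := by
  by_contra hyx
  have hL := S.isStrictBody
  obtain ⟨p, hp, hpa⟩ := hL.exists_mem_contactSet_forall_inner_ne_zero (by simp) hκ
    (sub_ne_zero.2 hyx) hκy
  obtain ⟨c, hcx, hcy⟩ := S.exists_smul_inner_eq_one_of_inner_eq_one hx hy hplane
  have hm0 : c • n x ≠ 0 := fun h0 => by simpa [h0] using hcx p hp
  obtain ⟨a, ha, hap, hspread⟩ := S.exists_supportsAt_forall_inner_eq_one hx hy hcy hcx hp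
  set b := a + ⟪a, y - x⟫_ℝ • c • n x with hb
  have hbp : ⟪b, p - y⟫_ℝ = 0 := (hap.change_apex hL (S.contactSet_nonempty hy) hcy
    (S.strictlySeparates hy hcy) (hcx p hp)).inner_eq_zero
  have hab : LinearIndependent ℝ ![a, b] := by
    rw [LinearIndependent.pair_iff' ha]
    intro s hs
    have hbpx : ⟪b, p - x⟫_ℝ = 0 := by rw [← hs, real_inner_smul_left, hap.inner_eq_zero, mul_zero]
    rw [hb, inner_add_left, hap.inner_eq_zero, zero_add, real_inner_smul_left, real_inner_smul_left,
      S.inner_eq_one x hx p hp, mul_one] at hbpx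
    exact mul_ne_zero (hpa a ha hap) (left_ne_zero_of_smul hm0) hbpx
  obtain ⟨w, hw, hnw, hcl⟩ := S.exists_mem_frontier_inter_closure hx hp hab hap.inner_eq_zero hbp
  obtain ⟨ν, hν⟩ := S.exists_strictlySeparates hw
  refine S.inner_ne_zero_of_inner_eq hw hm0 (e := 1 + ⟪c • n x, y⟫_ℝ)
    (inner_eq_on_contactSet_of_mem_closure hL hν (closure_mono ?_ hcl))
    (by rw [real_inner_smul_left, hnw, mul_zero])
  rintro z ⟨hz, hzK⟩ q hq
  rw [← hspread z hzK hz q hq, inner_sub_right, sub_add_cancel]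

end AlmostFreePair

end InjectivityOfPlanes

section InnerTangentBall

variable {E : Type*} [NormedAddCommGroup E] [InnerProductSpace ℝ E] {K : Set E} {x ν τ : E} {r : ℝ}

/-- The hyperplane through `x` with unit normal `ν` supports `K`, and `K` contains the ball of
radius `r` touching that hyperplane at `x`. -/
structure InnerTangentBall (K : Set E) (x ν : E) (r : ℝ) : Prop where
  mem_frontier : x ∈ frontier K
  norm_eq_one : ‖ν‖ = 1
  inner_nonneg : ∀ q ∈ K, 0 ≤ ⟪ν, q - x⟫_ℝ
  pos : 0 < r
  closedBall_subset : closedBall (x + r • ν) r ⊆ K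

lemma ball_subset_interior_of_forall_dist_le {c : E} (hc : c ∈ interior K)
    (hmin : ∀ y ∈ frontier K, r ≤ dist c y) : ball c r ⊆ interior K := by
  intro y hy
  by_contra hout
  obtain ⟨w, hw, hwK⟩ := exists_mem_segment_mem_frontier hc hout
  have hball := (convex_ball c r).segment_subset
    (mem_ball_self (dist_nonneg.trans_lt (mem_ball.1 hy))) hy hw
  rw [mem_ball, dist_comm] at hball
  exact (hmin w hwK).not_gt hball

/-- The nearest boundary point to an interior point is the contact point of a tangent ball. -/
lemma exists_innerTangentBall_dist_lt [CompleteSpace E] (hK : IsCompact K) (hconv : Convex ℝ K)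
    (hne : (interior K).Nonempty) {x₀ : E} (hx₀ : x₀ ∈ frontier K) {ε : ℝ} (hε : 0 < ε) :
    ∃ x ν r, InnerTangentBall K x ν r ∧ dist x x₀ < ε := by
  have hcl : x₀ ∈ closure (interior K) := by
    rw [hconv.closure_interior_eq_closure_of_nonempty_interior hne]
    exact hx₀.1
  obtain ⟨c, hc, hcε⟩ := Metric.mem_closure_iff.1 hcl (ε / 2) (half_pos hε)
  obtain ⟨x, hx, hmin⟩ := (hK.of_isClosed_subset isClosed_frontier
    hK.isClosed.frontier_subset).exists_isMinOn ⟨x₀, hx₀⟩ (f := fun y => dist c y) (by fun_prop)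
  obtain ⟨a, ha, haK⟩ := exists_inner_sub_nonneg_of_notMem_interior hconv hne hx.2
  have hpos : 0 < dist c x := dist_pos.2 fun h => hx.2 (h ▸ hc)
  have hball : closedBall c (dist c x) ⊆ K := by
    rw [← closure_ball c hpos.ne']
    exact closure_minimal ((ball_subset_interior_of_forall_dist_le hc fun y hy => hmin hy).trans
      interior_subset) hK.isClosed
  set ν := ‖a‖⁻¹ • a with hν
  have hν1 : ‖ν‖ = 1 := norm_smul_inv_norm (𝕜 := ℝ) ha
  have hνK : ∀ q ∈ K, 0 ≤ ⟪ν, q - x⟫_ℝ := fun q hq => by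
    rw [real_inner_smul_left]
    exact mul_nonneg (by positivity) (haK q hq)
  have hcenter : x + dist c x • ν = c := by
    have hlow := hνK (c - dist c x • ν) (hball (by
      rw [mem_closedBall, dist_eq_norm, sub_sub_cancel_left, norm_neg, norm_smul, hν1, mul_one,
        Real.norm_of_nonneg hpos.le]))
    rw [sub_right_comm, inner_sub_right, inner_smul_right, real_inner_self_eq_norm_sq, hν1, one_pow,
      mul_one, sub_nonneg, dist_eq_norm] at hlow
    have heq : ⟪ν, c - x⟫_ℝ = ‖ν‖ * ‖c - x‖ :=
      le_antisymm (real_inner_le_norm _ _) (by rwa [hν1, one_mul])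
    rw [inner_eq_norm_mul_iff_real, hν1, one_smul] at heq
    rw [dist_eq_norm, heq, add_sub_cancel]
  refine ⟨x, ν, dist c x, ⟨hx, hν1, hνK, hpos, by rwa [hcenter]⟩, ?_⟩
  have htri := dist_triangle_left x x₀ c
  have hle : dist c x ≤ dist c x₀ := hmin hx₀
  rw [dist_comm x₀] at hcε
  linarith

namespace InnerTangentBall

lemma ne_zero (h : InnerTangentBall K x ν r) : ν ≠ 0 := by
  rw [← norm_ne_zero_iff, h.norm_eq_one]
  exact one_ne_zero

lemma strictlySeparates (h : InnerTangentBall K x ν r) {L : Set E} (hL : L ⊆ interior K) :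
    StrictlySeparates L x ν := fun _ hq =>
  inner_pos_of_mem_interior h.ne_zero h.inner_nonneg (hL hq)

lemma add_smul_add_smul_mem (h : InnerTangentBall K x ν r) (hτ : ⟪ν, τ⟫_ℝ = 0) {t : ℝ} (ht : 0 < t)
    (htr : t * ‖τ‖ ≤ r) : x + t • (τ + (t * ‖τ‖ ^ 2 / r) • ν) ∈ K := by
  have hr := h.pos
  refine h.closedBall_subset ?_
  have hsub : x + t • (τ + (t * ‖τ‖ ^ 2 / r) • ν) - (x + r • ν) =
      t • τ + ((t * ‖τ‖) ^ 2 / r - r) • ν := by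
    rw [mul_pow]
    match_scalars <;> ring
  rw [mem_closedBall, dist_eq_norm, hsub]
  refine abs_le_of_sq_le_sq' ?_ hr.le |>.2
  have hsq : (t * ‖τ‖) ^ 2 / r * r = (t * ‖τ‖) ^ 2 := div_mul_cancel₀ _ hr.ne'
  have hle : (t * ‖τ‖) ^ 2 / r ≤ r := by
    rw [div_le_iff₀ hr, ← sq]
    exact pow_le_pow_left₀ (by positivity) htr 2
  rw [norm_add_sq_real, real_inner_smul_left, inner_smul_right, real_inner_comm, hτ, norm_smul,
    norm_smul, h.norm_eq_one, Real.norm_of_nonneg ht.le, mul_one, Real.norm_eq_abs, sq_abs]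
  nlinarith [div_nonneg (sq_nonneg (t * ‖τ‖)) hr.le]

lemma exists_mem_Icc_mem_frontier (h : InnerTangentBall K x ν r) (hτ : ⟪ν, τ⟫_ℝ = 0)
    {t : ℝ} (ht : 0 < t) (htr : t * ‖τ‖ ≤ r) :
    ∃ s ∈ Icc 0 (t * ‖τ‖ ^ 2 / r), x + t • (τ + s • ν) ∈ frontier K := by
  have hr := h.pos
  have hs : 0 ≤ t * ‖τ‖ ^ 2 / r := by positivity
  have hin := h.add_smul_add_smul_mem hτ ht htr
  by_cases hint : x + t • (τ + (t * ‖τ‖ ^ 2 / r) • ν) ∈ interior K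
  · have hout : x + t • τ ∉ interior K := fun hmem => by
      have hpos := inner_pos_of_mem_interior h.ne_zero h.inner_nonneg hmem
      rw [add_sub_cancel_left, inner_smul_right, hτ, mul_zero] at hpos
      exact hpos.false
    obtain ⟨_, ⟨b, c, hb, hc, hbc, rfl⟩, hw⟩ := exists_mem_segment_mem_frontier hint hout
    refine ⟨b * (t * ‖τ‖ ^ 2 / r), ⟨mul_nonneg hb hs, mul_le_of_le_one_left hs (by linarith)⟩, ?_⟩
    obtain rfl : c = 1 - b := by linarith
    convert hw using 1
    module
  · exact ⟨_, ⟨hs, le_rfl⟩, subset_closure hin, hint⟩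

lemma exists_tendsto_forall_add_smul_mem_frontier (h : InnerTangentBall K x ν r)
    (hτ : ⟪ν, τ⟫_ℝ = 0) : ∃ g : ℝ → E, Tendsto g (𝓝[>] 0) (𝓝 τ) ∧
      ∀ᶠ t in 𝓝[>] 0, x + t • g t ∈ frontier K := by
  have hsmall : ∀ᶠ t in 𝓝[>] (0 : ℝ), 0 < t ∧ t * ‖τ‖ ≤ r := by
    have hcont : Tendsto (fun t : ℝ => t * ‖τ‖) (𝓝 0) (𝓝 0) := by
      simpa using (continuous_mul_const ‖τ‖).tendsto (0 : ℝ)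
    exact eventually_mem_nhdsWithin.and
      (nhdsWithin_le_nhds (hcont.eventually (ge_mem_nhds h.pos)))
  have hex : ∀ t : ℝ, ∃ s : ℝ, 0 < t ∧ t * ‖τ‖ ≤ r →
      s ∈ Icc 0 (t * ‖τ‖ ^ 2 / r) ∧ x + t • (τ + s • ν) ∈ frontier K := fun t => by
    by_cases ht : 0 < t ∧ t * ‖τ‖ ≤ r
    · obtain ⟨s, hs⟩ := h.exists_mem_Icc_mem_frontier hτ ht.1 ht.2
      exact ⟨s, fun _ => hs⟩
    · exact ⟨0, fun ht' => absurd ht' ht⟩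
  choose s hs using hex
  refine ⟨fun t => τ + s t • ν, ?_, hsmall.mono fun t ht => (hs t ht).2⟩
  have hbound : Tendsto (fun t : ℝ => t * ‖τ‖ ^ 2 / r) (𝓝[>] 0) (𝓝 0) := by
    have hcont : Continuous fun t : ℝ => t * ‖τ‖ ^ 2 / r := by fun_prop
    simpa using (hcont.tendsto 0).mono_left nhdsWithin_le_nhds
  have hs0 : Tendsto s (𝓝[>] 0) (𝓝 0) :=
    tendsto_of_tendsto_of_tendsto_of_le_of_le' tendsto_const_nhds hbound
      (hsmall.mono fun t ht => (hs t ht).1.1) (hsmall.mono fun t ht => (hs t ht).1.2)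
  simpa using (hs0.smul_const ν).const_add τ

end InnerTangentBall

end InnerTangentBall

section RelNormal

lemma tendsto_starProjection_orthogonal_singleton {E ι : Type*} [NormedAddCommGroup E]
    [InnerProductSpace ℝ E] {l : Filter ι} {τs : ι → E} {τ v : E} (hτ : τ ≠ 0)
    (h : Tendsto τs l (𝓝 τ)) (hv : ⟪τ, v⟫_ℝ = 0) :
    Tendsto (fun i => (ℝ ∙ τs i)ᗮ.starProjection v) l (𝓝 v) := by
  simp only [Submodule.starProjection_orthogonal_val, Submodule.starProjection_singleton,
    RCLike.ofReal_real_eq_id, id]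
  have hlim := tendsto_const_nhds (x := v).sub
    (((h.inner (tendsto_const_nhds (x := v))).div (h.norm.pow 2) (by simpa using hτ)).smul h)
  rwa [hv, zero_div, zero_smul, sub_zero] at hlim

/-- The normal of the plane of the graze from `y`, rescaled so that the equation of this plane reads
`⟪relNormal n x y, p - x⟫ = 1`; it is the junk value `0` if this plane contains `x`. -/
def relNormal (n : E3 → E3) (x y : E3) : E3 := (1 + ⟪n y, y - x⟫_ℝ)⁻¹ • n y

namespace AlmostFreePair

variable {K L : Set E3} {n : E3 → E3} {x y z p ν τ β v : E3} (S : AlmostFreePair K L n)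
include S

lemma eventually_one_add_inner_ne_zero (hx : x ∈ frontier K) :
    ∀ᶠ y in 𝓝[frontier K] x, 1 + ⟪n y, y - x⟫_ℝ ≠ 0 := by
  by_contra hfreq
  have : (𝓝[frontier K] x ⊓ 𝓟 {y | 1 + ⟪n y, y - x⟫_ℝ = 0}).NeBot :=
    frequently_iff_neBot.1 (by simpa only [not_eventually, not_not] using hfreq)
  set U := Ultrafilter.of (𝓝[frontier K] x ⊓ 𝓟 {y | 1 + ⟪n y, y - x⟫_ℝ = 0})
  have hU : (U : Filter E3) ≤ 𝓝[frontier K] x ⊓ 𝓟 {y | 1 + ⟪n y, y - x⟫_ℝ = 0} :=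
    Ultrafilter.of_le _
  have hUzero : ∀ᶠ y in (U : Filter E3), 1 + ⟪n y, y - x⟫_ℝ = 0 :=
    (hU.trans inf_le_right) (mem_principal_self _)
  have hUK : ∀ᶠ y in (U : Filter E3), y ∈ frontier K :=
    (hU.trans inf_le_left) self_mem_nhdsWithin
  have hUx : Tendsto (fun y : E3 => y) U (𝓝 x) :=
    (hU.trans inf_le_left).trans nhdsWithin_le_nhds
  obtain ⟨a, ha, hlim⟩ := (isCompact_sphere (0 : E3) 1).ultrafilter_le_nhds
    (U.map fun y => ‖n y‖⁻¹ • n y) (le_principal_iff.2 (hUzero.mono fun y hy => by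
      have hn : n y ≠ 0 := fun h => by simp [h] at hy
      simp [norm_smul, hn]))
  obtain ⟨ν, hν⟩ := S.exists_strictlySeparates hx
  refine ne_zero_of_mem_unit_sphere ⟨a, ha⟩ (S.isStrictBody.eq_zero_of_inner_contactSet_eq_zero hν
    (S.contactSet_nonempty hx) fun p hp => ?_)
  obtain ⟨β, hβ0, hβν, rfl⟩ := S.isStrictBody.exists_eq_contactPoint hν hp
  have hβ := notMem_span_singleton_of_inner_eq_zero hβ0 hβν
  have hinner : Tendsto (fun y => ⟪‖n y‖⁻¹ • n y, contactPoint L y ν β - x⟫_ℝ) U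
      (𝓝 ⟪a, contactPoint L x ν β - x⟫_ℝ) :=
    Tendsto.inner hlim ((S.isStrictBody.tendsto_contactPoint hν hβ hUx tendsto_const_nhds
      tendsto_const_nhds).sub_const x)
  refine tendsto_nhds_unique hinner (tendsto_const_nhds.congr' ?_)
  filter_upwards [hUzero, hUK, hν.eventually_of_tendsto S.isStrictBody.isCompact hUx
    tendsto_const_nhds] with y hy hyK hνy
  rw [← sub_add_sub_cancel _ y x, real_inner_smul_left, inner_add_right,
    S.inner_eq_one y hyK _ (S.isStrictBody.contactPoint_mem hνy hβ), hy, mul_zero]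

lemma inner_relNormal (hy : y ∈ frontier K) (h : 1 + ⟪n y, y - x⟫_ℝ ≠ 0)
    (hp : p ∈ contactSet L y) : ⟪relNormal n x y, p - x⟫_ℝ = 1 := by
  rw [relNormal, real_inner_smul_left, ← sub_add_sub_cancel p y x, inner_add_right,
    S.inner_eq_one y hy p hp, inv_mul_cancel₀ h]

variable {ι : Type*} {l : Filter ι} {ys zs τs : ι → E3} {ε : ι → ℝ}

lemma eventually_relNormal_ne (hx : x ∈ frontier K) (hν : StrictlySeparates L x ν) (hτ : τ ≠ 0)
    (hντ : ⟪τ, ν⟫_ℝ = 0) (hys : Tendsto ys l (𝓝[frontier K] x))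
    (hzs : Tendsto zs l (𝓝[frontier K] x)) (hε : ∀ᶠ i in l, ε i ≠ 0)
    (hsub : ∀ᶠ i in l, zs i - ys i = ε i • τs i) (hτs : Tendsto τs l (𝓝 τ)) :
    ∀ᶠ i in l, relNormal n x (ys i) ≠ relNormal n x (zs i) := by
  have hyK := hys.eventually eventually_mem_nhdsWithin
  have hzK := hzs.eventually eventually_mem_nhdsWithin
  have hyx := hys.mono_right nhdsWithin_le_nhds
  have hsep := hν.eventually_of_tendsto S.isStrictBody.isCompact hyx
    (tendsto_starProjection_orthogonal_singleton hτ hτs hντ)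
  filter_upwards [hys.eventually (S.eventually_one_add_inner_ne_zero hx),
    hzs.eventually (S.eventually_one_add_inner_ne_zero hx), hτs.eventually_ne hτ, hsep, hε, hsub,
    hyK, hzK] with i hy hz hτi hsepi hεi hi hyKi hzKi heq
  refine smul_ne_zero hεi hτi (hi ▸ sub_eq_zero.2 (S.eq_of_forall_inner_eq_one hyKi hzKi hsepi ?_
    fun p hp => ?_))
  · rw [hi, inner_smul_right, Submodule.mem_orthogonal_singleton_iff_inner_left.1
      (Submodule.starProjection_apply_mem _ _), mul_zero]
  · have hone := S.inner_relNormal hzKi hz hp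
    rw [← heq, relNormal, real_inner_smul_left, inv_mul_eq_one₀ hy, ← sub_add_sub_cancel p (ys i) x,
      inner_add_right] at hone
    linarith

/-- Consecutive planes through `ys i` and `zs i` share the contact points of the supporting planes
of `L` that contain both. -/
lemma inner_contactPoint_eq_zero_of_tendsto [l.NeBot] (hx : x ∈ frontier K)
    (hν : StrictlySeparates L x ν) (hτ : τ ≠ 0) (hντ : ⟪τ, ν⟫_ℝ = 0)
    (hys : Tendsto ys l (𝓝[frontier K] x)) (hzs : Tendsto zs l (𝓝[frontier K] x))
    (hsub : ∀ᶠ i in l, zs i - ys i = ε i • τs i) (hτs : Tendsto τs l (𝓝 τ)) {c : ι → ℝ}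
    (hv : Tendsto (fun i => c i • (relNormal n x (ys i) - relNormal n x (zs i))) l (𝓝 v))
    (hβ0 : β ≠ 0) (hβν : ⟪ν, β⟫_ℝ = 0) (hβτ : ⟪τ, β⟫_ℝ = 0) :
    ⟪v, contactPoint L x ν β - x⟫_ℝ = 0 := by
  have hyx := hys.mono_right nhdsWithin_le_nhds
  set νs := fun i => (ℝ ∙ τs i)ᗮ.starProjection ν
  set βs := fun i => (ℝ ∙ τs i)ᗮ.starProjection β
  have hνs : Tendsto νs l (𝓝 ν) := tendsto_starProjection_orthogonal_singleton hτ hτs hντ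
  have hβs : Tendsto βs l (𝓝 β) := tendsto_starProjection_orthogonal_singleton hτ hτs hβτ
  have hβspan := notMem_span_singleton_of_inner_eq_zero hβ0 hβν
  refine tendsto_nhds_unique (hv.inner ((S.isStrictBody.tendsto_contactPoint hν hβspan hyx hνs
    hβs).sub_const x)) (tendsto_const_nhds.congr' ?_)
  have hind : ∀ᶠ i in l, LinearIndependent ℝ ![νs i, βs i] :=
    (tendsto_pi_nhds.2 (Fin.forall_fin_two.2 ⟨hνs, hβs⟩)).eventually
      (isOpen_setOfPred_linearIndependent.mem_nhds ((LinearIndependent.pair_iff'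
        (hν.ne_zero S.isStrictBody.nonempty)).2 fun a ha =>
          hβspan (Submodule.mem_span_singleton.2 ⟨a, ha⟩)))
  filter_upwards [hys.eventually (S.eventually_one_add_inner_ne_zero hx),
    hzs.eventually (S.eventually_one_add_inner_ne_zero hx),
    hν.eventually_of_tendsto S.isStrictBody.isCompact hyx hνs, hsub, hind,
    hys.eventually eventually_mem_nhdsWithin, hzs.eventually eventually_mem_nhdsWithin]
    with i hy hz hsep hi hindi hyK hzK
  obtain ⟨m, hm⟩ := S.isStrictBody.supportsAt_contactPoint hsep (βs i)
  have hm0 : βs i - m • νs i ≠ 0 := fun h0 => one_ne_zero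
    (LinearIndependent.pair_iff.1 hindi (-m) 1 (by rw [← h0]; module)).2
  have hmz : SupportsAt L (zs i) (βs i - m • νs i) (contactPoint L (ys i) (νs i) (βs i)) := by
    have horth : ⟪βs i - m • νs i, zs i - ys i⟫_ℝ = 0 := by
      rw [hi, inner_smul_right, Submodule.mem_orthogonal_singleton_iff_inner_left.1
        (sub_mem (Submodule.starProjection_apply_mem _ _)
          (Submodule.smul_mem _ _ (Submodule.starProjection_apply_mem _ _))), mul_zero]
    have hapex : ∀ q, ⟪βs i - m • νs i, q - zs i⟫_ℝ = ⟪βs i - m • νs i, q - ys i⟫_ℝ := fun q => by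
      rw [← sub_sub_sub_cancel_right q (zs i) (ys i), inner_sub_right, horth, sub_zero]
    exact ⟨hm.mem, (hapex _).trans hm.inner_eq_zero, fun q hq => hapex q ▸ hm.inner_nonneg q hq⟩
  rw [real_inner_smul_left, inner_sub_left, S.inner_relNormal hyK hy (hm.mem_contactSet hm0),
    S.inner_relNormal hzK hz (hmz.mem_contactSet hm0), sub_self, mul_zero]

end AlmostFreePair

end RelNormal

section ChordNormals

variable {E : Type*} [NormedAddCommGroup E] [InnerProductSpace ℝ E] {L : Set E} {x κ β β' v n : E}

/-- The vectors orthogonal to the lines from `x` to the two points at which `L` touches its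
supporting planes through `x` with normals in the half-planes of `span {κ, β}` bounded by `ℝκ`. -/
def chordNormals (L : Set E) (x κ β : E) : Submodule ℝ E :=
  (ℝ ∙ (contactPoint L x κ β - x))ᗮ ⊓ (ℝ ∙ (contactPoint L x κ (-β) - x))ᗮ

lemma mem_chordNormals : v ∈ chordNormals L x κ β ↔
    ⟪v, contactPoint L x κ β - x⟫_ℝ = 0 ∧ ⟪v, contactPoint L x κ (-β) - x⟫_ℝ = 0 := by
  rw [chordNormals, Submodule.mem_inf, Submodule.mem_orthogonal_singleton_iff_inner_left,
    Submodule.mem_orthogonal_singleton_iff_inner_left]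

lemma isClosed_chordNormals : IsClosed (chordNormals L x κ β : Set E) :=
  (Submodule.isClosed_orthogonal _).inter (Submodule.isClosed_orthogonal _)

lemma chordNormals_neg : chordNormals L x κ (-β) = chordNormals L x κ β := by
  rw [chordNormals, chordNormals, neg_neg, inf_comm]

lemma IsStrictBody.chordNormals_smul (hL : IsStrictBody L) (hκ : StrictlySeparates L x κ)
    (hβ : β ∉ ℝ ∙ κ) {s : ℝ} (hs : s ≠ 0) :
    chordNormals L x κ (s • β) = chordNormals L x κ β := by
  wlog hpos : 0 < s generalizing s
  · rw [← chordNormals_neg, ← neg_smul]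
    exact this (neg_ne_zero.2 hs) (neg_pos.2 (hs.lt_of_le (not_lt.1 hpos)))
  rw [chordNormals, chordNormals, ← smul_neg, hL.contactPoint_smul hκ hβ hpos,
    hL.contactPoint_smul hκ (by rwa [neg_mem_iff]) hpos]

lemma IsStrictBody.disjoint_chordNormals (hL : IsStrictBody L) (hE : Module.finrank ℝ E = 3)
    (hκ : StrictlySeparates L x κ) (hn : ∀ p ∈ contactSet L x, ⟪n, p - x⟫_ℝ = 1) (hβ : β ∉ ℝ ∙ κ)
    (hβ' : β' ∉ ℝ ∙ κ) (h : contactPoint L x κ β' ≠ contactPoint L x κ β)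
    (h' : contactPoint L x κ β' ≠ contactPoint L x κ (-β)) :
    Disjoint (chordNormals L x κ β) (chordNormals L x κ β') := by
  rw [Submodule.disjoint_def]
  intro v hv hv'
  have hmem := hL.contactPoint_mem hκ hβ
  have hinj : Function.Injective
      ![contactPoint L x κ β, contactPoint L x κ (-β), contactPoint L x κ β'] := by
    intro i j hij
    have hneg := hL.contactPoint_ne_contactPoint_neg hκ hβ
    fin_cases i <;> fin_cases j <;>
      simp_all [h.symm, h'.symm, hneg.symm]
  have hv0 : ∀ q ∈ contactSet L x, ⟪v, q⟫_ℝ = ⟪v, x⟫_ℝ := by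
    refine inner_eq_on_contactSet_of_three hL hE hn (Fin.forall_fin_succ.2 ⟨hmem,
      Fin.forall_fin_two.2 ⟨hL.contactPoint_mem hκ (by rwa [neg_mem_iff]),
        hL.contactPoint_mem hκ hβ'⟩⟩) hinj
      (Fin.forall_fin_succ.2 ⟨?_, Fin.forall_fin_two.2 ⟨?_, ?_⟩⟩)
    · exact sub_eq_zero.1 ((inner_sub_right _ _ _).symm.trans (mem_chordNormals.1 hv).1)
    · exact sub_eq_zero.1 ((inner_sub_right _ _ _).symm.trans (mem_chordNormals.1 hv).2)
    · exact sub_eq_zero.1 ((inner_sub_right _ _ _).symm.trans (mem_chordNormals.1 hv').1)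
  exact hL.eq_zero_of_inner_contactSet_eq_zero hκ ⟨_, hmem⟩ fun q hq => by
    rw [inner_sub_right, hv0 q hq, sub_self]

lemma IsStrictBody.mem_chordNormals_of_tendsto {ι : Type*} {l : Filter ι} [l.NeBot] {βs vs : ι → E}
    (hL : IsStrictBody L) (hκ : StrictlySeparates L x κ) (hβ : β ∉ ℝ ∙ κ)
    (hβs : Tendsto βs l (𝓝 β)) (hvs : Tendsto vs l (𝓝 v))
    (h : ∀ᶠ i in l, vs i ∈ chordNormals L x κ (βs i)) : v ∈ chordNormals L x κ β := by
  have hlim : ∀ {γs : ι → E} {γ : E}, γ ∉ ℝ ∙ κ → Tendsto γs l (𝓝 γ) →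
      (∀ᶠ i in l, ⟪vs i, contactPoint L x κ (γs i) - x⟫_ℝ = 0) →
      ⟪v, contactPoint L x κ γ - x⟫_ℝ = 0 := fun hγ hγs hzero =>
    tendsto_nhds_unique (hvs.inner ((hL.tendsto_contactPoint hκ hγ tendsto_const_nhds
      tendsto_const_nhds hγs).sub_const x))
      (tendsto_const_nhds.congr' (hzero.mono fun _ => Eq.symm))
  exact mem_chordNormals.2 ⟨hlim hβ hβs (h.mono fun _ hi => (mem_chordNormals.1 hi).1),
    hlim (by rwa [neg_mem_iff]) hβs.neg (h.mono fun _ hi => (mem_chordNormals.1 hi).2)⟩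

end ChordNormals

section BlowUp

lemma notMem_span_singleton_of_mem_orthogonal {E : Type*} [NormedAddCommGroup E]
    [InnerProductSpace ℝ E] {κ : E} {β : (ℝ ∙ κ)ᗮ} (hβ : β ≠ 0) : (β : E) ∉ ℝ ∙ κ :=
  notMem_span_singleton_of_inner_eq_zero (by simpa using hβ)
    (Submodule.mem_orthogonal_singleton_iff_inner_right.1 β.2)

lemma inner_map_I_mul_map {F : Type*} [NormedAddCommGroup F] [InnerProductSpace ℝ F]
    (J : ℂ ≃ₗᵢ[ℝ] F) (w : ℂ) : ⟪J (Complex.I * w), J w⟫_ℝ = 0 := by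
  rw [J.inner_map_map, Complex.inner]
  simp only [map_mul, Complex.conj_I, neg_mul, mul_neg, Complex.neg_re, Complex.mul_re,
    Complex.I_re, Complex.conj_re, zero_mul, Complex.I_im, Complex.conj_im, one_mul,
    sub_neg_eq_add, zero_add, Complex.mul_im, neg_zero, neg_sub]
  ring

namespace AlmostFreePair

variable {K L : Set E3} {n : E3 → E3} {x ν v : E3} {r : ℝ} {J : ℂ ≃ₗᵢ[ℝ] (ℝ ∙ ν)ᗮ}
  (S : AlmostFreePair K L n)
include S

lemma mem_chordNormals_of_tendsto_smul_sub_relNormal {l : Filter ℝ} [l.NeBot]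
    (h : InnerTangentBall K x ν r) (hl : l ≤ 𝓝[>] 0) {w w' : ℂ} (hw : w ≠ w') {g g' : ℝ → E3}
    (hg : Tendsto g l (𝓝 (J (Complex.I * w)))) (hg' : Tendsto g' l (𝓝 (J (Complex.I * w'))))
    (hgx : Tendsto (fun t => x + t • g t) l (𝓝[frontier K] x))
    (hgx' : Tendsto (fun t => x + t • g' t) l (𝓝[frontier K] x)) :
    (∀ᶠ t in l, relNormal n x (x + t • g t) ≠ relNormal n x (x + t • g' t)) ∧
    ∀ {c : ℝ → ℝ} {v : E3}, Tendsto
      (fun t => c t • (relNormal n x (x + t • g t) - relNormal n x (x + t • g' t))) l (𝓝 v) →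
      v ∈ chordNormals L x ν (J (w - w')) := by
  have hν := h.strictlySeparates S.subset_interior
  have hd : w' - w ≠ 0 := sub_ne_zero.2 hw.symm
  have hτ : (J (Complex.I * (w' - w)) : E3) ≠ 0 := by simpa using hd
  have hβ : (J (w - w') : E3) ≠ 0 := by simpa [sub_eq_zero] using hw
  have hβτ : ⟪(J (Complex.I * (w' - w)) : E3), (J (w - w') : E3)⟫_ℝ = 0 := by
    rw [← neg_sub w' w, map_neg, NegMemClass.coe_neg, inner_neg_right, neg_eq_zero]
    exact inner_map_I_mul_map J _
  have horth : ∀ u, ⟪ν, (J u : E3)⟫_ℝ = 0 := fun u =>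
    Submodule.mem_orthogonal_singleton_iff_inner_right.1 (J u).2
  have hντ : ⟪(J (Complex.I * (w' - w)) : E3), ν⟫_ℝ = 0 := real_inner_comm _ ν ▸ horth _
  have hsub : ∀ᶠ t in l, x + t • g' t - (x + t • g t) = t • (g' t - g t) :=
    .of_forall fun t => by module
  have hlim : Tendsto (fun t => g' t - g t) l (𝓝 (J (Complex.I * (w' - w)))) := by
    rw [mul_sub, map_sub, AddSubgroupClass.coe_sub]
    exact hg'.sub hg
  refine ⟨S.eventually_relNormal_ne h.mem_frontier hν hτ hντ hgx hgx' ?_ hsub hlim, fun hv => ?_⟩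
  · exact hl (eventually_mem_nhdsWithin.mono fun t ht => (mem_Ioi.1 ht).ne')
  · exact mem_chordNormals.2
      ⟨S.inner_contactPoint_eq_zero_of_tendsto h.mem_frontier hν hτ hντ hgx hgx' hsub hlim hv hβ
          (horth _) hβτ,
        S.inner_contactPoint_eq_zero_of_tendsto h.mem_frontier hν hτ hντ hgx hgx' hsub hlim hv
          (neg_ne_zero.2 hβ) (by rw [inner_neg_right, horth, neg_zero])
          (by rw [inner_neg_right, hβτ, neg_zero])⟩

/-- Blow-up of the graze planes at `x`: the normals of the planes from boundary points approaching
`x` in the directions `J (i w)` are translated to vanish for `w i₀` and rescaled to norm `1`. -/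
lemma exists_forall_sub_mem_chordNormals (h : InnerTangentBall K x ν r) {ι : Type*} [Finite ι]
    [Nontrivial ι] {w : ι → ℂ} (hw : Function.Injective w) (i₀ : ι) :
    ∃ u : ι → E3, u ≠ 0 ∧ u i₀ = 0 ∧
      ∀ i j, u i - u j ∈ chordNormals L x ν (J (w i - w j)) := by
  cases nonempty_fintype ι
  have hcurve : ∀ i, ∃ g : ℝ → E3, Tendsto g (𝓝[>] 0) (𝓝 (J (Complex.I * w i))) ∧
      ∀ᶠ t in 𝓝[>] 0, x + t • g t ∈ frontier K := fun i =>
    h.exists_tendsto_forall_add_smul_mem_frontier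
      (Submodule.mem_orthogonal_singleton_iff_inner_right.1 (J (Complex.I * w i)).2)
  choose g hg hgK using hcurve
  set U := Ultrafilter.of (𝓝[>] (0 : ℝ))
  have hU : (U : Filter ℝ) ≤ 𝓝[>] 0 := Ultrafilter.of_le _
  have hgx : ∀ i, Tendsto (fun t => x + t • g i t) U (𝓝[frontier K] x) := fun i => by
    refine tendsto_nhdsWithin_iff.2 ⟨?_, hU (hgK i)⟩
    have hid : Tendsto (fun t : ℝ => t) U (𝓝 0) := hU.trans nhdsWithin_le_nhds
    simpa using (hid.smul ((hg i).mono_left hU)).const_add x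
  have hpair := fun i j (hij : i ≠ j) =>
    S.mem_chordNormals_of_tendsto_smul_sub_relNormal h hU (hw.ne hij) ((hg i).mono_left hU)
      ((hg j).mono_left hU) (hgx i) (hgx j)
  set D : ℝ → ι → E3 := fun t i => relNormal n x (x + t • g i t) - relNormal n x (x + t • g i₀ t)
  obtain ⟨i₁, hi₁⟩ := exists_ne i₀
  have hD : ∀ᶠ t in (U : Filter ℝ), D t ≠ 0 := (hpair i₁ i₀ hi₁).1.mono fun t ht h0 =>
    ht (sub_eq_zero.1 (congrFun h0 i₁))
  obtain ⟨u, hu, hlim⟩ := (isCompact_sphere (0 : ι → E3) 1).ultrafilter_le_nhds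
    (U.map fun t => ‖D t‖⁻¹ • D t) (le_principal_iff.2 (hD.mono fun t ht =>
      mem_sphere_zero_iff_norm.2 (norm_smul_inv_norm (𝕜 := ℝ) ht)))
  have hcoord : ∀ i, Tendsto (fun t => ‖D t‖⁻¹ • D t i) U (𝓝 (u i)) := tendsto_pi_nhds.1 hlim
  refine ⟨u, ne_zero_of_mem_unit_sphere ⟨u, hu⟩, ?_, fun i j => ?_⟩
  · exact tendsto_nhds_unique (hcoord i₀) (by simp [D])
  · rcases eq_or_ne i j with rfl | hij
    · simp
    · refine (hpair i j hij).2 (c := fun t => ‖D t‖⁻¹)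
        (((hcoord i).sub (hcoord j)).congr fun t => ?_)
      rw [← smul_sub, sub_sub_sub_cancel_right]

end AlmostFreePair

end BlowUp

section Grid

variable {G : Type*} [AddCommGroup G] {A B C : AddSubgroup G} {M : ℕ}

lemma eq_nsmul_of_step_mem (hAC : Disjoint A C) {a : ℕ → G} (h0 : a 0 = 0)
    (hA : ∀ i < M, a (i + 1) - a i ∈ A) (c : G) (hC : ∀ i < M, a (i + 1) - a i + c ∈ C) :
    ∀ i ≤ M, a i = i • a 1 := by
  intro i
  induction i with
  | zero => simp [h0]
  | succ i ih =>
    intro hi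
    have hM : 0 < M := by omega
    have hzero := AddSubgroup.disjoint_def.1 hAC (sub_mem (hA i hi) (hA 0 hM))
      (by simpa using sub_mem (hC i hi) (hC 0 hM))
    rw [h0, sub_zero, ih (by omega), sub_sub, sub_eq_zero] at hzero
    rw [hzero, succ_nsmul, zero_add]

/-- The mixed second differences of `u` lie in `A ⊓ B`, and the pure ones in `A ⊓ C` and `B ⊓ C`. -/
lemma eq_nsmul_add_nsmul_of_grid (hAB : Disjoint A B) (hAC : Disjoint A C) (hBC : Disjoint B C)
    {u : ℕ → ℕ → G} (h0 : u 0 0 = 0) (hA : ∀ i ≤ M, ∀ i' ≤ M, ∀ j ≤ M, u i j - u i' j ∈ A)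
    (hB : ∀ i ≤ M, ∀ j ≤ M, ∀ j' ≤ M, u i j - u i j' ∈ B)
    (hC : ∀ i < M, ∀ j < M, u (i + 1) (j + 1) - u i j ∈ C) :
    ∀ i ≤ M, ∀ j ≤ M, u i j = i • u 1 0 + j • u 0 1 := by
  have hsplit : ∀ i ≤ M, ∀ j ≤ M, u i j = u i 0 + u 0 j := by
    intro i hi j hj
    have hmemA := sub_mem (hA i hi 0 M.zero_le j hj) (hA i hi 0 M.zero_le 0 M.zero_le)
    have hmemB := sub_mem (hB i hi j hj 0 M.zero_le) (hB 0 M.zero_le j hj 0 M.zero_le)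
    rw [h0, sub_zero] at hmemA hmemB
    rw [sub_right_comm] at hmemA
    have hzero := AddSubgroup.disjoint_def.1 hAB hmemA hmemB
    rwa [sub_sub, sub_eq_zero] at hzero
  have hstep : ∀ i < M, ∀ j < M, u (i + 1) 0 - u i 0 + (u 0 (j + 1) - u 0 j) ∈ C := by
    intro i hi j hj
    have hmem := hC i hi j hj
    rw [hsplit _ hi _ hj, hsplit _ hi.le _ hj.le] at hmem
    convert hmem using 1
    abel
  intro i hi j hj
  rw [hsplit i hi j hj]
  rcases M.eq_zero_or_pos with rfl | hM
  · obtain rfl := Nat.le_zero.1 hi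
    obtain rfl := Nat.le_zero.1 hj
    simp [h0]
  · rw [eq_nsmul_of_step_mem hAC (a := fun i => u i 0) h0
        (fun i hi => hA _ hi _ hi.le 0 M.zero_le) _ (fun i hi => hstep i hi 0 hM) i hi,
      eq_nsmul_of_step_mem hBC (a := u 0) h0 (fun j hj => hB 0 M.zero_le _ hj _ hj.le) _
        (fun j hj => by rw [add_comm]; exact hstep 0 hM j hj) j hj]

end Grid

lemma linearIndependent_pair_of_disjoint {𝕜 V : Type*} [Field 𝕜] [AddCommGroup V] [Module 𝕜 V]
    {A B C : Submodule 𝕜 V} (hAB : Disjoint A B) (hAC : Disjoint A C) (hBC : Disjoint B C)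
    {a b : V} (ha : a ∈ A) (hb : b ∈ B) (hab : a + b ∈ C) (hne : (a, b) ≠ 0) :
    LinearIndependent 𝕜 ![a, b] := by
  have hb0 : a = 0 → b ≠ 0 := by
    rintro rfl rfl
    exact hne rfl
  have ha' : a ≠ 0 := by
    rintro rfl
    exact hb0 rfl (Submodule.disjoint_def.1 hBC b hb (by rwa [zero_add] at hab))
  rw [LinearIndependent.pair_iff' ha']
  rintro c rfl
  have hb' := Submodule.disjoint_def.1 hAB _ (A.smul_mem c ha) hb
  rw [hb', add_zero] at hab
  exact ha' (Submodule.disjoint_def.1 hAC a ha hab)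

lemma exists_ne_zero_smul_add_smul_eq {𝕜 V : Type*} [Field 𝕜] [AddCommGroup V] [Module 𝕜 V]
    (hV : Module.finrank 𝕜 V = 2) {u v w : V} (huv : LinearIndependent 𝕜 ![u, v])
    (huw : LinearIndependent 𝕜 ![u, w]) (hvw : LinearIndependent 𝕜 ![v, w]) :
    ∃ a : 𝕜, a ≠ 0 ∧ ∃ b : 𝕜, b ≠ 0 ∧ a • u + b • v = w := by
  have hmem : w ∈ Submodule.span 𝕜 (range ![u, v]) := by
    rw [huv.span_eq_top_of_card_eq_finrank (by simp [hV])]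
    exact Submodule.mem_top
  rw [Matrix.range_cons_cons_empty] at hmem
  obtain ⟨a, b, hab⟩ := Submodule.mem_span_pair.1 hmem
  refine ⟨a, ?_, b, ?_, hab⟩ <;> rintro rfl
  · rw [zero_smul, zero_add] at hab
    exact (LinearIndependent.pair_iff' (huv.ne_zero 1)).1 hvw b hab
  · rw [zero_smul, add_zero] at hab
    exact (LinearIndependent.pair_iff' (huv.ne_zero 0)).1 huw a hab

section LinearExtension

lemma IsStrictBody.linearIndependent_of_contactPoint_ne {E : Type*} [NormedAddCommGroup E]
    [InnerProductSpace ℝ E] {L : Set E} {x κ β β' : E} (hL : IsStrictBody L)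
    (hκ : StrictlySeparates L x κ) (hβ : β ∉ ℝ ∙ κ) (hβ' : β' ∉ ℝ ∙ κ)
    (h : contactPoint L x κ β' ≠ contactPoint L x κ β)
    (h' : contactPoint L x κ β' ≠ contactPoint L x κ (-β)) : LinearIndependent ℝ ![β, β'] := by
  have hβ0 : β ≠ 0 := by
    rintro rfl
    exact hβ (zero_mem _)
  rw [LinearIndependent.pair_iff' hβ0]
  rintro c rfl
  have hc : c ≠ 0 := fun h0 => hβ' (by rw [h0, zero_smul]; exact zero_mem _)
  exact (hL.contactPoint_smul_eq_or hκ hβ hc).elim h h'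

variable {K L : Set E3} {n : E3 → E3} {x ν : E3} {r : ℝ} {J : ℂ ≃ₗᵢ[ℝ] (ℝ ∙ ν)ᗮ} {e₁ e₂ : ℂ}

lemma IsStrictBody.exists_contactPoint_notMem (hL : IsStrictBody L)
    (hν : StrictlySeparates L x ν) (J : ℂ ≃ₗᵢ[ℝ] (ℝ ∙ ν)ᗮ) {s : Set E3} (hs : s.Finite) :
    ∃ w ≠ 0, contactPoint L x ν (J w) ∉ s := by
  obtain ⟨p, hp, hps⟩ := (hL.infinite_contactSet hν (by simp)).exists_notMem_finite hs
  obtain ⟨β, hβ0, hβν, rfl⟩ := hL.exists_eq_contactPoint hν hp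
  obtain ⟨w, hw⟩ := J.surjective ⟨β, Submodule.mem_orthogonal_singleton_iff_inner_right.2 hβν⟩
  refine ⟨w, ?_, by rwa [hw]⟩
  rintro rfl
  exact hβ0 (by simpa using congrArg Subtype.val hw.symm)

/-- Three directions with pairwise different contact chords, scaled so that one is the sum of the
other two. -/
lemma IsStrictBody.exists_disjoint_chordNormals (hL : IsStrictBody L)
    (hν : StrictlySeparates L x ν) {m : E3} (hm : ∀ p ∈ contactSet L x, ⟪m, p - x⟫_ℝ = 1)
    (J : ℂ ≃ₗᵢ[ℝ] (ℝ ∙ ν)ᗮ) : ∃ e₁ e₂ : ℂ, LinearIndependent ℝ ![e₁, e₂] ∧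
      Disjoint (chordNormals L x ν (J e₁)) (chordNormals L x ν (J e₂)) ∧
      Disjoint (chordNormals L x ν (J e₁)) (chordNormals L x ν (J (e₁ + e₂))) ∧
      Disjoint (chordNormals L x ν (J e₂)) (chordNormals L x ν (J (e₁ + e₂))) := by
  have hspan : ∀ {u : ℂ}, u ≠ 0 → (J u : E3) ∉ ℝ ∙ ν := fun hu =>
    notMem_span_singleton_of_mem_orthogonal (by simpa using hu)
  have hpair : ∀ {u v : ℂ}, u ≠ 0 → v ≠ 0 → contactPoint L x ν (J v) ≠ contactPoint L x ν (J u) →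
      contactPoint L x ν (J v) ≠ contactPoint L x ν (-J u) → LinearIndependent ℝ ![u, v] ∧
        Disjoint (chordNormals L x ν (J u)) (chordNormals L x ν (J v)) := fun hu hv h h' =>
    ⟨.of_comp ((ℝ ∙ ν)ᗮ.subtype ∘ₗ J.toLinearEquiv.toLinearMap) (by
      convert hL.linearIndependent_of_contactPoint_ne hν (hspan hu) (hspan hv) h h' using 1
      ext i : 1
      fin_cases i <;> rfl),
      hL.disjoint_chordNormals (by simp) hν hm (hspan hu) (hspan hv) h h'⟩
  obtain ⟨v, hv, hvu⟩ := hL.exists_contactPoint_notMem hν J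
    (Set.toFinite {contactPoint L x ν (J 1), contactPoint L x ν (-J 1)})
  obtain ⟨w, hw, hwuv⟩ := hL.exists_contactPoint_notMem hν J
    (Set.toFinite {contactPoint L x ν (J 1), contactPoint L x ν (-J 1),
      contactPoint L x ν (J v), contactPoint L x ν (-J v)})
  simp only [mem_insert_iff, mem_singleton_iff, not_or] at hvu hwuv
  obtain ⟨huv, hduv⟩ := hpair one_ne_zero hv hvu.1 hvu.2
  obtain ⟨huw, hduw⟩ := hpair one_ne_zero hw hwuv.1 hwuv.2.1
  obtain ⟨hvw, hdvw⟩ := hpair hv hw hwuv.2.2.1 hwuv.2.2.2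
  obtain ⟨a, ha, b, hb, hab⟩ :=
    exists_ne_zero_smul_add_smul_eq Complex.finrank_real_complex huv huw hvw
  refine ⟨a • 1, b • v, ?_, ?_⟩
  · convert huv.units_smul ![.mk0 a ha, .mk0 b hb] using 1
    ext i : 1
    fin_cases i <;> rfl
  · rw [hab]
    simp only [map_smul, Submodule.coe_smul,
      hL.chordNormals_smul hν (hspan one_ne_zero) ha, hL.chordNormals_smul hν (hspan hv) hb]
    exact ⟨hduv, hduw, hdvw⟩

lemma tendsto_floor_natCast_mul_div (s : ℝ) :
    Tendsto (fun N : ℕ => (⌊N * s⌋ : ℝ) / N) atTop (𝓝 s) := by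
  have hlow : Tendsto (fun N : ℕ => s - 1 / (N : ℝ)) atTop (𝓝 s) := by
    simpa using tendsto_const_nhds.sub (tendsto_one_div_atTop_nhds_zero_nat (𝕜 := ℝ))
  refine tendsto_of_tendsto_of_tendsto_of_le_of_le' hlow tendsto_const_nhds ?_ ?_ <;>
    filter_upwards [eventually_gt_atTop 0] with N hN <;>
    have hN' : (0 : ℝ) < N := Nat.cast_pos.2 hN
  · rw [le_div_iff₀ hN', sub_mul, one_div_mul_cancel hN'.ne', mul_comm s]
    exact (Int.sub_one_lt_floor _).le
  · rw [div_le_iff₀ hN', mul_comm s]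
    exact Int.floor_le _

lemma IsStrictBody.map_mem_chordNormals_of_int (hL : IsStrictBody L)
    (hν : StrictlySeparates L x ν) (he : LinearIndependent ℝ ![e₁, e₂]) {Φ : ℂ →ₗ[ℝ] E3}
    (hΦ : ∀ p q : ℤ, Φ (p • e₁ + q • e₂) ∈ chordNormals L x ν (J (p • e₁ + q • e₂)))
    {u : ℂ} (hu : u ≠ 0) : Φ u ∈ chordNormals L x ν (J u) := by
  have hspan : ∀ {u : ℂ}, u ≠ 0 → (J u : E3) ∉ ℝ ∙ ν := fun hu =>
    notMem_span_singleton_of_mem_orthogonal (by simpa using hu)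
  set b : Module.Basis (Fin 2) ℝ ℂ := basisOfLinearIndependentOfCardEqFinrank he (by simp)
  have hb : ⇑b = ![e₁, e₂] := coe_basisOfLinearIndependentOfCardEqFinrank he _
  set p : ℕ → Fin 2 → ℤ := fun N i => ⌊N * b.repr u i⌋
  have hlim : Tendsto (fun N : ℕ => ((p N 0 : ℝ) / N) • e₁ + ((p N 1 : ℝ) / N) • e₂) atTop
      (𝓝 u) := by
    have hsum := ((tendsto_floor_natCast_mul_div (b.repr u 0)).smul_const e₁).add
      ((tendsto_floor_natCast_mul_div (b.repr u 1)).smul_const e₂)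
    have hu := b.sum_repr u
    rw [hb, Fin.sum_univ_two] at hu
    rwa [show b.repr u 0 • e₁ + b.repr u 1 • e₂ = u from hu] at hsum
  refine hL.mem_chordNormals_of_tendsto hν (hspan hu)
    ((continuous_subtype_val.comp J.continuous).tendsto u |>.comp hlim)
    ((Φ.continuous_of_finiteDimensional.tendsto u).comp hlim) ?_
  filter_upwards [eventually_gt_atTop 0, hlim.eventually_ne hu] with N hN hne
  have hscale : ((p N 0 : ℝ) / N) • e₁ + ((p N 1 : ℝ) / N) • e₂ =
      (N : ℝ)⁻¹ • (p N 0 • e₁ + p N 1 • e₂) := by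
    simp only [div_eq_inv_mul, smul_add, mul_smul, Int.cast_smul_eq_zsmul]
  have hne' : p N 0 • e₁ + p N 1 • e₂ ≠ 0 := fun h0 => hne (by rw [hscale, h0, smul_zero])
  rw [Function.comp_apply, Function.comp_apply, Function.comp_apply, hscale, map_smul, map_smul,
    Submodule.coe_smul,
    hL.chordNormals_smul hν (hspan hne') (inv_ne_zero (Nat.cast_ne_zero.2 hN.ne'))]
  exact Submodule.smul_mem _ _ (hΦ _ _)

lemma IsStrictBody.eq_nsmul_add_nsmul_of_forall_sub_mem_chordNormals (hL : IsStrictBody L)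
    (hν : StrictlySeparates L x ν) (he : LinearIndependent ℝ ![e₁, e₂])
    (h₁₂ : Disjoint (chordNormals L x ν (J e₁)) (chordNormals L x ν (J e₂)))
    (h₁ : Disjoint (chordNormals L x ν (J e₁)) (chordNormals L x ν (J (e₁ + e₂))))
    (h₂ : Disjoint (chordNormals L x ν (J e₂)) (chordNormals L x ν (J (e₁ + e₂))))
    {M : ℕ} {u : ℕ → ℕ → E3} (hu0 : u 0 0 = 0)
    (hmem : ∀ i ≤ M, ∀ j ≤ M, ∀ i' ≤ M, ∀ j' ≤ M, u i j - u i' j' ∈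
      chordNormals L x ν (J (((i : ℤ) - i') • e₁ + ((j : ℤ) - j') • e₂))) :
    ∀ i ≤ M, ∀ j ≤ M, u i j = i • u 1 0 + j • u 0 1 := by
  have hzsmul : ∀ (c : ℤ) {e : ℂ}, e ≠ 0 → ∀ {y z : E3}, (c = 0 → y = z) →
      y - z ∈ chordNormals L x ν (J (c • e)) → y - z ∈ chordNormals L x ν (J e) := by
    intro c e he y z hyz hmem
    rcases eq_or_ne c 0 with rfl | hc
    · rw [hyz rfl, sub_self]
      exact Submodule.zero_mem _
    · rwa [← Int.cast_smul_eq_zsmul ℝ, map_smul, Submodule.coe_smul,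
        hL.chordNormals_smul hν
          (notMem_span_singleton_of_mem_orthogonal (by simpa using he))
          (Int.cast_ne_zero.2 hc)] at hmem
  have hdisj : ∀ {P Q : Submodule ℝ E3}, Disjoint P Q →
      Disjoint P.toAddSubgroup Q.toAddSubgroup := fun h =>
    AddSubgroup.disjoint_def.2 fun hP hQ => Submodule.disjoint_def.1 h _ hP hQ
  refine eq_nsmul_add_nsmul_of_grid (A := (chordNormals L x ν (J e₁)).toAddSubgroup)
    (B := (chordNormals L x ν (J e₂)).toAddSubgroup)
    (C := (chordNormals L x ν (J (e₁ + e₂))).toAddSubgroup)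
    (hdisj h₁₂) (hdisj h₁) (hdisj h₂) hu0 ?_ ?_ ?_
  · intro i hi i' hi' j hj
    refine hzsmul (i - i') (he.ne_zero 0) (fun h => ?_) ?_
    · rw [Int.natCast_inj.1 (sub_eq_zero.1 h)]
    · simpa using hmem i hi j hj i' hi' j hj
  · intro i hi j hj j' hj'
    refine hzsmul (j - j') (he.ne_zero 1) (fun h => ?_) ?_
    · rw [Int.natCast_inj.1 (sub_eq_zero.1 h)]
    · simpa using hmem i hi j hj i hi j' hj'
  · intro i hi j hj
    simpa using hmem (i + 1) hi (j + 1) hj i hi.le j hj.le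

namespace AlmostFreePair

variable (S : AlmostFreePair K L n)
include S

lemma exists_sub_mem_chordNormals_grid (h : InnerTangentBall K x ν r)
    (he : LinearIndependent ℝ ![e₁, e₂]) {M : ℕ} (hM : 0 < M) :
    ∃ u : ℕ → ℕ → E3, u 0 0 = 0 ∧ (∃ i ≤ M, ∃ j ≤ M, u i j ≠ 0) ∧
      ∀ i ≤ M, ∀ j ≤ M, ∀ i' ≤ M, ∀ j' ≤ M, u i j - u i' j' ∈
        chordNormals L x ν (J (((i : ℤ) - i') • e₁ + ((j : ℤ) - j') • e₂)) := by
  have : NeZero M := ⟨hM.ne'⟩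
  set w : Fin (M + 1) × Fin (M + 1) → ℂ := fun k => (k.1 : ℤ) • e₁ + (k.2 : ℤ) • e₂
  have hw : Function.Injective w := by
    intro k k' hk
    simp only [w, ← Int.cast_smul_eq_zsmul ℝ] at hk
    have hk' := he.eq_of_pair hk
    exact Prod.ext (Fin.ext (by exact_mod_cast hk'.1)) (Fin.ext (by exact_mod_cast hk'.2))
  obtain ⟨u, hu, hu0, hmem⟩ := S.exists_forall_sub_mem_chordNormals h hw 0
  refine ⟨fun i j => u (Fin.ofNat _ i, Fin.ofNat _ j), hu0, ?_, ?_⟩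
  · obtain ⟨k, hk⟩ := Function.ne_iff.1 hu
    exact ⟨k.1, k.1.is_le, k.2, k.2.is_le, by simpa using hk⟩
  · intro i hi j hj i' hi' j' hj'
    have hval : ∀ {i}, i ≤ M → (Fin.ofNat (M + 1) i : ℕ) = i := fun hi =>
      Nat.mod_eq_of_lt (Nat.lt_succ_of_le hi)
    convert hmem (Fin.ofNat _ i, Fin.ofNat _ j) (Fin.ofNat _ i', Fin.ofNat _ j') using 4
    simp only [w, hval hi, hval hj, hval hi', hval hj', sub_smul]
    abel

lemma exists_smul_add_smul_mem_chordNormals_of_natAbs_le (h : InnerTangentBall K x ν r)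
    (he : LinearIndependent ℝ ![e₁, e₂])
    (h₁₂ : Disjoint (chordNormals L x ν (J e₁)) (chordNormals L x ν (J e₂)))
    (h₁ : Disjoint (chordNormals L x ν (J e₁)) (chordNormals L x ν (J (e₁ + e₂))))
    (h₂ : Disjoint (chordNormals L x ν (J e₂)) (chordNormals L x ν (J (e₁ + e₂))))
    {M : ℕ} (hM : 0 < M) :
    ∃ a : E3 × E3, a ≠ 0 ∧ ∀ p q : ℤ, p.natAbs ≤ M → q.natAbs ≤ M →
      p • a.1 + q • a.2 ∈ chordNormals L x ν (J (p • e₁ + q • e₂)) := by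
  obtain ⟨u, hu0, ⟨i₀, hi₀, j₀, hj₀, hne⟩, hmem⟩ := S.exists_sub_mem_chordNormals_grid h he hM
  have hgrid := S.isStrictBody.eq_nsmul_add_nsmul_of_forall_sub_mem_chordNormals
    (h.strictlySeparates S.subset_interior) he h₁₂ h₁ h₂ hu0 hmem
  refine ⟨(u 1 0, u 0 1), ?_, fun p q hp hq => ?_⟩
  · intro ha
    rw [Prod.mk_eq_zero] at ha
    exact hne (by rw [hgrid i₀ hi₀ j₀ hj₀, ha.1, ha.2, smul_zero, smul_zero, add_zero])
  · have hmem' := hmem p.toNat (by omega) q.toNat (by omega) (-p).toNat (by omega)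
      (-q).toNat (by omega)
    rw [Int.toNat_sub_toNat_neg, Int.toNat_sub_toNat_neg,
      hgrid p.toNat (by omega) q.toNat (by omega),
      hgrid (-p).toNat (by omega) (-q).toNat (by omega)] at hmem'
    convert hmem' using 1
    nth_rw 1 [← Int.toNat_sub_toNat_neg p, ← Int.toNat_sub_toNat_neg q]
    simp only [sub_smul, natCast_zsmul]
    abel

lemma exists_smul_add_smul_mem_chordNormals_int (h : InnerTangentBall K x ν r)
    (he : LinearIndependent ℝ ![e₁, e₂])
    (h₁₂ : Disjoint (chordNormals L x ν (J e₁)) (chordNormals L x ν (J e₂)))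
    (h₁ : Disjoint (chordNormals L x ν (J e₁)) (chordNormals L x ν (J (e₁ + e₂))))
    (h₂ : Disjoint (chordNormals L x ν (J e₂)) (chordNormals L x ν (J (e₁ + e₂)))) :
    ∃ a : E3 × E3, a ≠ 0 ∧ ∀ p q : ℤ,
      p • a.1 + q • a.2 ∈ chordNormals L x ν (J (p • e₁ + q • e₂)) := by
  have hgrid := fun M : ℕ => S.exists_smul_add_smul_mem_chordNormals_of_natAbs_le h he h₁₂ h₁ h₂
    M.succ_pos
  choose a ha hmem using hgrid
  have hsmul : ∀ (M : ℕ) (p q : ℤ), p • (‖a M‖⁻¹ • a M).1 + q • (‖a M‖⁻¹ • a M).2 =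
      ‖a M‖⁻¹ • (p • (a M).1 + q • (a M).2) := fun M p q => by
    simp only [Prod.smul_fst, Prod.smul_snd, smul_add, smul_comm _ ‖a M‖⁻¹]
  have hnorm : ∀ M, ‖a M‖⁻¹ • a M ∈ sphere (0 : E3 × E3) 1 := fun M =>
    mem_sphere_zero_iff_norm.2 (norm_smul_inv_norm (𝕜 := ℝ) (ha M))
  obtain ⟨b, hb, hlim⟩ := (isCompact_sphere (0 : E3 × E3) 1).ultrafilter_le_nhds
    ((Ultrafilter.of atTop).map fun M => ‖a M‖⁻¹ • a M)
      (tendsto_principal.2 (.of_forall hnorm))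
  refine ⟨b, ne_zero_of_mem_unit_sphere ⟨b, hb⟩, fun p q => ?_⟩
  have hcont : Continuous fun a : E3 × E3 => p • a.1 + q • a.2 := by fun_prop
  refine isClosed_chordNormals.mem_of_tendsto ((hcont.tendsto b).comp hlim)
    (Ultrafilter.of_le atTop ?_)
  filter_upwards [eventually_ge_atTop (p.natAbs + q.natAbs)] with M hM
  change p • (‖a M‖⁻¹ • a M).1 + q • (‖a M‖⁻¹ • a M).2 ∈ chordNormals L x ν (J (p • e₁ + q • e₂))
  rw [hsmul]
  exact Submodule.smul_mem _ _ (hmem M p q (by omega) (by omega))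

lemma exists_injective_forall_inner_eq_zero (h : InnerTangentBall K x ν r)
    (J : ℂ ≃ₗᵢ[ℝ] (ℝ ∙ ν)ᗮ) : ∃ Φ : ℂ →ₗ[ℝ] E3, Function.Injective Φ ∧
      ∀ u, ⟪Φ u, contactPoint L x ν (J u) - x⟫_ℝ = 0 := by
  have hν := h.strictlySeparates S.subset_interior
  obtain ⟨e₁, e₂, he, h₁₂, h₁, h₂⟩ :=
    S.isStrictBody.exists_disjoint_chordNormals hν (S.inner_eq_one x h.mem_frontier) J
  obtain ⟨a, ha, hmem⟩ := S.exists_smul_add_smul_mem_chordNormals_int h he h₁₂ h₁ h₂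
  set b : Module.Basis (Fin 2) ℝ ℂ := basisOfLinearIndependentOfCardEqFinrank he (by simp)
  set Φ : ℂ →ₗ[ℝ] E3 := b.constr ℝ ![a.1, a.2]
  have hb : ⇑b = ![e₁, e₂] := coe_basisOfLinearIndependentOfCardEqFinrank he _
  have hΦ₁ : Φ e₁ = a.1 := by
    rw [← show b 0 = e₁ from congrFun hb 0, b.constr_basis, Matrix.cons_val_zero]
  have hΦ₂ : Φ e₂ = a.2 := by
    rw [← show b 1 = e₂ from congrFun hb 1, b.constr_basis, Matrix.cons_val_one,
      Matrix.cons_val_zero]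
  have hΦ : ∀ p q : ℤ, Φ (p • e₁ + q • e₂) ∈ chordNormals L x ν (J (p • e₁ + q • e₂)) := by
    intro p q
    convert hmem p q using 1
    simp only [map_add, map_zsmul, hΦ₁, hΦ₂]
  refine ⟨Φ, ?_, fun u => ?_⟩
  · exact b.injective_constr_of_linearIndependent (linearIndependent_pair_of_disjoint h₁₂ h₁ h₂
      (by simpa using hmem 1 0) (by simpa using hmem 0 1) (by simpa using hmem 1 1) ha)
  · rcases eq_or_ne u 0 with rfl | hu
    · rw [map_zero, inner_zero_left]
    · exact (mem_chordNormals.1 (S.isStrictBody.map_mem_chordNormals_of_int hν he hΦ hu)).1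

end AlmostFreePair

end LinearExtension

section SupportInequality

lemma hasDerivAt_of_eventually_le_of_le {f g h : ℝ → ℝ} {x D : ℝ} (hg : HasDerivAt g D x)
    (hh : HasDerivAt h D x) (hgf : ∀ᶠ y in 𝓝 x, g y ≤ f y) (hfh : ∀ᶠ y in 𝓝 x, f y ≤ h y)
    (hgx : g x = f x) (hhx : h x = f x) : HasDerivAt f D x := by
  rw [hasDerivAt_iff_isLittleO, Asymptotics.isLittleO_iff] at hg hh ⊢
  intro c hc
  filter_upwards [hg hc, hh hc, hgf, hfh] with y hgy hhy hgfy hfhy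
  simp only [smul_eq_mul, Real.norm_eq_abs, hgx, hhx] at hgy hhy ⊢
  rw [abs_le]
  constructor <;> linarith [abs_le.1 hgy, abs_le.1 hhy]

lemma forall_pos_of_mul_le_mul {X : Type*} [TopologicalSpace X] [PreconnectedSpace X] {l : X → ℝ}
    {Q : X → X → ℝ} (hl : Continuous l) (hQ : ∀ x, Continuous (Q x)) (hpos : ∀ x, 0 < Q x x)
    (hle : ∀ x y, l y * Q x y ≤ l x * Q x x) (hex : ∃ x, 0 < l x) (x : X) : 0 < l x := by
  have hopen : IsOpen {x | l x ≤ 0} := by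
    refine isOpen_iff_mem_nhds.2 fun x hx => ?_
    filter_upwards [(hQ x).continuousAt.eventually (lt_mem_nhds (hpos x))] with y hy
    exact nonpos_of_mul_nonpos_left
      ((hle x y).trans (mul_nonpos_of_nonpos_of_nonneg hx (hpos x).le)) hy
  rcases isClopen_iff.1 ⟨isClosed_le hl continuous_const, hopen⟩ with h | h
  · exact not_le.1 (eq_empty_iff_forall_notMem.1 h x)
  · obtain ⟨y, hy⟩ := hex
    exact absurd (h.ge (mem_univ y)) hy.not_ge

/-- `l y` is squeezed between `l θ * Q y θ / Q y y` and `l θ * Q θ θ / Q θ y`. -/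
lemma hasDerivAt_of_mul_le_mul {l : ℝ → ℝ} {Q : ℝ → ℝ → ℝ} {θ q₁ q₂ : ℝ}
    (hpos : ∀ x, 0 < Q x x) (hle : ∀ x y, l y * Q x y ≤ l x * Q x x)
    (h₁ : HasDerivAt (fun y => Q y θ) q₁ θ) (h₂ : HasDerivAt (Q θ) q₂ θ)
    (h : HasDerivAt (fun y => Q y y) (q₁ + q₂) θ) : HasDerivAt l (-(l θ * q₂ / Q θ θ)) θ := by
  have hne := (hpos θ).ne'
  have hlower : HasDerivAt (fun y => l θ * Q y θ / Q y y) (-(l θ * q₂ / Q θ θ)) θ := by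
    refine ((h₁.const_mul (l θ)).fun_div h hne).congr_deriv ?_
    field_simp
    ring
  have hupper : HasDerivAt (fun y => l θ * Q θ θ / Q θ y) (-(l θ * q₂ / Q θ θ)) θ := by
    refine ((hasDerivAt_const θ (l θ * Q θ θ)).fun_div h₂ hne).congr_deriv ?_
    field_simp
    ring
  refine hasDerivAt_of_eventually_le_of_le hlower hupper (.of_forall fun y => ?_) ?_
    (mul_div_cancel_right₀ _ hne) (mul_div_cancel_right₀ _ hne)
  · exact (div_le_iff₀ (hpos y)).2 (hle y θ)
  · filter_upwards [h₂.continuousAt.eventually (lt_mem_nhds (hpos θ))] with y hy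
    exact (le_div_iff₀ hy).2 (hle θ y)

end SupportInequality

section CircleQuadraticForm

variable {C : ℂ →L[ℝ] ℂ} {l : ℝ → ℝ}

lemma isSymmetric_of_inner_I_mul_eq {u : ℂ} (hu : u ≠ 0)
    (h : ⟪Complex.I * u, C u⟫_ℝ = ⟪u, C (Complex.I * u)⟫_ℝ) : (C : ℂ →ₗ[ℝ] ℂ).IsSymmetric := by
  have hrepr : ∀ x : ℂ, x = (x / u).re • u + (x / u).im • (Complex.I * u) := fun x => by
    nth_rewrite 1 [← div_mul_cancel₀ x hu, ← Complex.re_add_im (x / u)]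
    simp only [Complex.real_smul]
    ring
  intro x y
  rw [hrepr x, hrepr y]
  simp only [ContinuousLinearMap.coe_coe, map_add, map_smul, inner_add_left, inner_add_right,
    inner_smul_left, inner_smul_right, real_inner_comm _ (C _), conj_trivial, h]

lemma hasDerivAt_circleMap_zero_one (θ : ℝ) :
    HasDerivAt (circleMap 0 1) (Complex.I * circleMap 0 1 θ) θ := by
  simpa only [mul_comm] using hasDerivAt_circleMap 0 1 θ

lemma hasDerivAt_sq_mul_inner_circleMap
    (hpos : ∀ θ, 0 < ⟪circleMap 0 1 θ, C (circleMap 0 1 θ)⟫_ℝ)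
    (hle : ∀ θ θ', l θ' * ⟪circleMap 0 1 θ, C (circleMap 0 1 θ')⟫_ℝ
      ≤ l θ * ⟪circleMap 0 1 θ, C (circleMap 0 1 θ)⟫_ℝ) (θ : ℝ) :
    HasDerivAt (fun y => l y ^ 2 * ⟪circleMap 0 1 y, C (circleMap 0 1 y)⟫_ℝ)
      (l θ ^ 2 * (⟪Complex.I * circleMap 0 1 θ, C (circleMap 0 1 θ)⟫_ℝ
        - ⟪circleMap 0 1 θ, C (Complex.I * circleMap 0 1 θ)⟫_ℝ)) θ := by
  have hu := hasDerivAt_circleMap_zero_one θ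
  have hCu := C.hasFDerivAt.comp_hasDerivAt θ hu
  have h : HasDerivAt (fun y => ⟪circleMap 0 1 y, C (circleMap 0 1 y)⟫_ℝ)
      (⟪Complex.I * circleMap 0 1 θ, C (circleMap 0 1 θ)⟫_ℝ
        + ⟪circleMap 0 1 θ, C (Complex.I * circleMap 0 1 θ)⟫_ℝ) θ := by
    simpa only [add_comm, Function.comp_apply] using hu.inner ℝ hCu
  have hl := hasDerivAt_of_mul_le_mul
    (Q := fun y y' => ⟪circleMap 0 1 y, C (circleMap 0 1 y')⟫_ℝ) hpos hle
    (by simpa using hu.inner ℝ (hasDerivAt_const θ (C (circleMap 0 1 θ))))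
    (by simpa using (hasDerivAt_const θ (circleMap 0 1 θ)).inner ℝ hCu) h
  refine ((hl.fun_pow 2).fun_mul h).congr_deriv ?_
  have hne := (hpos θ).ne'
  field_simp
  push_cast
  ring

/-- By Rolle's theorem `C` is symmetric, and then the derivative of `l² ⟪u, C u⟫` vanishes. -/
lemma isSymmetric_and_exists_sq_mul_inner_circleMap_eq (hl : Continuous l)
    (hper : l (2 * Real.pi) = l 0)
    (hpos : ∀ θ, 0 < ⟪circleMap 0 1 θ, C (circleMap 0 1 θ)⟫_ℝ)
    (hle : ∀ θ θ', l θ' * ⟪circleMap 0 1 θ, C (circleMap 0 1 θ')⟫_ℝ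
      ≤ l θ * ⟪circleMap 0 1 θ, C (circleMap 0 1 θ)⟫_ℝ) (hex : ∃ θ, 0 < l θ) :
    (C : ℂ →ₗ[ℝ] ℂ).IsSymmetric ∧ (∀ θ, 0 < l θ) ∧
      ∃ k, ∀ θ, l θ ^ 2 * ⟪circleMap 0 1 θ, C (circleMap 0 1 θ)⟫_ℝ = k := by
  have hlpos : ∀ θ, 0 < l θ := forall_pos_of_mul_le_mul hl (fun θ => by fun_prop) hpos hle hex
  have hderiv := hasDerivAt_sq_mul_inner_circleMap hpos hle
  obtain ⟨ξ, -, hξ⟩ := exists_hasDerivAt_eq_zero Real.two_pi_pos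
    (fun θ _ => (hderiv θ).continuousAt.continuousWithinAt)
    (by simp only [hper, (periodic_circleMap 0 1).eq]) fun θ _ => hderiv θ
  have hsymm : (C : ℂ →ₗ[ℝ] ℂ).IsSymmetric :=
    isSymmetric_of_inner_I_mul_eq (circleMap_ne_center one_ne_zero)
      (sub_eq_zero.1 ((mul_eq_zero.1 hξ).resolve_left (pow_ne_zero 2 (hlpos ξ).ne')))
  refine ⟨hsymm, hlpos, _, fun θ => is_const_of_deriv_eq_zero
    (fun y => (hderiv y).differentiableAt) (fun y => ?_) θ 0⟩
  have hswap : ⟪C (Complex.I * circleMap 0 1 y), circleMap 0 1 y⟫_ℝ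
      = ⟪Complex.I * circleMap 0 1 y, C (circleMap 0 1 y)⟫_ℝ := hsymm _ _
  rw [(hderiv y).deriv, ← hswap, real_inner_comm, sub_self, mul_zero]

end CircleQuadraticForm

section QuadraticForm

variable {F : Type*} [NormedAddCommGroup F] [InnerProductSpace ℝ F]

lemma isPositive_of_forall_mem_sphere {T : F →ₗ[ℝ] F} (hT : T.IsSymmetric)
    (hpos : ∀ u ∈ sphere (0 : F) 1, 0 < ⟪u, T u⟫_ℝ) : T.IsPositive := by
  refine ⟨hT, fun x => ?_⟩
  rcases eq_or_ne x 0 with rfl | hx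
  · simp
  · have h := hpos (‖x‖⁻¹ • x) (by simp [norm_smul, hx])
    rw [map_smul, inner_smul_left, inner_smul_right, real_inner_comm, conj_trivial,
      ← mul_assoc] at h
    exact (pos_of_mul_pos_right h (by positivity)).le

variable [FiniteDimensional ℝ F]

open scoped MatrixOrder in
lemma exists_adjoint_comp_self_eq_of_isPositive {T : F →ₗ[ℝ] F} (hT : T.IsPositive) :
    ∃ S : F →ₗ[ℝ] F, S.adjoint ∘ₗ S = T := by
  set b := stdOrthonormalBasis ℝ F
  obtain ⟨M, hM⟩ := CStarAlgebra.nonneg_iff_eq_star_mul_self.1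
    ((LinearMap.posSemidef_toMatrix_iff b).2 hT).nonneg
  refine ⟨(LinearMap.toMatrixOrthonormal b).symm M, ?_⟩
  rw [← LinearMap.star_eq_adjoint, ← Module.End.mul_eq_comp, ← map_star, ← map_mul, ← hM]
  exact (LinearMap.toMatrixOrthonormal b).symm_apply_apply T

/-- With `C = S† S` and `k = κ²`, the map `u ↦ κ⁻¹ • l u • S u` permutes the unit sphere. -/
lemma exists_image_smul_eq_image_sphere {C : F →ₗ[ℝ] F} {l : F → ℝ} {k : ℝ} (hC : C.IsSymmetric)
    (hpos : ∀ u ∈ sphere (0 : F) 1, 0 < ⟪u, C u⟫_ℝ) (hl : ∀ u ∈ sphere (0 : F) 1, 0 < l u)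
    (hk : ∀ u ∈ sphere (0 : F) 1, l u ^ 2 * ⟪u, C u⟫_ℝ = k) :
    ∃ B : F →ₗ[ℝ] F, (fun u => l u • C u) '' sphere 0 1 = B '' sphere 0 1 := by
  obtain ⟨S, rfl⟩ := exists_adjoint_comp_self_eq_of_isPositive
    (isPositive_of_forall_mem_sphere hC hpos)
  have hnorm : ∀ u, ⟪u, (S.adjoint ∘ₗ S) u⟫_ℝ = ‖S u‖ ^ 2 := fun u => by
    rw [LinearMap.comp_apply, LinearMap.adjoint_inner_right, real_inner_self_eq_norm_sq]
  simp only [hnorm] at hpos hk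
  have hmul : ∀ u ∈ sphere (0 : F) 1, l u * ‖S u‖ = √k := fun u hu => by
    rw [← hk u hu, ← mul_pow, Real.sqrt_sq (mul_nonneg (hl u hu).le (norm_nonneg _))]
  refine ⟨√k • S.adjoint, Subset.antisymm ?_ ?_⟩
  · rintro - ⟨u, hu, rfl⟩
    have hSu : ‖S u‖ ≠ 0 := fun h => by simpa [h] using hpos u hu
    refine ⟨‖S u‖⁻¹ • S u, by simp [norm_smul, hSu], ?_⟩
    simp only [LinearMap.smul_apply, LinearMap.comp_apply, map_smul, smul_smul, ← hmul u hu]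
    rw [mul_left_comm, inv_mul_cancel₀ hSu, mul_one]
  · rintro - ⟨v, hv, rfl⟩
    have hinj : Function.Injective S := (injective_iff_map_eq_zero S).2 fun w hw => by
      by_contra hw0
      simpa [hw] using hpos (‖w‖⁻¹ • w) (by simp [norm_smul, hw0])
    obtain ⟨w, rfl⟩ := LinearMap.injective_iff_surjective.1 hinj v
    have hw : ‖w‖ ≠ 0 := fun h => by simp [norm_eq_zero.1 h] at hv
    have hu : ‖w‖⁻¹ • w ∈ sphere (0 : F) 1 := by simp [norm_smul, hw]
    refine ⟨_, hu, ?_⟩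
    have hlw := hmul _ hu
    rw [map_smul, norm_smul, mem_sphere_zero_iff_norm.1 hv, mul_one, norm_inv, norm_norm] at hlw
    simp only [map_smul, smul_smul, LinearMap.comp_apply, LinearMap.smul_apply, hlw]

end QuadraticForm

section PlanarCurve

/-- `S` is the image of the unit circle under an affine map, that is, a possibly degenerate
ellipse. The complex numbers serve as the model of the Euclidean plane. -/
def IsCircleImage {E : Type*} [NormedAddCommGroup E] [NormedSpace ℝ E] (S : Set E) : Prop :=
  ∃ (c : E) (A : ℂ →L[ℝ] E), S = (fun u => c + A u) '' sphere 0 1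

lemma IsCircleImage.image {E F : Type*} [NormedAddCommGroup E] [NormedSpace ℝ E]
    [NormedAddCommGroup F] [NormedSpace ℝ F] {S : Set E} (hS : IsCircleImage S) (o : F)
    (T : E →L[ℝ] F) : IsCircleImage ((fun z => o + T z) '' S) := by
  obtain ⟨c, A, rfl⟩ := hS
  refine ⟨o + T c, T ∘L A, ?_⟩
  simp only [image_image, map_add, add_assoc, ContinuousLinearMap.comp_apply]

variable {r : ℂ → ℂ} {A : ℂ →L[ℝ] ℂ} {c : ℂ}

lemma mem_sphere_zero_one_iff_re_sq_add_im_sq {u : ℂ} :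
    u ∈ sphere (0 : ℂ) 1 ↔ u.re ^ 2 + u.im ^ 2 = 1 := by
  rw [mem_sphere_zero_iff_norm, ← sq_eq_sq₀ (norm_nonneg u) zero_le_one, Complex.sq_norm,
    Complex.normSq_apply, ← sq, ← sq, one_pow]

lemma eq_inner_smul_of_inner_I_mul_eq_zero {u w : ℂ} (hu : u ∈ sphere (0 : ℂ) 1)
    (h : ⟪Complex.I * u, w⟫_ℝ = 0) : w = ⟪u, w⟫_ℝ • u := by
  have hu₁ := mem_sphere_zero_one_iff_re_sq_add_im_sq.1 hu
  simp only [Complex.inner, Complex.mul_re, Complex.conj_re, Complex.conj_im, Complex.mul_im,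
    Complex.I_re, Complex.I_im, map_mul, Complex.conj_I, Complex.neg_re, Complex.neg_im] at h ⊢
  apply Complex.ext <;> simp only [Complex.smul_re, Complex.smul_im, smul_eq_mul]
  · linear_combination (-w.re) * hu₁ - u.im * h
  · linear_combination (-w.im) * hu₁ + u.re * h

/-- A unit vector `v` orthogonal to the range of `A` is orthogonal to `c`: test at `u = -I v`. -/
lemma surjective_of_inner_I_mul_eq_zero (hA : ∀ v, (∀ z, ⟪v, A z + c⟫_ℝ = 0) → v = 0)
    (hpar : ∀ u ∈ sphere (0 : ℂ) 1, ⟪Complex.I * u, A (r u) + c⟫_ℝ = 0) :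
    Function.Surjective A := by
  rw [← ContinuousLinearMap.coe_coe, ← LinearMap.range_eq_top, ← Submodule.orthogonal_eq_bot_iff,
    Submodule.eq_bot_iff]
  intro v hv
  have hvA : ∀ z, ⟪v, A z⟫_ℝ = 0 := fun z =>
    Submodule.inner_left_of_mem_orthogonal (LinearMap.mem_range_self _ z) hv
  by_contra hv0
  have h := hpar (-Complex.I * (‖v‖⁻¹ • v)) (by simp [hv0])
  rw [← mul_assoc, mul_neg, Complex.I_mul_I, neg_neg, one_mul, inner_smul_left, inner_add_right,
    hvA, zero_add, mul_eq_zero] at h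
  refine hv0 (hA v fun z => ?_)
  rw [inner_add_right, hvA, zero_add, h.resolve_left (by simpa using hv0)]

lemma exists_eq_add_smul_of_inner_I_mul_eq_zero (hr : ContinuousOn r (sphere 0 1))
    (hA : ∀ v, (∀ z, ⟪v, A z + c⟫_ℝ = 0) → v = 0)
    (hpar : ∀ u ∈ sphere (0 : ℂ) 1, ⟪Complex.I * u, A (r u) + c⟫_ℝ = 0) :
    ∃ (o : ℂ) (C : ℂ →L[ℝ] ℂ) (l : ℂ → ℝ), ContinuousOn l (sphere 0 1) ∧
      ∀ u ∈ sphere (0 : ℂ) 1, r u = o + l u • C u := by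
  have hsurj := surjective_of_inner_I_mul_eq_zero hA hpar
  set e := (LinearEquiv.ofBijective (A : ℂ →ₗ[ℝ] ℂ)
    ⟨LinearMap.injective_iff_surjective.2 hsurj, hsurj⟩).toContinuousLinearEquiv
  refine ⟨-e.symm c, e.symm, fun u => ⟪u, A (r u) + c⟫_ℝ, by fun_prop, fun u hu => ?_⟩
  apply e.injective
  change A (r u) = e _
  simp only [ContinuousLinearEquiv.coe_coe, map_add, map_neg, map_smul,
    ContinuousLinearEquiv.apply_symm_apply]
  rw [← eq_inner_smul_of_inner_I_mul_eq_zero hu (hpar u hu), add_comm, add_neg_cancel_right]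

lemma forall_pos_or_forall_neg_of_ne_zero {X : Type*} [TopologicalSpace X] {s : Set X} {f : X → ℝ}
    (hs : IsPreconnected s) (hf : ContinuousOn f s) (hne : ∀ x ∈ s, f x ≠ 0) :
    (∀ x ∈ s, 0 < f x) ∨ ∀ x ∈ s, f x < 0 := by
  by_contra! h
  obtain ⟨⟨x, hx, hfx⟩, y, hy, hfy⟩ := h
  obtain ⟨z, hz, hfz⟩ := hs.intermediate_value hx hy hf ⟨hfx, hfy⟩
  exact hne z hz hfz

lemma exists_eq_sub_smul_of_inner_I_mul_eq_zero (hr : ContinuousOn r (sphere 0 1))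
    (hA : ∀ v, (∀ z, ⟪v, A z + c⟫_ℝ = 0) → v = 0)
    (hpar : ∀ u ∈ sphere (0 : ℂ) 1, ⟪Complex.I * u, A (r u) + c⟫_ℝ = 0)
    (hlt : ∀ u ∈ sphere (0 : ℂ) 1, ⟪u, r u⟫_ℝ < ⟪u, r (-u)⟫_ℝ) :
    ∃ (o : ℂ) (C : ℂ →L[ℝ] ℂ) (l : ℂ → ℝ), ContinuousOn l (sphere 0 1) ∧
      (∀ u ∈ sphere (0 : ℂ) 1, r u = o - l u • C u) ∧
      ∀ u ∈ sphere (0 : ℂ) 1, 0 < ⟪u, C u⟫_ℝ := by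
  obtain ⟨o, C, l, hl, hrC⟩ := exists_eq_add_smul_of_inner_I_mul_eq_zero hr hA hpar
  have hne : ∀ u ∈ sphere (0 : ℂ) 1, ⟪u, C u⟫_ℝ ≠ 0 := fun u hu h => by
    have := hlt u hu
    rw [hrC u hu, hrC (-u) (by simpa using hu)] at this
    simp only [map_neg, inner_add_right, inner_smul_right, inner_neg_right, h, neg_zero, mul_zero,
      lt_self_iff_false] at this
  rcases forall_pos_or_forall_neg_of_ne_zero
    (isPreconnected_sphere (by simp) 0 1) (by fun_prop) hne with hpos | hneg
  · exact ⟨o, C, fun u => -l u, hl.neg, fun u hu => by simp [hrC u hu], hpos⟩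
  · exact ⟨o, -C, l, hl, fun u hu => by simp [hrC u hu], fun u hu => by
      rw [neg_apply, inner_neg_right]
      exact neg_pos.2 (hneg u hu)⟩

theorem isCircleImage_of_inner_I_mul_eq_zero (hr : ContinuousOn r (sphere 0 1))
    (hA : ∀ v, (∀ z, ⟪v, A z + c⟫_ℝ = 0) → v = 0)
    (hpar : ∀ u ∈ sphere (0 : ℂ) 1, ⟪Complex.I * u, A (r u) + c⟫_ℝ = 0)
    (hle : ∀ u ∈ sphere (0 : ℂ) 1, ∀ v ∈ sphere (0 : ℂ) 1, ⟪u, r u⟫_ℝ ≤ ⟪u, r v⟫_ℝ)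
    (hlt : ∀ u ∈ sphere (0 : ℂ) 1, ⟪u, r u⟫_ℝ < ⟪u, r (-u)⟫_ℝ) :
    IsCircleImage (r '' sphere 0 1) := by
  obtain ⟨o, C, l, hl, hrC, hpos⟩ := exists_eq_sub_smul_of_inner_I_mul_eq_zero hr hA hpar hlt
  have hrange : range (circleMap 0 1) = sphere (0 : ℂ) 1 := by rw [range_circleMap, abs_one]
  have hmem : ∀ θ, circleMap 0 1 θ ∈ sphere (0 : ℂ) 1 := fun θ => hrange ▸ mem_range_self θ
  have hinner : ∀ u ∈ sphere (0 : ℂ) 1, ∀ v ∈ sphere (0 : ℂ) 1,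
      ⟪u, r v⟫_ℝ = ⟪u, o⟫_ℝ - l v * ⟪u, C v⟫_ℝ := fun u _ v hv => by
    rw [hrC v hv, inner_sub_right, inner_smul_right]
  have hlC : ∀ u ∈ sphere (0 : ℂ) 1, ∀ v ∈ sphere (0 : ℂ) 1,
      l v * ⟪u, C v⟫_ℝ ≤ l u * ⟪u, C u⟫_ℝ := fun u hu v hv => by
    linarith [hle u hu v hv, hinner u hu u hu, hinner u hu v hv]
  have hex : ∃ u ∈ sphere (0 : ℂ) 1, 0 < l u := by
    by_contra! hcon
    have h1 : (1 : ℂ) ∈ sphere (0 : ℂ) 1 := by simp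
    have h1' : (-1 : ℂ) ∈ sphere (0 : ℂ) 1 := by simp
    have h := hlt 1 h1
    rw [hinner 1 h1 1 h1, hinner 1 h1 (-1) h1', map_neg, inner_neg_right] at h
    nlinarith [hpos 1 h1, hcon 1 h1, hcon _ h1']
  rw [← hrange] at hpos hlC hex hl
  simp only [forall_mem_range, exists_range_iff] at hpos hlC hex
  obtain ⟨hC, hlpos, k, hk⟩ := isSymmetric_and_exists_sq_mul_inner_circleMap_eq
    (l := l ∘ circleMap 0 1) (hl.comp_continuous (continuous_circleMap 0 1) mem_range_self)
    (by simp only [Function.comp_apply, (periodic_circleMap 0 1).eq]) hpos hlC hex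
  obtain ⟨B, hB⟩ := exists_image_smul_eq_image_sphere hC (by rwa [← hrange, forall_mem_range])
    (l := l) (k := k) (by rwa [← hrange, forall_mem_range]) (by rwa [← hrange, forall_mem_range])
  refine ⟨o, -(LinearMap.toContinuousLinearMap B), ?_⟩
  rw [image_congr hrC]
  simpa [image_image, sub_eq_add_neg] using congrArg (image fun z => o - z) hB

end PlanarCurve

section CentralProjection

/-- The action of a Lorentz boost on the circle of light rays: the linear map
`(τ, x, y) ↦ (a τ + s x, s τ + a x, E y)`, where `E² = a² - s²`, preserves the cone
`x² + y² = τ²`, and we follow the ray through `(1, u)`. -/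
def circleBoost (a s E : ℝ) (u : ℂ) : ℂ :=
  ⟨(a * u.re + s) / (a + s * u.re), E * u.im / (a + s * u.re)⟩

variable {a s E : ℝ} {u : ℂ}

lemma circleBoost_mem_sphere (hE : E ^ 2 = a ^ 2 - s ^ 2) (hu : u ∈ sphere (0 : ℂ) 1)
    (h : a + s * u.re ≠ 0) : circleBoost a s E u ∈ sphere (0 : ℂ) 1 := by
  rw [mem_sphere_zero_one_iff_re_sq_add_im_sq] at hu ⊢
  simp only [circleBoost]
  rw [div_pow, div_pow, ← add_div, div_eq_one_iff_eq (pow_ne_zero 2 h), mul_pow E, hE]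
  linear_combination (a ^ 2 - s ^ 2) * hu

lemma sub_mul_re_circleBoost (hE : E ^ 2 = a ^ 2 - s ^ 2) (h : a + s * u.re ≠ 0) :
    a - s * (circleBoost a s E u).re = E ^ 2 / (a + s * u.re) := by
  rw [circleBoost, hE]
  field_simp
  ring

lemma circleBoost_neg_circleBoost (hE : E ^ 2 = a ^ 2 - s ^ 2) (hE₀ : E ≠ 0)
    (h : a + s * u.re ≠ 0) : circleBoost a (-s) E (circleBoost a s E u) = u := by
  have hden : a + -s * (circleBoost a s E u).re = E ^ 2 / (a + s * u.re) := by
    rw [neg_mul, ← sub_eq_add_neg, sub_mul_re_circleBoost hE h]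
  rw [circleBoost, hden]
  apply Complex.ext <;> simp only [circleBoost]
  · have h' : a + u.re * s ≠ 0 := by rwa [mul_comm u.re]
    rw [div_eq_iff (div_ne_zero (pow_ne_zero 2 hE₀) h), hE]
    field_simp
    ring
  · field_simp

lemma image_circleBoost_sphere (hE : E ^ 2 = a ^ 2 - s ^ 2) (hE₀ : E ≠ 0)
    (hpos : ∀ u ∈ sphere (0 : ℂ) 1, 0 < a + s * u.re) :
    circleBoost a s E '' sphere 0 1 = sphere 0 1 := by
  refine Subset.antisymm (image_subset_iff.2 fun u hu =>
    circleBoost_mem_sphere hE hu (hpos u hu).ne') fun v hv => ?_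
  have hE' : E ^ 2 = a ^ 2 - (-s) ^ 2 := by rw [neg_sq, hE]
  have hv' : a + -s * v.re ≠ 0 := by simpa using (hpos (-v) (by simpa using hv)).ne'
  refine ⟨_, circleBoost_mem_sphere hE' hv hv', ?_⟩
  simpa only [neg_neg] using circleBoost_neg_circleBoost hE' hE₀ hv'

variable {F : Type*} [NormedAddCommGroup F] [NormedSpace ℝ F] {S : Set F}

lemma map_eq_re_smul_add_im_smul (A : ℂ →L[ℝ] F) (u : ℂ) :
    A u = u.re • A 1 + u.im • A Complex.I := by
  rw [← map_smul, ← map_smul, ← map_add, Complex.real_smul, Complex.real_smul, mul_one,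
    Complex.re_add_im]

lemma IsCircleImage.exists_map_I_eq_zero (hS : IsCircleImage S) (f : F →L[ℝ] ℝ) :
    ∃ (o : F) (A : ℂ →L[ℝ] F), S = (fun u => o + A u) '' sphere 0 1 ∧ f (A Complex.I) = 0 := by
  obtain ⟨o, A, rfl⟩ := hS
  set z : ℂ := ⟨f (A 1), f (A Complex.I)⟩
  set e := Complex.exp (z.arg * Complex.I)
  have he : ‖e‖ = 1 := Complex.norm_exp_ofReal_mul_I _
  have hz : ‖z‖ • e = z := by rw [Complex.real_smul, Complex.norm_mul_exp_arg_mul_I]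
  refine ⟨o, A ∘L ContinuousLinearMap.mul ℝ ℂ e, ?_, ?_⟩
  · have hrot : (fun u => e * u) '' sphere (0 : ℂ) 1 = sphere 0 1 := by
      refine Subset.antisymm (image_subset_iff.2 fun u hu => ?_) fun u hu => ⟨e⁻¹ * u, ?_, ?_⟩
      · simpa [he] using hu
      · simpa [he] using hu
      · exact mul_inv_cancel_left₀ (Complex.exp_ne_zero _) u
    conv_lhs => rw [← hrot, image_image]
    rfl
  · have hre : ‖z‖ * e.re = f (A 1) := by simpa using congrArg Complex.re hz
    have him : ‖z‖ * e.im = f (A Complex.I) := by simpa using congrArg Complex.im hz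
    simp only [ContinuousLinearMap.comp_apply, ContinuousLinearMap.mul_apply',
      map_eq_re_smul_add_im_smul A (e * _), map_add, map_smul, smul_eq_mul, ← hre, ← him,
      Complex.mul_re, Complex.mul_im, Complex.I_re, Complex.I_im]
    ring

lemma exists_inv_smul_add_eq_circleBoost (hE : E ^ 2 = a ^ 2 - s ^ 2) (hE₀ : E ≠ 0) (o : F)
    (A : ℂ →L[ℝ] F) : ∃ (c : F) (B : ℂ →L[ℝ] F), ∀ u : ℂ, a + s * u.re ≠ 0 →
      (a + s * u.re)⁻¹ • (o + A u) = c + B (circleBoost a s E u) := by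
  refine ⟨(E ^ 2)⁻¹ • (a • o - s • A 1), Complex.reCLM.smulRight ((E ^ 2)⁻¹ • (a • A 1 - s • o))
    + Complex.imCLM.smulRight (E⁻¹ • A Complex.I), fun u h => ?_⟩
  rw [map_eq_re_smul_add_im_smul A u]
  simp only [circleBoost, add_apply, ContinuousLinearMap.smulRight_apply,
    Complex.reCLM_apply, Complex.imCLM_apply]
  match_scalars <;> field_simp
  all_goals rw [hE]; ring

theorem IsCircleImage.image_inv_smul (hS : IsCircleImage S) (f : F →L[ℝ] ℝ)
    (hpos : ∀ w ∈ S, 0 < f w) : IsCircleImage ((fun w => (f w)⁻¹ • w) '' S) := by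
  obtain ⟨o, A, rfl, hI⟩ := hS.exists_map_I_eq_zero f
  have hf : ∀ u, f (o + A u) = f o + f (A 1) * u.re := fun u => by
    rw [map_add, map_eq_re_smul_add_im_smul A u, map_add, map_smul, map_smul, hI, smul_zero,
      add_zero, smul_eq_mul, mul_comm]
  have hpos' : ∀ u ∈ sphere (0 : ℂ) 1, 0 < f o + f (A 1) * u.re := fun u hu =>
    hf u ▸ hpos _ (mem_image_of_mem _ hu)
  have h₁ : 0 < f o + f (A 1) := by simpa using hpos' 1 (by simp)
  have h₂ : 0 < f o - f (A 1) := by simpa [sub_eq_add_neg] using hpos' (-1) (by simp)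
  have hsq : 0 < f o ^ 2 - f (A 1) ^ 2 := by nlinarith
  have hE := Real.sq_sqrt hsq.le
  have hE₀ := (Real.sqrt_pos.2 hsq).ne'
  obtain ⟨c, B, hB⟩ := exists_inv_smul_add_eq_circleBoost hE hE₀ o A
  refine ⟨c, B, ?_⟩
  conv_rhs => rw [← image_circleBoost_sphere hE hE₀ hpos', image_image]
  rw [image_image]
  exact image_congr fun u hu => hf u ▸ hB u (hpos' u hu).ne'

end CentralProjection

section Shadow

variable {E : Type*} [NormedAddCommGroup E] [InnerProductSpace ℝ E] {L : Set E} {x ν y n : E}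
  {J : ℂ ≃ₗᵢ[ℝ] (ℝ ∙ ν)ᗮ} {u v : ℂ}

/-- The central projection from `x` of the contact point of `L` with direction `J u`, in the
coordinate `J` of the plane `{y | ⟪ν, y - x⟫ = 1}`: the point with inner normal `u` on the boundary
of the planar shadow of `L`. -/
def shadowPoint (L : Set E) (x ν : E) (J : ℂ ≃ₗᵢ[ℝ] (ℝ ∙ ν)ᗮ) (u : ℂ) : ℂ :=
  (⟪ν, contactPoint L x ν (J u) - x⟫_ℝ)⁻¹ •
    J.symm ((ℝ ∙ ν)ᗮ.orthogonalProjectionOnto (contactPoint L x ν (J u) - x))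

lemma inner_symm_orthogonalProjectionOnto :
    ⟪u, J.symm ((ℝ ∙ ν)ᗮ.orthogonalProjectionOnto y)⟫_ℝ = ⟪(J u : E), y⟫_ℝ := by
  rw [← J.inner_map_map, J.apply_symm_apply, Submodule.coe_inner,
    ← Submodule.starProjection_apply, ← Submodule.inner_starProjection_left_eq_right,
    Submodule.starProjection_eq_self_iff.2 (J u).2]

lemma inner_shadowPoint : ⟪u, shadowPoint L x ν J v⟫_ℝ =
    ⟪(J u : E), contactPoint L x ν (J v) - x⟫_ℝ / ⟪ν, contactPoint L x ν (J v) - x⟫_ℝ := by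
  rw [shadowPoint, real_inner_smul_right, inner_symm_orthogonalProjectionOnto, inv_mul_eq_div]

lemma ne_zero_of_mem_sphere_zero_one (hu : u ∈ sphere (0 : ℂ) 1) : u ≠ 0 :=
  ne_zero_of_mem_unit_sphere ⟨u, hu⟩

lemma coe_map_notMem_span_singleton (hu : u ≠ 0) : (J u : E) ∉ ℝ ∙ ν :=
  notMem_span_singleton_of_mem_orthogonal (by simpa using hu)

lemma eq_zero_of_forall_inner_add_map_eq_zero (h : ∀ z, ⟪y, ν + J z⟫_ℝ = 0) : y = 0 := by
  have hν : ⟪y, ν⟫_ℝ = 0 := by simpa using h 0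
  have hy : y ∈ (ℝ ∙ ν)ᗮ := Submodule.mem_orthogonal_singleton_iff_inner_left.2 hν
  simpa [inner_add_right, hν] using h (J.symm ⟨y, hy⟩)

lemma contactSet_eq_image_sphere (hL : IsStrictBody L) (hν : StrictlySeparates L x ν) :
    contactSet L x = (fun u => contactPoint L x ν (J u)) '' sphere 0 1 := by
  refine Subset.antisymm (fun p hp => ?_) (image_subset_iff.2 fun u hu => hL.contactPoint_mem hν
    (coe_map_notMem_span_singleton (ne_zero_of_mem_sphere_zero_one hu)))
  rw [hL.contactSet_eq_image hν] at hp
  obtain ⟨β, hβ, rfl⟩ := hp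
  have hβ' : 0 < ‖β‖ := norm_pos_iff.2 hβ
  refine ⟨‖β‖⁻¹ • J.symm β, ?_, ?_⟩
  · rw [mem_sphere_zero_iff_norm, norm_smul, norm_inv, norm_norm, J.symm.norm_map,
      inv_mul_cancel₀ hβ'.ne']
  · simpa only [map_smul, J.apply_symm_apply, Submodule.coe_smul] using
      hL.contactPoint_smul hν (notMem_span_singleton_of_mem_orthogonal hβ)
      (inv_pos.2 hβ')

namespace IsStrictBody

variable (hL : IsStrictBody L) (hν : StrictlySeparates L x ν)
include hL hν

lemma inner_pos_contactPoint (u : ℂ) : 0 < ⟪ν, contactPoint L x ν (J u) - x⟫_ℝ :=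
  let ⟨_, h⟩ := hL.supportsAt_contactPoint hν (J u)
  hν _ h.mem

lemma inv_smul_sub_eq_map_shadowPoint_add (hnorm : ‖ν‖ = 1) (u : ℂ) :
    (⟪ν, contactPoint L x ν (J u) - x⟫_ℝ)⁻¹ • (contactPoint L x ν (J u) - x) =
      ν + J (shadowPoint L x ν J u) := by
  have hpos := hL.inner_pos_contactPoint hν (J := J) u
  have hdecomp := Submodule.starProjection_orthogonal_val (K := ℝ ∙ ν)
    (contactPoint L x ν (J u) - x)
  rw [Submodule.starProjection_unit_singleton ℝ hnorm] at hdecomp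
  rw [shadowPoint, map_smul, J.apply_symm_apply, Submodule.coe_smul,
    ← Submodule.starProjection_apply, hdecomp, smul_sub _ _ (_ • ν), smul_smul,
    inv_mul_cancel₀ hpos.ne', one_smul, add_sub_cancel]

lemma inner_shadowPoint_self_le (hv : v ≠ 0) :
    ⟪u, shadowPoint L x ν J u⟫_ℝ ≤ ⟪u, shadowPoint L x ν J v⟫_ℝ := by
  obtain ⟨m, h⟩ := hL.supportsAt_contactPoint hν (J u)
  have hv' := hL.contactPoint_mem hν (coe_map_notMem_span_singleton (J := J) hv)
  have hle := h.inner_nonneg _ (contactSet_subset hv')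
  rw [inner_sub_left, real_inner_smul_left, sub_nonneg] at hle
  rw [inner_shadowPoint, inner_shadowPoint, ← h.eq_div hν, le_div_iff₀]
  · exact hle
  · exact hL.inner_pos_contactPoint hν v

lemma inner_shadowPoint_self_lt_inner_shadowPoint_neg (hu : u ≠ 0) :
    ⟪u, shadowPoint L x ν J u⟫_ℝ < ⟪u, shadowPoint L x ν J (-u)⟫_ℝ := by
  refine (hL.inner_shadowPoint_self_le hν (neg_ne_zero.2 hu)).lt_of_ne fun heq => ?_
  have hspan := coe_map_notMem_span_singleton (J := J) hu
  obtain ⟨m, h⟩ := hL.supportsAt_contactPoint hν (J u)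
  refine hL.contactPoint_ne_contactPoint_neg hν hspan (SupportsAt.eq_contactPoint (m := m)
    ⟨?_, ?_, h.inner_nonneg⟩ hL hν hspan).symm
  · exact contactSet_subset (hL.contactPoint_mem hν (by simpa using hspan))
  · rw [inner_shadowPoint, inner_shadowPoint, ← h.eq_div hν,
      eq_div_iff (hL.inner_pos_contactPoint hν _).ne'] at heq
    rw [map_neg, Submodule.coe_neg] at heq
    rw [inner_sub_left, real_inner_smul_left, heq, sub_self]

lemma continuousOn_shadowPoint : ContinuousOn (shadowPoint L x ν J) (sphere 0 1) := by
  have hcont : ContinuousOn (fun u => contactPoint L x ν (J u) - x) (sphere 0 1) := by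
    refine ContinuousOn.sub (fun u hu => ContinuousAt.continuousWithinAt ?_) continuousOn_const
    exact hL.tendsto_contactPoint hν
      (coe_map_notMem_span_singleton (ne_zero_of_mem_sphere_zero_one hu)) tendsto_const_nhds
      tendsto_const_nhds (continuous_subtype_val.comp J.continuous).continuousAt
  refine ContinuousOn.smul ((continuousOn_const.inner hcont).inv₀ fun u _ =>
    (hL.inner_pos_contactPoint hν u).ne') ?_
  exact (J.symm.continuous.comp (ContinuousLinearMap.continuous _)).comp_continuousOn hcont

theorem isCircleImage_image_shadowPoint [CompleteSpace E] (hnorm : ‖ν‖ = 1) {Φ : ℂ →ₗ[ℝ] E}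
    (hΦ : Function.Injective Φ) (h : ∀ u, ⟪Φ u, contactPoint L x ν (J u) - x⟫_ℝ = 0) :
    IsCircleImage (shadowPoint L x ν J '' sphere 0 1) := by
  have hI : ∀ w z : ℂ, ⟪w, Complex.I * z⟫_ℝ = ⟪-Complex.I * w, z⟫_ℝ := fun w z => by
    simp only [Complex.inner, map_mul, map_neg, Complex.conj_I, neg_neg]
    ring_nf
  set Ψ := ContinuousLinearMap.adjoint (LinearMap.toContinuousLinearMap Φ)
  have hΨ : ∀ w z, ⟪w, Complex.I * Ψ (J z) + Complex.I * Ψ ν⟫_ℝ =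
      ⟪Φ (-Complex.I * w), ν + J z⟫_ℝ := fun w z => by
    rw [← mul_add, ← map_add, hI, ContinuousLinearMap.adjoint_inner_right, add_comm]
    rfl
  refine isCircleImage_of_inner_I_mul_eq_zero (c := Complex.I * Ψ ν)
    (A := ContinuousLinearMap.mul ℝ ℂ Complex.I ∘L Ψ ∘L (ℝ ∙ ν)ᗮ.subtypeL ∘L
      (J : ℂ →L[ℝ] (ℝ ∙ ν)ᗮ))
    (hL.continuousOn_shadowPoint hν) (fun w hw => ?_) (fun u _ => ?_)
    (fun u _ v hv => hL.inner_shadowPoint_self_le hν (ne_zero_of_mem_sphere_zero_one hv))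
    (fun u hu => hL.inner_shadowPoint_self_lt_inner_shadowPoint_neg hν
      (ne_zero_of_mem_sphere_zero_one hu))
  · have hzero := eq_zero_of_forall_inner_add_map_eq_zero fun z => (hΨ w z).symm.trans (hw z)
    simpa using hΦ (hzero.trans (map_zero Φ).symm)
  · refine (hΨ _ _).trans ?_
    rw [← hL.inv_smul_sub_eq_map_shadowPoint_add hν hnorm, ← mul_assoc, neg_mul, Complex.I_mul_I,
      neg_neg, one_mul, real_inner_smul_right, h, mul_zero]

theorem isCircleImage_contactSet (hnorm : ‖ν‖ = 1)
    (hn : ∀ p ∈ contactSet L x, ⟪n, p - x⟫_ℝ = 1)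
    (hshadow : IsCircleImage (shadowPoint L x ν J '' sphere 0 1)) :
    IsCircleImage (contactSet L x) := by
  have hscale : ∀ u ∈ sphere (0 : ℂ) 1,
      ⟪n, ν + J (shadowPoint L x ν J u)⟫_ℝ = (⟪ν, contactPoint L x ν (J u) - x⟫_ℝ)⁻¹ := by
    intro u hu
    rw [← hL.inv_smul_sub_eq_map_shadowPoint_add hν hnorm, real_inner_smul_right, hn _
      (contactSet_eq_image_sphere (J := J) hL hν ▸ mem_image_of_mem _ hu), mul_one]
  have hcone := hshadow.image ν ((ℝ ∙ ν)ᗮ.subtypeL ∘L (J : ℂ →L[ℝ] (ℝ ∙ ν)ᗮ))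
  rw [image_image] at hcone
  have hslice := hcone.image_inv_smul (innerSL ℝ n) <| forall_mem_image.2 fun u hu =>
    (inv_pos.2 (hL.inner_pos_contactPoint hν u)).trans_eq (hscale u hu).symm
  convert hslice.image x (ContinuousLinearMap.id ℝ E) using 1
  rw [contactSet_eq_image_sphere (J := J) hL hν, image_image, image_image]
  refine image_congr fun u hu => ?_
  change _ = x + (⟪n, ν + J (shadowPoint L x ν J u)⟫_ℝ)⁻¹ • (ν + J (shadowPoint L x ν J u) : E)
  rw [hscale u hu, inv_inv, ← hL.inv_smul_sub_eq_map_shadowPoint_add hν hnorm, smul_smul,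
    mul_inv_cancel₀ (hL.inner_pos_contactPoint hν u).ne', one_smul, add_sub_cancel]

end IsStrictBody

end Shadow

section Limit

variable {E : Type*} [NormedAddCommGroup E] [InnerProductSpace ℝ E] {L : Set E} {x p κ : E}

lemma norm_le_of_forall_norm_add_map_le {F : Type*} [NormedAddCommGroup F] [NormedSpace ℝ F]
    {o : F} {A : ℂ →L[ℝ] F} {R : ℝ} (h : ∀ u ∈ sphere (0 : ℂ) 1, ‖o + A u‖ ≤ R) :
    ‖o‖ ≤ R ∧ ‖A‖ ≤ R := by
  have hle : ∀ u ∈ sphere (0 : ℂ) 1, ‖o + A u‖ ≤ R ∧ ‖o - A u‖ ≤ R := fun u hu =>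
    ⟨h u hu, by simpa [sub_eq_add_neg] using h (-u) (by simpa using hu)⟩
  have hhalf : ∀ {y z : F}, (2 : ℝ) • y = z → ‖z‖ ≤ 2 * R → ‖y‖ ≤ R := fun hyz hz => by
    rw [← hyz, norm_smul, Real.norm_ofNat] at hz
    linarith
  constructor
  · have h₁ := hle 1 (by simp)
    refine hhalf (z := (o + A 1) + (o - A 1)) (by module) ?_
    linarith [norm_add_le (o + A 1) (o - A 1)]
  · have hR : 0 ≤ R := (norm_nonneg _).trans (h 1 (by simp))
    refine ContinuousLinearMap.opNorm_le_of_unit_norm hR fun u hu => ?_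
    have hu' := hle u (by simpa using hu)
    refine hhalf (z := (o + A u) - (o - A u)) (by module) ?_
    linarith [norm_sub_le (o + A u) (o - A u)]

lemma mem_contactSet_of_tendsto [FiniteDimensional ℝ E] (hL : IsClosed L) {ι : Type*}
    {l : Ultrafilter ι} {xs ps : ι → E} (hx : Tendsto xs l (𝓝 x)) (hp : Tendsto ps l (𝓝 p))
    (h : ∀ᶠ i in (l : Filter ι), ps i ∈ contactSet L (xs i)) : p ∈ contactSet L x := by
  have hunit : ∀ᶠ i in (l : Filter ι), ∃ a : E, ‖a‖ = 1 ∧ SupportsAt L (xs i) a (ps i) :=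
    h.mono fun i ⟨_, ha, hsupp⟩ => hsupp.exists_norm_eq_one ha
  obtain ⟨as, has⟩ := hunit.choice
  obtain ⟨a, ha, hlim⟩ := (isCompact_sphere (0 : E) 1).ultrafilter_le_nhds (l.map as)
    (le_principal_iff.2 (has.mono fun i hi => by simpa using hi.1))
  exact ⟨a, ne_zero_of_mem_unit_sphere ⟨a, ha⟩,
    SupportsAt.of_tendsto hL hx hlim hp (has.mono fun i hi => hi.2)⟩

lemma IsStrictBody.exists_tendsto_mem_contactSet (hL : IsStrictBody L)
    (hκ : StrictlySeparates L x κ) (hp : p ∈ contactSet L x) {ι : Type*} {l : Filter ι}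
    {xs : ι → E} (hx : Tendsto xs l (𝓝 x)) :
    ∃ ps : ι → E, Tendsto ps l (𝓝 p) ∧ ∀ᶠ i in l, ps i ∈ contactSet L (xs i) := by
  obtain ⟨β, hβ0, hβ, rfl⟩ := hL.exists_eq_contactPoint hκ hp
  have hβκ := notMem_span_singleton_of_inner_eq_zero hβ0 hβ
  refine ⟨_, hL.tendsto_contactPoint hκ hβκ hx tendsto_const_nhds tendsto_const_nhds, ?_⟩
  filter_upwards [hκ.eventually_of_tendsto hL.isCompact hx tendsto_const_nhds] with i hi
  exact hL.contactPoint_mem hi hβκ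

theorem IsStrictBody.isCircleImage_contactSet_of_mem_closure [FiniteDimensional ℝ E]
    (hL : IsStrictBody L) (hκ : StrictlySeparates L x κ)
    (hx : x ∈ closure {z | IsCircleImage (contactSet L z)}) : IsCircleImage (contactSet L x) := by
  obtain ⟨l, hl, hlx⟩ := mem_closure_iff_ultrafilter.1 hx
  obtain ⟨c, hc⟩ := Filter.Eventually.choice (show ∀ᶠ z in (l : Filter E), _ from hl)
  obtain ⟨A, hA⟩ := hc.choice
  obtain ⟨R, hR⟩ := hL.isCompact.isBounded.exists_norm_le
  have hmem : ∀ᶠ z in (l : Filter E), ∀ u ∈ sphere (0 : ℂ) 1, c z + A z u ∈ contactSet L z :=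
    hA.mono fun z hz u hu => hz ▸ mem_image_of_mem _ hu
  have hbound : ∀ᶠ z in (l : Filter E), ‖c z‖ ≤ R ∧ ‖A z‖ ≤ R := hmem.mono fun z hz =>
    norm_le_of_forall_norm_add_map_le fun u hu => hR _ (contactSet_subset (hz u hu))
  obtain ⟨c₀, -, hc₀⟩ := (isCompact_closedBall (0 : E) R).ultrafilter_le_nhds (l.map c)
    (le_principal_iff.2 (hbound.mono fun z hz => by simpa using hz.1))
  obtain ⟨A₀, -, hA₀⟩ := (isCompact_closedBall (0 : ℂ →L[ℝ] E) R).ultrafilter_le_nhds (l.map A)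
    (le_principal_iff.2 (hbound.mono fun z hz => by simpa using hz.2))
  have hlim : ∀ {φ : E → ℂ} {u : ℂ}, Tendsto φ l (𝓝 u) →
      Tendsto (fun z => c z + A z (φ z)) l (𝓝 (c₀ + A₀ u)) := fun hφ =>
    Tendsto.add hc₀ <| (isBoundedBilinearMap_apply.continuous.tendsto (A₀, _)).comp
      (Tendsto.prodMk_nhds hA₀ hφ)
  refine ⟨c₀, A₀, Subset.antisymm (fun p hp => ?_) (image_subset_iff.2 fun u hu => ?_)⟩
  · obtain ⟨ps, hps, hpmem⟩ := hL.exists_tendsto_mem_contactSet hκ hp hlx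
    have hangle : ∀ᶠ z in (l : Filter E), ∃ u ∈ sphere (0 : ℂ) 1, c z + A z u = ps z := by
      filter_upwards [hpmem, hA] with z hz hAz
      rwa [hAz] at hz
    obtain ⟨φ, hφ⟩ := hangle.choice
    obtain ⟨u, hu, hφu⟩ := (isCompact_sphere (0 : ℂ) 1).ultrafilter_le_nhds (l.map φ)
      (le_principal_iff.2 (hφ.mono fun z hz => hz.1))
    exact ⟨u, hu, tendsto_nhds_unique (hlim hφu) (hps.congr' (hφ.mono fun z hz => hz.2.symm))⟩
  · exact mem_contactSet_of_tendsto hL.isCompact.isClosed hlx (hlim tendsto_const_nhds)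
      (hmem.mono fun z hz => hz u hu)

end Limit

section Ellipse

variable {E : Type*} [NormedAddCommGroup E] [InnerProductSpace ℝ E] [FiniteDimensional ℝ E]
  {S : Set E} {x : E}

lemma eq_zero_of_map_eq_zero {F : Type*} [NormedAddCommGroup F] [NormedSpace ℝ F]
    {A : ℂ →L[ℝ] F} {w : ℂ} (hw : w ≠ 0) (h : A w = 0) (u : ℂ) :
    A u = (u / w).im • A (w * Complex.I) := by
  have hA := map_eq_re_smul_add_im_smul (A ∘L ContinuousLinearMap.mul ℝ ℂ w) (u / w)
  simpa [mul_div_cancel₀ _ hw, h] using hA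

/-- A degenerate ellipse lies on a line, so that together with `x` it does not span the space. -/
lemma injective_of_image_add_sphere (hE : 2 < Module.finrank ℝ E) {c : E} {A : ℂ →L[ℝ] E}
    (hspan : ∀ v : E, (∀ u ∈ sphere (0 : ℂ) 1, ⟪v, c + A u - x⟫_ℝ = 0) → v = 0) :
    Function.Injective A := by
  refine (injective_iff_map_eq_zero A).2 fun w hw => by_contra fun hw0 => ?_
  obtain ⟨v, hv, hv0⟩ := exists_ne_zero_inner_eq_zero ![c - x, A (w * Complex.I)] hE
  refine hv (hspan v fun u _ => ?_)
  have h₀ : ⟪v, c - x⟫_ℝ = 0 := by simpa [real_inner_comm] using hv0 0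
  have h₁ : ⟪v, A (w * Complex.I)⟫_ℝ = 0 := by simpa [real_inner_comm] using hv0 1
  rw [add_sub_right_comm, inner_add_right, h₀, eq_zero_of_map_eq_zero hw0 hw u,
    real_inner_smul_right, h₁, mul_zero, add_zero]

theorem IsCircleImage.exists_affineMap (hS : IsCircleImage S) (hE : 2 < Module.finrank ℝ E)
    (hspan : ∀ v : E, (∀ p ∈ S, ⟪v, p - x⟫_ℝ = 0) → v = 0) :
    ∃ f : EuclideanSpace ℝ (Fin 2) →ᵃ[ℝ] E, Function.Injective f ∧
      S = f '' sphere (0 : EuclideanSpace ℝ (Fin 2)) 1 := by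
  obtain ⟨c, A, rfl⟩ := hS
  have hA : Function.Injective A := injective_of_image_add_sphere hE fun v hv =>
    hspan v (forall_mem_image.2 hv)
  set e := Complex.orthonormalBasisOneI.repr.symm
  refine ⟨(A.toLinearMap ∘ₗ e.toLinearEquiv.toLinearMap).toAffineMap + AffineMap.const ℝ _ c,
    ?_, ?_⟩
  · exact fun y z h => e.injective (hA (add_right_cancel h))
  · rw [← map_zero e, ← e.image_sphere, image_image]
    exact image_congr fun y _ => add_comm _ _

end Ellipse

section AlmostFreePair

variable {K L : Set E3} {n : E3 → E3} {x : E3}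

theorem AlmostFreePair.isCircleImage_contactSet_of_innerTangentBall {ν : E3} {r : ℝ}
    (S : AlmostFreePair K L n) (h : InnerTangentBall K x ν r) :
    IsCircleImage (contactSet L x) := by
  have hν := h.strictlySeparates S.subset_interior
  have : Fact (Module.finrank ℝ E3 = 2 + 1) := ⟨by simp⟩
  set J : ℂ ≃ₗᵢ[ℝ] (ℝ ∙ ν)ᗮ := Complex.orthonormalBasisOneI.repr.trans
    (OrthonormalBasis.fromOrthogonalSpanSingleton (𝕜 := ℝ) 2 h.ne_zero).repr.symm
  obtain ⟨Φ, hΦ, horth⟩ := S.exists_injective_forall_inner_eq_zero h J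
  exact S.isStrictBody.isCircleImage_contactSet hν h.norm_eq_one (S.inner_eq_one x h.mem_frontier)
    (S.isStrictBody.isCircleImage_image_shadowPoint hν h.norm_eq_one hΦ horth)

theorem AlmostFreePair.isCircleImage_contactSet (S : AlmostFreePair K L n)
    (hx : x ∈ frontier K) : IsCircleImage (contactSet L x) := by
  obtain ⟨κ, hκ⟩ := S.exists_strictlySeparates hx
  have hne : (interior K).Nonempty := ⟨0, S.subset_interior (interior_subset S.zero_mem)⟩
  refine S.isStrictBody.isCircleImage_contactSet_of_mem_closure hκ <|
    Metric.mem_closure_iff.2 fun ε hε => ?_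
  obtain ⟨y, ν, r, hball, hdist⟩ :=
    exists_innerTangentBall_dist_lt S.isCompact S.convex hne hx hε
  exact ⟨y, S.isCircleImage_contactSet_of_innerTangentBall hball, dist_comm x y ▸ hdist⟩

lemma exists_orthogonal_span_singleton_eq {E : Type*} [NormedAddCommGroup E]
    [InnerProductSpace ℝ E] [FiniteDimensional ℝ E] {V : Submodule ℝ E}
    (hV : Module.finrank ℝ E = Module.finrank ℝ V + 1) : ∃ N : E, N ≠ 0 ∧ V = (ℝ ∙ N)ᗮ := by
  have hrank : Module.finrank ℝ Vᗮ = 1 := by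
    have := Submodule.finrank_add_finrank_orthogonal V
    omega
  obtain ⟨N, hN, hN0⟩ := Submodule.exists_mem_ne_zero_of_ne_bot
    (Submodule.one_le_finrank_iff.1 hrank.ge)
  have hspan : ℝ ∙ N = Vᗮ := Submodule.eq_of_le_of_finrank_eq
    (by simpa using hN) (by rw [finrank_span_singleton hN0, hrank])
  exact ⟨N, hN0, by rw [hspan, Submodule.orthogonal_orthogonal]⟩

lemma IsStrictBody.exists_direction_eq_and_inner_eq_one {P : AffineSubspace ℝ E3} {κ : E3}
    (hL : IsStrictBody L) (hκ : StrictlySeparates L x κ) (hP : IsPlane P)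
    (hLP : contactSet L x ⊆ P) :
    ∃ n : E3, P.direction = (ℝ ∙ n)ᗮ ∧ ∀ p ∈ contactSet L x, ⟪n, p - x⟫_ℝ = 1 := by
  obtain ⟨N, hN, hdir⟩ := exists_orthogonal_span_singleton_eq (V := P.direction)
    (by rw [IsPlane] at hP; simp [hP])
  obtain ⟨p₀, hp₀⟩ := (hL.contactSet_nontrivial hκ (by simp)).nonempty
  have hconst : ∀ p ∈ contactSet L x, ⟪N, p⟫_ℝ = ⟪N, p₀⟫_ℝ := fun p hp => by
    have hmem : p - p₀ ∈ P.direction := P.vsub_mem_direction (hLP hp) (hLP hp₀)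
    rwa [hdir, Submodule.mem_orthogonal_singleton_iff_inner_right, inner_sub_right,
      sub_eq_zero] at hmem
  obtain ⟨c, hc⟩ := hL.exists_smul_inner_eq_one hκ ⟨p₀, hp₀⟩ hN hconst
  have hc0 : c ≠ 0 := by
    rintro rfl
    simpa using hc p₀ hp₀
  exact ⟨c • N, by rw [Submodule.span_singleton_smul_eq (IsUnit.mk0 c hc0), hdir], hc⟩

theorem AlmostFree.exists_almostFreePair {Δ : E3 → AffineSubspace ℝ E3} (hAF : AlmostFree K L Δ)
    (hKcomp : IsCompact K) (hKconv : Convex ℝ K) (hL : IsStrictBody L)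
    (hL0 : (0 : E3) ∈ interior L) (hLK : L ⊆ interior K)
    (hΔ : ∀ z ∈ frontier K, IsPlane (Δ z) ∧ graze L z ⊆ (Δ z : Set E3)) :
    ∃ n : E3 → E3, AlmostFreePair K L n := by
  have hnormal : ∀ z ∈ frontier K, ∃ m : E3, (Δ z).direction = (ℝ ∙ m)ᗮ ∧
      ∀ p ∈ contactSet L z, ⟪m, p - z⟫_ℝ = 1 := by
    intro z hz
    obtain ⟨κ, hκ⟩ := exists_strictlySeparates_of_subset_interior hKconv
      ⟨0, hLK (interior_subset hL0)⟩ hLK hz.2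
    refine hL.exists_direction_eq_and_inner_eq_one hκ (hΔ z hz).1 ?_
    rw [← graze_eq_contactSet hL.isCompact hL.strictConvex.convex ⟨0, hL0⟩]
    exact (hΔ z hz).2
  choose! n hdir hn using hnormal
  refine ⟨n, hKcomp, hKconv, hL, hL0, hLK, hn, fun z hz w hw hzw t => ?_⟩
  have hw' : w ∈ (Δ z).direction := by
    rwa [hdir z hz, Submodule.mem_orthogonal_singleton_iff_inner_right]
  refine disjoint_left.1 (hAF z hz w ⟨hw', hw⟩) ?_
  rw [add_comm, ← AffineMap.lineMap_apply_module']
  exact AffineMap.lineMap_mem_affineSpan_pair t z w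

lemma zero_mem_interior_of_eq_neg {E : Type*} [AddCommGroup E] [Module ℝ E] [TopologicalSpace E]
    [IsTopologicalAddGroup E] [ContinuousConstSMul ℝ E] {s : Set E} (hs : Convex ℝ s)
    (hne : (interior s).Nonempty) (hsymm : s = -s) : (0 : E) ∈ interior s := by
  obtain ⟨c, hc⟩ := hne
  have hneg : -c ∈ interior s := by
    rw [hsymm]
    exact ((Homeomorph.neg E).preimage_interior s).subset (by simpa using hc)
  simpa using hs.interior.midpoint_mem hc hneg

end AlmostFreePair

theorem statement7_general (K L : Set E3) (hKcomp : IsCompact K) (hKconv : Convex ℝ K)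
    (hLcomp : IsCompact L) (hLstrict : StrictConvex ℝ L) (hL0 : (0 : E3) ∈ interior L)
    (hLK : L ⊆ interior K) (Δ : E3 → AffineSubspace ℝ E3)
    (hΔ : ∀ z ∈ frontier K, IsPlane (Δ z) ∧ graze L z ⊆ (Δ z : Set E3))
    (hAF : AlmostFree K L Δ) :
    ∀ x ∈ frontier K, ∃ f : EuclideanSpace ℝ (Fin 2) →ᵃ[ℝ] E3,
      Function.Injective f ∧
      graze L x = f '' sphere (0 : EuclideanSpace ℝ (Fin 2)) 1 := by
  intro x hx
  have hL : IsStrictBody L := ⟨hLcomp, hLstrict, ⟨0, hL0⟩⟩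
  obtain ⟨n, S⟩ := hAF.exists_almostFreePair hKcomp hKconv hL hL0 hLK hΔ
  obtain ⟨κ, hκ⟩ := S.exists_strictlySeparates hx
  rw [graze_eq_contactSet hLcomp hLstrict.convex ⟨0, hL0⟩]
  exact (S.isCircleImage_contactSet hx).exists_affineMap (by simp) fun v =>
    hL.eq_zero_of_inner_contactSet_eq_zero hκ (S.contactSet_nonempty hx)

theorem statement7
    (K L : Set E3)
    (hKcomp : IsCompact K) (hKconv : Convex ℝ K) (hKint : (interior K).Nonempty)
    (hKsym : K = -K)
    (hLcomp : IsCompact L) (hLconv : Convex ℝ L) (hLint : (interior L).Nonempty)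
    (hLsym : L = -L) (hLstrict : StrictConvex ℝ L)
    (hLK : L ⊆ interior K)
    (Δ : E3 → AffineSubspace ℝ E3)
    (hΔ : ∀ z ∈ frontier K, IsPlane (Δ z) ∧ graze L z ⊆ (Δ z : Set E3))
    (hAF : AlmostFree K L Δ) :
    ∀ x ∈ frontier K, ∃ f : EuclideanSpace ℝ (Fin 2) →ᵃ[ℝ] E3,
      Function.Injective f ∧
      graze L x = f '' sphere (0 : EuclideanSpace ℝ (Fin 2)) 1 :=
  statement7_general K L hKcomp hKconv hLcomp hLstrict
    (zero_mem_interior_of_eq_neg hLconv hLint hLsym) hLK Δ hΔ hAF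

end
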